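/- arXiv:2007.14944 — 3 statements merged into one kernel-verified Lean document; each statement's English description precedes it below -/
import Mathlib

section
/- For every ε > 0 there exists Δ₀ such that: if G is a finite simple graph with maximum degree Δ(G) ≥ Δ₀, then the list chromatic index of G satisfies χ'_ℓ(G) ≤ (1+ε)·Δ(G). -/
/-- An `L`-edge-colouring of a simple graph `G`. -/
def IsLEdgeColouring {V : Type} (G : SimpleGraph V) (L : Sym2 V → Finset ℕ)
    (γ : Sym2 V → ℕ) : Prop :=
  (∀ e ∈ G.edgeSet, γ e ∈ L e) ∧
  ∀ e ∈ G.edgeSet, ∀ f ∈ G.edgeSet, e ≠ f → (∃ v, v ∈ e ∧ v ∈ f) → γ e ≠ γ f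

/-- The chromatic index `χ'(G)`: the least `k` such that `G` has a proper edge
colouring using `k` colours. -/
noncomputable def chromIndex {V : Type} (G : SimpleGraph V) : ℕ :=
  sInf {k : ℕ | ∃ γ : Sym2 V → ℕ, (∀ e ∈ G.edgeSet, γ e < k) ∧
    ∀ e ∈ G.edgeSet, ∀ f ∈ G.edgeSet, e ≠ f → (∃ v, v ∈ e ∧ v ∈ f) → γ e ≠ γ f}

/-- The list chromatic index `χ'_ℓ(G)`: the least `k` such that `G` has an
`L`-edge-colouring whenever all lists have size at least `k`. -/
noncomputable def listChromIndex {V : Type} (G : SimpleGraph V) : ℕ :=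
  sInf {k : ℕ | ∀ L : Sym2 V → Finset ℕ,
    (∀ e ∈ G.edgeSet, k ≤ (L e).card) → ∃ γ, IsLEdgeColouring G L γ}



namespace KahnProof
open Finset
open scoped Classical

section Prob
variable {ι α : Type} [Fintype ι] [Fintype α]

/-- expectation over a finite product space -/
noncomputable def Ex (w : ι → α → ℝ) (f : (ι → α) → ℝ) : ℝ :=
  ∑ ω : ι → α, (∏ i, w i (ω i)) * f ω

/-- weights form probability distributions -/
structure IsPr (w : ι → α → ℝ) : Prop where
  nonneg : ∀ i a, 0 ≤ w i a
  sum_one : ∀ i, ∑ a, w i a = 1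

variable {w : ι → α → ℝ}

theorem Ex_prod (w : ι → α → ℝ) (g : ι → α → ℝ) :
    Ex w (fun ω => ∏ i, g i (ω i)) = ∏ i, ∑ a, w i a * g i a := by
  unfold Ex
  simp_rw [← Finset.prod_mul_distrib]
  rw [Finset.prod_univ_sum]
  simp

theorem Ex_prod_mem (hw : IsPr w) (S : Finset ι) (g : ι → α → ℝ) :
    Ex w (fun ω => ∏ i ∈ S, g i (ω i)) = ∏ i ∈ S, ∑ a, w i a * g i a := by
  have h := Ex_prod w (fun i a => if i ∈ S then g i a else 1)
  simp only [Finset.prod_ite_mem, Finset.univ_inter] at h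
  rw [h, ← Finset.univ_inter S, ← Finset.prod_ite_mem]
  refine Finset.prod_congr rfl fun i _ => ?_
  by_cases hi : i ∈ S <;> simp [hi, hw.sum_one]

theorem Ex_one (hw : IsPr w) : Ex w (fun _ => 1) = 1 := by
  have := Ex_prod w (fun _ _ => 1)
  simpa [hw.sum_one] using this

theorem Ex_mono (hw : IsPr w) {f g : (ι → α) → ℝ} (h : ∀ ω, f ω ≤ g ω) : Ex w f ≤ Ex w g :=
  Finset.sum_le_sum fun ω _ => mul_le_mul_of_nonneg_left (h ω)
    (Finset.prod_nonneg fun i _ => hw.nonneg i _)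

theorem Ex_smul (c : ℝ) (f : (ι → α) → ℝ) : Ex w (fun ω => c * f ω) = c * Ex w f := by
  unfold Ex
  rw [Finset.mul_sum]
  exact Finset.sum_congr rfl fun ω _ => by ring

theorem Ex_const (hw : IsPr w) (c : ℝ) : Ex w (fun _ => c) = c := by
  have := Ex_smul (w := w) c (fun _ => 1)
  simpa [Ex_one hw] using this

theorem Ex_add (f g : (ι → α) → ℝ) : Ex w (fun ω => f ω + g ω) = Ex w f + Ex w g := by
  unfold Ex
  rw [← Finset.sum_add_distrib]
  exact Finset.sum_congr rfl fun ω _ => by ring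

theorem Ex_sum {X : Type*} (s : Finset X) (f : X → (ι → α) → ℝ) :
    Ex w (fun ω => ∑ x ∈ s, f x ω) = ∑ x ∈ s, Ex w (f x) := by
  unfold Ex
  simp_rw [Finset.mul_sum]
  exact Finset.sum_comm

theorem Ex_nonneg (hw : IsPr w) {f : (ι → α) → ℝ} (h : ∀ ω, 0 ≤ f ω) : 0 ≤ Ex w f :=
  Finset.sum_nonneg fun ω _ => mul_nonneg (Finset.prod_nonneg fun i _ => hw.nonneg i _) (h ω)

/-- resampling one coordinate -/
theorem Ex_resample (hw : IsPr w) (i : ι) (f : (ι → α) → ℝ) :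
    Ex w f = Ex w (fun ω => ∑ a, w i a * f (Function.update ω i a)) := by
  unfold Ex
  have key : ∀ (ω : ι → α) (a : α), (∏ j, w j (ω j)) * w i a =
      (∏ j, w j (Function.update ω i a j)) * w i (ω i) := by
    intro ω a
    rw [← Finset.mul_prod_erase univ _ (mem_univ i), ← Finset.mul_prod_erase univ
      (fun j => w j (Function.update ω i a j)) (mem_univ i)]
    have : ∏ j ∈ univ.erase i, w j (Function.update ω i a j) = ∏ j ∈ univ.erase i, w j (ω j) := by
      refine Finset.prod_congr rfl fun j hj => ?_
      rw [Function.update_of_ne (Finset.ne_of_mem_erase hj)]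
    rw [this]
    simp
    ring
  let σ : (ι → α) × α → (ι → α) × α := fun x => (Function.update x.1 i x.2, x.1 i)
  have hσ : Function.Involutive σ := by
    rintro ⟨ω, a⟩
    simp [σ]
  have h1 : ∑ x : (ι → α) × α, (∏ j, w j (x.1 j)) * w i x.2 * f x.1
      = ∑ ω : ι → α, (∏ j, w j (ω j)) * f ω := by
    rw [Fintype.sum_prod_type]
    refine Finset.sum_congr rfl fun ω _ => ?_
    have : ∀ a, (∏ j, w j (ω j)) * w i a * f ω = ((∏ j, w j (ω j)) * f ω) * w i a :=
      fun a => by ring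
    simp_rw [this]
    rw [← Finset.mul_sum, hw.sum_one, mul_one]
  rw [← h1, ← Equiv.sum_comp (hσ.toPerm)]
  rw [Fintype.sum_prod_type]
  refine Finset.sum_congr rfl fun ω _ => ?_
  rw [Finset.mul_sum]
  refine Finset.sum_congr rfl fun a _ => ?_
  change (∏ j, w j (Function.update ω i a j)) * w i (ω i) * f (Function.update ω i a) = _
  rw [← key]
  ring

/-- independence -/
theorem Ex_indep (hw : IsPr w) (S : Set ι) (f g : (ι → α) → ℝ)
    (hf : DependsOn f S) (hg : DependsOn g Sᶜ) :
    Ex w (fun ω => f ω * g ω) = Ex w f * Ex w g := by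
  let σ : (ι → α) × (ι → α) → (ι → α) × (ι → α) :=
    fun x => (S.piecewise x.1 x.2, S.piecewise x.2 x.1)
  have hσ : Function.Involutive σ := by
    rintro ⟨ω, η⟩
    simp only [σ, Prod.mk.injEq]
    constructor <;> (funext i; by_cases h : i ∈ S <;> simp [Set.piecewise, h])
  have h1 : Ex w (fun ω => f ω * g ω) = ∑ x : (ι → α) × (ι → α),
      ((∏ j, w j (x.1 j)) * (∏ j, w j (x.2 j))) * (f x.1 * g x.1) := by
    rw [Fintype.sum_prod_type]
    refine Finset.sum_congr rfl fun ω _ => ?_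
    have h2 := Ex_one hw
    unfold Ex at h2
    calc _ = ((∏ j, w j (ω j)) * (f ω * g ω)) * ∑ η : ι → α, (∏ j, w j (η j)) * 1 := by
            rw [h2, mul_one]
      _ = _ := by
            rw [Finset.mul_sum]
            exact Finset.sum_congr rfl fun η _ => by ring
  rw [h1, ← Equiv.sum_comp (hσ.toPerm), Fintype.sum_prod_type]
  unfold Ex
  rw [Finset.sum_mul_sum]
  refine Finset.sum_congr rfl fun ω _ => Finset.sum_congr rfl fun η _ => ?_
  change ((∏ j, w j (S.piecewise ω η j)) * (∏ j, w j (S.piecewise η ω j))) *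
    (f (S.piecewise ω η) * g (S.piecewise ω η)) = _
  have e1 : f (S.piecewise ω η) = f ω := hf fun i hi => by simp [Set.piecewise, hi]
  have e2 : g (S.piecewise ω η) = g η := hg fun i hi => by
    have : i ∉ S := hi
    simp [Set.piecewise, this]
  have e3 : (∏ j, w j (S.piecewise ω η j)) * (∏ j, w j (S.piecewise η ω j)) =
      (∏ j, w j (ω j)) * (∏ j, w j (η j)) := by
    rw [← Finset.prod_mul_distrib, ← Finset.prod_mul_distrib]
    refine Finset.prod_congr rfl fun j _ => ?_
    by_cases h : j ∈ S <;> simp [Set.piecewise, h, mul_comm]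
  rw [e1, e2, e3]
  ring

/-- probability -/
noncomputable def Pr (w : ι → α → ℝ) (A : (ι → α) → Prop) : ℝ :=
  Ex w (fun ω => if A ω then 1 else 0)

theorem Pr_nonneg (hw : IsPr w) (A : (ι → α) → Prop) : 0 ≤ Pr w A :=
  Ex_nonneg hw fun ω => by split_ifs <;> norm_num

theorem Pr_mono (hw : IsPr w) {A B : (ι → α) → Prop} (h : ∀ ω, A ω → B ω) : Pr w A ≤ Pr w B :=
  Ex_mono hw fun ω => by
    by_cases h1 : A ω
    · simp [h1, h ω h1]
    · simp only [h1, if_false]; split_ifs <;> norm_num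

theorem Pr_or_le (hw : IsPr w) (A B : (ι → α) → Prop) :
    Pr w (fun ω => A ω ∨ B ω) ≤ Pr w A + Pr w B := by
  unfold Pr
  rw [← Ex_add]
  refine Ex_mono hw fun ω => ?_
  by_cases h1 : A ω <;> by_cases h2 : B ω <;> simp [h1, h2]

theorem Pr_exists_le (hw : IsPr w) {X : Type*} (s : Finset X) (A : X → (ι → α) → Prop) :
    Pr w (fun ω => ∃ x ∈ s, A x ω) ≤ ∑ x ∈ s, Pr w (A x) := by
  unfold Pr
  rw [← Ex_sum]
  refine Ex_mono hw fun ω => ?_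
  by_cases h : ∃ x ∈ s, A x ω
  · rw [if_pos h]
    obtain ⟨x, hx, hA⟩ := h
    calc (1:ℝ) = if A x ω then 1 else 0 := by simp [hA]
      _ ≤ _ := Finset.single_le_sum (f := fun x => if A x ω then (1:ℝ) else 0)
        (fun y _ => by split_ifs <;> norm_num) hx
  · rw [if_neg h]
    exact Finset.sum_nonneg fun y _ => by split_ifs <;> norm_num

/-- exponential Markov inequality -/
theorem Pr_markov (hw : IsPr w) (A : (ι → α) → Prop) (g : (ι → α) → ℝ) (t : ℝ)
    (h : ∀ ω, A ω → t ≤ g ω) : Pr w A ≤ Real.exp (-t) * Ex w (fun ω => Real.exp (g ω)) := by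
  rw [← Ex_smul]
  refine Ex_mono hw fun ω => ?_
  rw [← Real.exp_add]
  by_cases h1 : A ω
  · simp only [h1, if_true]
    exact Real.one_le_exp (by linarith [h ω h1])
  · simp only [h1, if_false]
    positivity

/-- Lovász local lemma, symmetric, product-space version -/
theorem LLL (hw : IsPr w) {J : Type} [Fintype J] (A : J → (ι → α) → Prop) (S : J → Set ι)
    (hdep : ∀ j, DependsOn (A j) (S j)) (p : ℝ) (D : ℕ) (hp : ∀ j, Pr w (A j) ≤ p)
    (hD : ∀ j, (univ.filter fun k => ¬ Disjoint (S k) (S j)).card ≤ D)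
    (hpD : 4 * p * D ≤ 1) (hp4 : 4 * p ≤ 1) (hp0 : 0 ≤ p) :
    ∃ ω, (∀ i, w i (ω i) ≠ 0) ∧ ∀ j, ¬ A j ω := by
  let B : Finset J → (ι → α) → Prop := fun T ω => ∀ k ∈ T, ¬ A k ω
  have Bdep : ∀ T j, (∀ k ∈ T, Disjoint (S k) (S j)) → DependsOn (B T) (S j)ᶜ := by
    intro T j hT x y hxy
    simp only [B, eq_iff_iff]
    refine forall₂_congr fun k hk => ?_
    rw [hdep k (x := x) (y := y)]
    intro i hi
    exact hxy i (Set.disjoint_left.1 (hT k hk) hi)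
  have main : ∀ (n : ℕ) (T : Finset J), T.card = n → ∀ j, j ∉ T →
      Pr w (fun ω => A j ω ∧ B T ω) ≤ 2 * p * Pr w (B T) := by
    intro n
    induction n using Nat.strong_induction_on with
    | _ n ih =>
    intro T hTn j hj
    let T1 := T.filter fun k => ¬ Disjoint (S k) (S j)
    let T2 := T.filter fun k => Disjoint (S k) (S j)
    have ha : Pr w (fun ω => A j ω ∧ B T ω) ≤ p * Pr w (B T2) := by
      calc _ ≤ Pr w (fun ω => A j ω ∧ B T2 ω) := by
              refine Pr_mono hw fun ω h => ⟨h.1, fun k hk => h.2 k (Finset.mem_of_mem_filter k hk)⟩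
        _ = Pr w (A j) * Pr w (B T2) := by
              unfold Pr
              rw [← Ex_indep hw (S j)]
              · congr 1
                funext ω
                by_cases h1 : A j ω <;> by_cases h2 : B T2 ω <;> simp [h1, h2]
              · intro x y hxy
                simp only [hdep j hxy]
              · intro x y hxy
                have h' : B T2 x ↔ B T2 y := by
                  rw [Bdep T2 j (fun k hk => (Finset.mem_filter.1 hk).2) hxy]
                beta_reduce
                by_cases h : B T2 y
                · rw [if_pos h, if_pos (h'.2 h)]
                · rw [if_neg h, if_neg fun h2 => h (h'.1 h2)]
        _ ≤ _ := mul_le_mul_of_nonneg_right (hp j) (Pr_nonneg hw _)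
    have hb : Pr w (B T2) ≤ 2 * Pr w (B T) := by
      by_cases hT1 : T1 = ∅
      · have : T2 = T := by
          refine Finset.filter_true_of_mem fun k hk => ?_
          by_contra hc
          have : k ∈ T1 := Finset.mem_filter.2 ⟨hk, hc⟩
          rw [hT1] at this
          simp at this
        rw [this]
        linarith [Pr_nonneg hw (B T)]
      · have hlt : T2.card < n := by
          rw [← hTn]
          refine Finset.card_lt_card ?_
          refine Finset.filter_ssubset.2 ?_
          obtain ⟨k, hk⟩ := Finset.nonempty_iff_ne_empty.2 hT1
          exact ⟨k, (Finset.mem_filter.1 hk).1, (Finset.mem_filter.1 hk).2⟩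
        have h1 : Pr w (B T2) ≤ Pr w (B T) + ∑ k ∈ T1, Pr w (fun ω => A k ω ∧ B T2 ω) := by
          calc Pr w (B T2) ≤ Pr w (fun ω => B T ω ∨ ∃ k ∈ T1, (A k ω ∧ B T2 ω)) := by
                refine Pr_mono hw fun ω h => ?_
                by_cases hc : B T ω
                · exact Or.inl hc
                · right
                  simp only [B, not_forall, not_not] at hc
                  obtain ⟨k, hk, hA⟩ := hc
                  refine ⟨k, Finset.mem_filter.2 ⟨hk, fun hd => ?_⟩, hA, h⟩
                  exact h k (Finset.mem_filter.2 ⟨hk, hd⟩) hA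
            _ ≤ _ := (Pr_or_le hw _ _).trans (add_le_add le_rfl (Pr_exists_le hw _ _))
        have h2 : ∑ k ∈ T1, Pr w (fun ω => A k ω ∧ B T2 ω) ≤ T1.card * (2 * p * Pr w (B T2)) := by
          rw [← nsmul_eq_mul]
          refine Finset.sum_le_card_nsmul _ _ _ fun k hk => ih _ hlt T2 rfl k fun hk2 => ?_
          exact (Finset.mem_filter.1 hk).2 (Finset.mem_filter.1 hk2).2
        have h3 : (T1.card : ℝ) ≤ D := by
          refine Nat.cast_le.2 (le_trans (Finset.card_le_card ?_) (hD j))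
          intro k hk
          exact Finset.mem_filter.2 ⟨mem_univ _, (Finset.mem_filter.1 hk).2⟩
        have h4 := Pr_nonneg hw (B T2)
        have h5 : (T1.card : ℝ) * (2 * p * Pr w (B T2)) ≤ D * (2 * p * Pr w (B T2)) :=
          mul_le_mul_of_nonneg_right h3 (by positivity)
        have h6 : (D : ℝ) * (2 * p * Pr w (B T2)) ≤ 1 / 2 * Pr w (B T2) := by
          calc _ = (4 * p * D) * (1 / 2 * Pr w (B T2)) := by ring
            _ ≤ 1 * (1 / 2 * Pr w (B T2)) := mul_le_mul_of_nonneg_right hpD (by positivity)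
            _ = _ := one_mul _
        linarith
    nlinarith
  have pos : ∀ T : Finset J, 0 < Pr w (B T) := by
    intro T
    induction T using Finset.induction_on with
    | empty =>
      have : Pr w (B ∅) = 1 := by
        unfold Pr
        simp only [B]
        simpa using Ex_one hw
      rw [this]; norm_num
    | insert j T hj ih =>
      have h1 := main _ T rfl j hj
      have h2 : Pr w (B T) ≤ Pr w (B (insert j T)) + Pr w (fun ω => A j ω ∧ B T ω) := by
        refine le_trans (Pr_mono hw fun ω h => ?_) (Pr_or_le hw _ _)
        by_cases hc : A j ω
        · exact Or.inr ⟨hc, h⟩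
        · left
          intro k hk
          rcases Finset.mem_insert.1 hk with rfl | hk
          · exact hc
          · exact h k hk
      nlinarith
  have := pos univ
  by_contra hc
  push Not at hc
  have h0 : Pr w (B univ) = 0 := by
    unfold Pr Ex
    refine Finset.sum_eq_zero fun ω _ => ?_
    by_cases hz : ∀ i, w i (ω i) ≠ 0
    · obtain ⟨j, hj⟩ := hc ω hz
      have : ¬ B univ ω := fun h => h j (mem_univ j) hj
      simp [this]
    · push Not at hz
      obtain ⟨i, hi⟩ := hz
      rw [Finset.prod_eq_zero (mem_univ i) hi, zero_mul]
  linarith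

end Prob

section Bern
set_option linter.unusedSectionVars false
variable {ι : Type} [Fintype ι]

/-- Bernoulli weights -/
noncomputable def bw (pr : ι → ℝ) (i : ι) (b : Bool) : ℝ := if b then pr i else 1 - pr i

theorem bw_isPr {pr : ι → ℝ} (h : ∀ i, 0 ≤ pr i ∧ pr i ≤ 1) : IsPr (bw pr) where
  nonneg := fun i a => by
    unfold bw
    split_ifs
    · exact (h i).1
    · linarith [(h i).2]
  sum_one := fun i => by simp [bw]

theorem bern_mgf (p a b c l : ℝ) (hp0 : 0 ≤ p) (hp1 : p ≤ 1) (hD : |a - b| ≤ c) (hl : |l| * c ≤ 1) :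
    p * Real.exp (l * a) + (1 - p) * Real.exp (l * b) ≤
      Real.exp (l ^ 2 * (c ^ 2 * p)) * Real.exp (l * (p * a + (1 - p) * b)) := by
  have hc : 0 ≤ c := (abs_nonneg _).trans hD
  have hld : |l * (a - b)| ≤ 1 := by
    rw [abs_mul]
    exact (mul_le_mul_of_nonneg_left hD (abs_nonneg _)).trans hl
  set m := l * (p * a + (1 - p) * b) with hm
  set x := (1 - p) * (l * (a - b)) with hx
  set y := - p * (l * (a - b)) with hy
  have e1 : l * a = m + x := by rw [hm, hx]; ring
  have e2 : l * b = m + y := by rw [hm, hy]; ring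
  have hx1 : |x| ≤ 1 := by
    rw [hx, abs_mul, abs_of_nonneg (by linarith : 0 ≤ 1 - p)]
    nlinarith [abs_nonneg (l * (a - b))]
  have hy1 : |y| ≤ 1 := by
    rw [hy, abs_mul, abs_neg, abs_of_nonneg hp0]
    nlinarith [abs_nonneg (l * (a - b))]
  have k1 := (abs_le.1 (Real.abs_exp_sub_one_sub_id_le hx1)).2
  have k2 := (abs_le.1 (Real.abs_exp_sub_one_sub_id_le hy1)).2
  have k3 := Real.add_one_le_exp (l ^ 2 * (c ^ 2 * p))
  have sqD : (a - b) ^ 2 ≤ c ^ 2 := sq_le_sq' (by linarith [(abs_le.1 hD).1]) (abs_le.1 hD).2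
  have k4 : p * Real.exp x + (1 - p) * Real.exp y ≤ Real.exp (l ^ 2 * (c ^ 2 * p)) := by
    have h1 : p * Real.exp x ≤ p * (1 + x + x ^ 2) := mul_le_mul_of_nonneg_left (by linarith) hp0
    have h2 : (1 - p) * Real.exp y ≤ (1 - p) * (1 + y + y ^ 2) :=
      mul_le_mul_of_nonneg_left (by linarith) (by linarith)
    have h3 : p * (1 + x + x ^ 2) + (1 - p) * (1 + y + y ^ 2) =
        1 + p * (1 - p) * (l ^ 2 * (a - b) ^ 2) := by rw [hx, hy]; ring
    have h4 : p * (1 - p) * (l ^ 2 * (a - b) ^ 2) ≤ p * (l ^ 2 * c ^ 2) := by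
      have h5 : l ^ 2 * (a - b) ^ 2 ≤ l ^ 2 * c ^ 2 := mul_le_mul_of_nonneg_left sqD (sq_nonneg _)
      have h6 : p * (1 - p) ≤ p := by nlinarith
      have h7 : 0 ≤ l ^ 2 * (a - b) ^ 2 := by positivity
      calc _ ≤ p * (l ^ 2 * (a - b) ^ 2) := mul_le_mul_of_nonneg_right h6 h7
        _ ≤ _ := mul_le_mul_of_nonneg_left h5 hp0
    nlinarith
  rw [e1, e2, Real.exp_add, Real.exp_add]
  calc _ = (p * Real.exp x + (1 - p) * Real.exp y) * Real.exp m := by ring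
    _ ≤ _ := mul_le_mul_of_nonneg_right k4 (Real.exp_pos _).le

theorem aks {pr : ι → ℝ} (h : ∀ i, 0 ≤ pr i ∧ pr i ≤ 1) (l : ℝ) (c : ι → ℝ)
    (hc : ∀ i, |l| * c i ≤ 1) (s : Finset ι) :
    ∀ f : (ι → Bool) → ℝ, DependsOn f (s : Set ι) →
      (∀ i ω, |f (Function.update ω i true) - f (Function.update ω i false)| ≤ c i) →
      Ex (bw pr) (fun ω => Real.exp (l * f ω)) ≤
        Real.exp (l ^ 2 * ∑ i ∈ s, c i ^ 2 * pr i) * Real.exp (l * Ex (bw pr) f) := by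
  have hw := bw_isPr h
  induction s using Finset.induction_on with
  | empty =>
    intro f hf _
    have : f = fun _ => f (fun _ => true) := by
      funext ω
      exact hf (by simp)
    rw [this]
    simp [Ex_const hw]
  | insert i s hi ih =>
    intro f hf hb
    let g : (ι → Bool) → ℝ := fun ω => pr i * f (Function.update ω i true)
      + (1 - pr i) * f (Function.update ω i false)
    have hEg : Ex (bw pr) f = Ex (bw pr) g := by
      rw [Ex_resample hw i]
      congr 1
      funext ω
      simp [bw, g]
    have hg : DependsOn g (s : Set ι) := by
      intro x y hxy
      have : ∀ b, f (Function.update x i b) = f (Function.update y i b) := by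
        intro b
        refine hf fun j hj => ?_
        by_cases hji : j = i
        · subst hji; simp
        · rw [Function.update_of_ne hji, Function.update_of_ne hji]
          refine hxy j ?_
          simp only [coe_insert, Set.mem_insert_iff, hji, false_or] at hj
          exact hj
      simp only [g, this]
    have hbg : ∀ j ω, |g (Function.update ω j true) - g (Function.update ω j false)| ≤ c j := by
      intro j ω
      by_cases hji : j = i
      · subst hji
        simp only [g, Function.update_idem, sub_self, abs_zero]
        exact (abs_nonneg _).trans (hb j ω)
      · simp only [g]
        have hcm : ∀ a b : Bool, Function.update (Function.update ω j a) i b =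
            Function.update (Function.update ω i b) j a :=
          fun a b => Function.update_comm hji _ _ _
        rw [hcm, hcm, hcm, hcm]
        have h1 := abs_le.1 (hb j (Function.update ω i true))
        have h2 := abs_le.1 (hb j (Function.update ω i false))
        have h3 := (h i).1
        have h4 : 0 ≤ 1 - pr i := by linarith [(h i).2]
        rw [abs_le]
        constructor <;> nlinarith [mul_le_mul_of_nonneg_left h1.1 h3, mul_le_mul_of_nonneg_left h1.2 h3,
          mul_le_mul_of_nonneg_left h2.1 h4, mul_le_mul_of_nonneg_left h2.2 h4]
    have key := ih g hg hbg
    rw [hEg, Finset.sum_insert hi, mul_add, Real.exp_add, mul_assoc]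
    refine le_trans ?_ (mul_le_mul_of_nonneg_left key (Real.exp_pos _).le)
    rw [Ex_resample hw i, ← Ex_smul]
    refine Ex_mono hw fun ω => ?_
    simp only [Fintype.sum_bool, bw, if_true, Bool.false_eq_true, if_false]
    exact bern_mgf _ _ _ _ _ (h i).1 (h i).2 (hb i ω) (hc i)

/-- expectation of the product of coordinatewise functions on a finite set -/
theorem Ex_allfalse {pr : ι → ℝ} (S : Finset ι) :
    Ex (bw pr) (fun ω => if ∀ i ∈ S, ω i = false then (1:ℝ) else 0) = ∏ i ∈ S, (1 - pr i) := by
  have := Ex_prod (bw pr) (fun i b => if i ∈ S then (if b = false then 1 else 0) else 1)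
  have e : (fun ω : ι → Bool => ∏ i, (if i ∈ S then (if ω i = false then (1:ℝ) else 0) else 1)) =
      fun ω => if ∀ i ∈ S, ω i = false then (1:ℝ) else 0 := by
    funext ω
    rw [Finset.prod_ite_mem, Finset.univ_inter, Finset.prod_ite_zero]
    simp
  rw [e] at this
  rw [this]
  rw [← Finset.univ_inter S, ← Finset.prod_ite_mem]
  refine Finset.prod_congr rfl fun i _ => ?_
  by_cases hi : i ∈ S <;> simp [bw, hi]

theorem conc {pr : ι → ℝ} (h : ∀ i, 0 ≤ pr i ∧ pr i ≤ 1) {X : Type} (s : Finset X)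
    (S : X → Finset ι) (h2 : ∀ i, (s.filter fun x => i ∈ S x).card ≤ 2) (M : ℝ)
    (hM : ∑ x ∈ s, ∑ i ∈ S x, pr i ≤ M) (l : ℝ) (hl : |l| ≤ 1 / 2) :
    Ex (bw pr) (fun ω => Real.exp (l * ((s.filter fun x => ∀ i ∈ S x, ω i = false).card : ℝ))) ≤
      Real.exp (2 * l ^ 2 * M + l * ∑ x ∈ s, ∏ i ∈ S x, (1 - pr i)) := by
  let f : (ι → Bool) → ℝ := fun ω => ∑ x ∈ s, if ∀ i ∈ S x, ω i = false then (1:ℝ) else 0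
  have hf : ∀ ω, f ω = ((s.filter fun x => ∀ i ∈ S x, ω i = false).card : ℝ) := by
    intro ω; simp [f]
  have hE : Ex (bw pr) f = ∑ x ∈ s, ∏ i ∈ S x, (1 - pr i) := by
    simp only [f]
    rw [Ex_sum]
    exact Finset.sum_congr rfl fun x _ => Ex_allfalse (S x)
  let c : ι → ℝ := fun i => ((s.filter fun x => i ∈ S x).card : ℝ)
  have hc2 : ∀ i, c i ≤ 2 := fun i => by simp only [c]; exact_mod_cast h2 i
  have hc0 : ∀ i, 0 ≤ c i := fun i => by simp only [c]; positivity
  have := aks h l c (fun i => by nlinarith [hc2 i, hc0 i, abs_nonneg l]) univ f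
    (fun x y hxy => by
      have : x = y := funext fun i => hxy i (by simp)
      rw [this])
    (fun i ω => by
      simp only [f]
      rw [← Finset.sum_sub_distrib]
      refine (Finset.abs_sum_le_sum_abs _ _).trans ?_
      simp only [c]
      rw [Finset.card_filter, Nat.cast_sum]
      refine Finset.sum_le_sum fun x _ => ?_
      by_cases hi : i ∈ S x
      · simp only [hi, if_true]
        push_cast
        rw [abs_le]
        constructor <;> split_ifs <;> norm_num
      · simp only [hi, if_false]
        have : (∀ j ∈ S x, Function.update ω i true j = false) ↔
            (∀ j ∈ S x, Function.update ω i false j = false) := by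
          refine forall₂_congr fun j hj => ?_
          have : j ≠ i := fun hji => hi (hji ▸ hj)
          rw [Function.update_of_ne this, Function.update_of_ne this]
        simp [this])
  simp_rw [hf] at this
  rw [hE] at this
  refine this.trans ?_
  rw [← Real.exp_add]
  refine Real.exp_le_exp.2 (add_le_add ?_ le_rfl)
  have hV : ∑ i, c i ^ 2 * pr i ≤ 2 * M := by
    calc ∑ i, c i ^ 2 * pr i ≤ ∑ i, 2 * (c i * pr i) := by
          refine Finset.sum_le_sum fun i _ => ?_
          have h3 := mul_nonneg (hc0 i) (h i).1
          nlinarith [hc2 i]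
      _ = 2 * ∑ i, c i * pr i := by rw [Finset.mul_sum]
      _ = 2 * ∑ x ∈ s, ∑ i ∈ S x, pr i := by
          congr 1
          have : ∀ x ∈ s, ∑ i ∈ S x, pr i = ∑ i, if i ∈ S x then pr i else 0 := by
            intro x _
            simp
          rw [Finset.sum_congr rfl this, Finset.sum_comm]
          refine Finset.sum_congr rfl fun i _ => ?_
          rw [← Finset.sum_filter]
          simp [c]
      _ ≤ _ := by linarith
  nlinarith [sq_nonneg l]

/-- independence of a family of functions on disjoint blocks -/
theorem Ex_blocks {α C : Type} [Fintype α] {w : ι → α → ℝ} (hw : IsPr w) (col : ι → C)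
    (g : C → (ι → α) → ℝ) (hg : ∀ c, DependsOn (g c) {i | col i = c}) (s : Finset C) :
    Ex w (fun ω => ∏ c ∈ s, g c ω) = ∏ c ∈ s, Ex w (g c) := by
  induction s using Finset.induction_on with
  | empty => simpa using Ex_one hw
  | insert c s hc ih =>
    rw [Finset.prod_insert hc, ← ih, ← Ex_indep hw {i | col i = c} _ _ (hg c)]
    · congr 1
      funext ω
      rw [Finset.prod_insert hc]
    · intro x y hxy
      refine Finset.prod_congr rfl fun c' hc' => hg c' fun i hi => hxy i ?_
      simp only [Set.mem_ofPred_eq] at hi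
      simp only [Set.mem_compl_iff, Set.mem_ofPred_eq, hi]
      rintro rfl
      exact hc hc'

end Bern

section Comb
set_option linter.unusedSectionVars false
variable {V C : Type} [Fintype V] [Fintype C]

/-- edges of `F` at `v` having `c` in their list -/
noncomputable def NN (F : Finset (Sym2 V)) (L : Sym2 V → Finset C) (v : V) (c : C) :
    Finset (Sym2 V) := F.filter fun e => v ∈ e ∧ c ∈ L e

/-- `F` is colourable from the lists `L` -/
def Col (F : Finset (Sym2 V)) (L : Sym2 V → Finset C) : Prop :=
  ∃ γ : Sym2 V → C, (∀ e ∈ F, γ e ∈ L e) ∧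
    ∀ e ∈ F, ∀ f ∈ F, e ≠ f → (∃ v, v ∈ e ∧ v ∈ f) → γ e ≠ γ f

theorem mem_NN {F : Finset (Sym2 V)} {L : Sym2 V → Finset C} {v : V} {c : C} {e : Sym2 V} :
    e ∈ NN F L v c ↔ e ∈ F ∧ v ∈ e ∧ c ∈ L e := by simp [NN]

theorem Col.mono {F : Finset (Sym2 V)} {L L' : Sym2 V → Finset C} (h : ∀ e ∈ F, L' e ⊆ L e)
    (hc : Col F L') : Col F L := by
  obtain ⟨γ, h1, h2⟩ := hc
  exact ⟨γ, fun e he => h e he (h1 e he), h2⟩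

/-- endpoints -/
noncomputable def ends (e : Sym2 V) : Finset V := univ.filter fun v => v ∈ e

theorem mem_ends {e : Sym2 V} {v : V} : v ∈ ends e ↔ v ∈ e := by simp [ends]

theorem card_ends_le (e : Sym2 V) : (ends e).card ≤ 2 := by
  induction e using Sym2.ind with
  | _ a b =>
    have : ends s(a, b) ⊆ {a, b} := by
      intro v hv
      simpa [mem_ends] using hv
    exact (Finset.card_le_card this).trans (Finset.card_le_two)

theorem card_ends (e : Sym2 V) (h : ¬ e.IsDiag) : (ends e).card = 2 := by
  induction e using Sym2.ind with
  | _ a b =>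
    have : ends s(a, b) = {a, b} := by
      ext v
      simp [mem_ends]
    rw [this]
    exact Finset.card_pair (by simpa using h)

theorem finish (F : Finset (Sym2 V)) (L : Sym2 V → Finset C) [Nonempty C] (l m : ℕ) (hl : 2 ≤ l)
    (hm : 32 * m ≤ l) (hL : ∀ e ∈ F, (L e).card = l) (hN : ∀ v c, (NN F L v c).card ≤ m) :
    Col F L := by
  let L' : Sym2 V → Finset C := fun e => if e ∈ F then L e else univ
  have hL' : ∀ e, (L' e).Nonempty := by
    intro e
    by_cases he : e ∈ F
    · simp only [L', he, if_true]
      rw [← Finset.card_pos, hL e he]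
      omega
    · simp only [L', he, if_false]
      exact Finset.univ_nonempty
  let w : Sym2 V → C → ℝ := fun e c => if c ∈ L' e then 1 / ((L' e).card : ℝ) else 0
  have hw : IsPr w := by
    constructor
    · intro e c
      simp only [w]
      split_ifs <;> positivity
    · intro e
      simp only [w]
      rw [← Finset.sum_filter]
      have hfl : (univ.filter fun a => a ∈ L' e) = L' e := by ext; simp
      rw [hfl, sum_const, nsmul_eq_mul]
      have : (0:ℝ) < (L' e).card := by exact_mod_cast Finset.card_pos.2 (hL' e)
      field_simp
  let valid : Sym2 V × Sym2 V × C → Prop := fun j =>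
    j.1 ∈ F ∧ j.2.1 ∈ F ∧ j.1 ≠ j.2.1 ∧ (∃ v, v ∈ j.1 ∧ v ∈ j.2.1) ∧ j.2.2 ∈ L j.1 ∧ j.2.2 ∈ L j.2.1
  let S : Sym2 V × Sym2 V × C → Set (Sym2 V) := fun j => {x | valid j ∧ (x = j.1 ∨ x = j.2.1)}
  let A : Sym2 V × Sym2 V × C → (Sym2 V → C) → Prop := fun j ω =>
    valid j ∧ ω j.1 = j.2.2 ∧ ω j.2.1 = j.2.2
  have hlpos : (0:ℝ) < l := by exact_mod_cast (by omega : 0 < l)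
  have hA : ∀ j, Pr w (A j) ≤ 1 / (l:ℝ) ^ 2 := by
    intro j
    by_cases hj : valid j
    · have h1 := Ex_prod_mem hw {j.1, j.2.1} (fun _ a => if a = j.2.2 then 1 else 0)
      have hne := hj.2.2.1
      rw [Finset.prod_pair hne] at h1
      have h2 : Pr w (A j) = Ex w (fun ω => ∏ i ∈ {j.1, j.2.1}, if ω i = j.2.2 then (1:ℝ) else 0) := by
        unfold Pr
        congr 1
        funext ω
        rw [Finset.prod_pair hne]
        by_cases h3 : ω j.1 = j.2.2 <;> by_cases h4 : ω j.2.1 = j.2.2 <;> simp [A, hj, h3, h4]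
      rw [h2, h1]
      have h5 : ∀ e, e ∈ F → j.2.2 ∈ L e → (∑ a, w e a * if a = j.2.2 then (1:ℝ) else 0) = 1 / l := by
        intro e he hc
        simp [w, L', he, hc, hL e he]
      rw [h5 _ hj.1 hj.2.2.2.2.1, h5 _ hj.2.1 hj.2.2.2.2.2]
      apply le_of_eq
      field_simp
    · have : Pr w (A j) = 0 := by
        unfold Pr
        have : ∀ ω, ¬ A j ω := fun ω h => hj h.1
        simp only [this, if_false]
        exact Ex_const hw 0
      rw [this]
      positivity
  let T : Sym2 V → Finset (Sym2 V × Sym2 V × C) := fun x =>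
    ((L x).biUnion fun c => (ends x).biUnion fun u => (NN F L u c).image fun f => (x, f, c)) ∪
    ((L x).biUnion fun c => (ends x).biUnion fun u => (NN F L u c).image fun f => (f, x, c))
  have hT : ∀ x ∈ F, (T x).card ≤ 4 * l * m := by
    intro x hx
    have aux : ∀ g : C → Sym2 V → Sym2 V × Sym2 V × C, ((L x).biUnion fun c => (ends x).biUnion
        fun u => (NN F L u c).image fun f => g c f).card ≤ l * (2 * m) := by
      intro g
      rw [← hL x hx]
      refine Finset.card_biUnion_le_card_mul _ _ _ fun c _ => ?_
      refine (Finset.card_biUnion_le_card_mul _ _ m fun u _ => ?_).trans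
        (Nat.mul_le_mul_right _ (card_ends_le x))
      exact Finset.card_image_le.trans (hN u c)
    have a1 := aux fun c f => (x, f, c)
    have a2 := aux fun c f => (f, x, c)
    refine (Finset.card_union_le _ _).trans ?_
    nlinarith
  have hTm : ∀ x k, x ∈ S k → k ∈ T x := by
    rintro x ⟨e, f, c⟩ ⟨hv, hx⟩
    obtain ⟨he, hf, hne, ⟨v, hve, hvf⟩, hce, hcf⟩ := hv
    simp only at he hf hne hve hvf hce hcf hx
    rcases hx with rfl | rfl
    · refine Finset.mem_union_left _ ?_
      simp only [mem_biUnion, mem_image]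
      exact ⟨c, hce, v, mem_ends.2 hve, f, mem_NN.2 ⟨hf, hvf, hcf⟩, rfl⟩
    · refine Finset.mem_union_right _ ?_
      simp only [mem_biUnion, mem_image]
      exact ⟨c, hcf, v, mem_ends.2 hvf, e, mem_NN.2 ⟨he, hve, hce⟩, rfl⟩
  obtain ⟨ω, hω⟩ := LLL (ι := Sym2 V) (α := C) hw A S (by
      intro j x y hxy
      by_cases hj : valid j
      · have h1 := hxy j.1 ⟨hj, Or.inl rfl⟩
        have h2 := hxy j.2.1 ⟨hj, Or.inr rfl⟩
        simp only [A, h1, h2]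
      · simp only [A, hj, false_and]) (1 / (l:ℝ) ^ 2) (8 * l * m) hA (by
      intro j
      by_cases hj : valid j
      · refine (Finset.card_le_card (t := T j.1 ∪ T j.2.1) ?_).trans
          ((Finset.card_union_le _ _).trans ?_)
        · intro k hk
          have := (Finset.mem_filter.1 hk).2
          rw [Set.not_disjoint_iff] at this
          obtain ⟨x, hxk, hxj⟩ := this
          rcases hxj.2 with h | h
          · exact Finset.mem_union_left _ (h ▸ hTm x k hxk)
          · exact Finset.mem_union_right _ (h ▸ hTm x k hxk)
        · have := hT j.1 hj.1
          have := hT j.2.1 hj.2.1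
          nlinarith
      · have : (univ.filter fun k => ¬ Disjoint (S k) (S j)) = ∅ := by
          refine Finset.filter_false_of_mem fun k _ => ?_
          rw [not_not]
          refine Set.disjoint_left.2 fun x _ hx => hj hx.1
        rw [this]
        simp) (by
      have : (32:ℝ) * m ≤ l := by exact_mod_cast hm
      push_cast
      calc 4 * (1 / (l:ℝ) ^ 2) * (8 * l * m) = (32 * m) / l := by field_simp; ring
        _ ≤ 1 := (div_le_one hlpos).2 this) (by
      have : (2:ℝ) ≤ l := by exact_mod_cast hl
      rw [mul_one_div, div_le_one (by positivity)]
      nlinarith) (by positivity)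
  have hmem : ∀ e ∈ F, ω e ∈ L e := by
    intro e he
    have := hω.1 e
    by_contra hc
    apply this
    simp [w, L', he, hc]
  refine ⟨ω, hmem, fun e he f hf hne hv heq => hω.2 (e, f, ω e) ⟨⟨he, hf, hne, hv, hmem e he, ?_⟩,
    rfl, heq.symm⟩⟩
  simp only
  rw [heq]
  exact hmem f hf
end Comb

section Nibble
set_option linter.unusedSectionVars false
variable {V C : Type} [Fintype V] [Fintype C]

/-- index set of the random bits: edge-colour picks and equalizing coins -/
abbrev Idx (V C : Type) := (Sym2 V × C) ⊕ (V × C)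

variable (F : Finset (Sym2 V)) (L : Sym2 V → Finset C)

/-- bits that must vanish for `c` to survive at `u` (ignoring `e`) -/
noncomputable def HH (e : Sym2 V) (c : C) (u : V) : Finset (Idx V C) :=
  ((NN F L u c).erase e).image (fun f => Sum.inl (f, c)) ∪ {Sum.inr (u, c)}

/-- bits that must vanish for `c` to survive in the list of `e` -/
noncomputable def SL (e : Sym2 V) (c : C) : Finset (Idx V C) := (ends e).biUnion (HH F L e c)

/-- bits that must vanish for `e` to be inactive with `c` surviving at its end other than `v` -/
noncomputable def SY (v : V) (c : C) (e : Sym2 V) : Finset (Idx V C) :=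
  (L e).image (fun c' => Sum.inl (e, c')) ∪ ((ends e).erase v).biUnion (HH F L e c)

/-- `e` gets coloured by `c` -/
def Cby (ω : Idx V C → Bool) (e : Sym2 V) (c : C) : Prop :=
  c ∈ L e ∧ ω (Sum.inl (e, c)) = true ∧
    ∀ u ∈ e, ∀ f ∈ NN F L u c, f ≠ e → ω (Sum.inl (f, c)) = false

/-- remaining edges -/
noncomputable def F1 (ω : Idx V C → Bool) : Finset (Sym2 V) := F.filter fun e => ¬ ∃ c, Cby F L ω e c

/-- remaining lists -/
noncomputable def L1 (ω : Idx V C → Bool) (e : Sym2 V) : Finset C :=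
  (L e).filter fun c => ∀ i ∈ SL F L e c, ω i = false

variable {F L}

theorem mem_HH {e : Sym2 V} {c : C} {u : V} {i : Idx V C} : i ∈ HH F L e c u ↔
    (∃ f, f ∈ NN F L u c ∧ f ≠ e ∧ Sum.inl (f, c) = i) ∨ i = Sum.inr (u, c) := by
  simp only [HH, mem_union, mem_image, mem_erase, mem_singleton]
  constructor
  · rintro (⟨f, h1, h2⟩ | h)
    · exact Or.inl ⟨f, h1.2, h1.1, h2⟩
    · exact Or.inr h
  · rintro (⟨f, h1, h2, h3⟩ | h)
    · exact Or.inl ⟨f, ⟨h2, h1⟩, h3⟩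
    · exact Or.inr h

theorem mem_SL {e : Sym2 V} {c : C} {i : Idx V C} : i ∈ SL F L e c ↔
    ∃ u ∈ e, i ∈ HH F L e c u := by
  simp [SL, mem_ends]

theorem mem_SY {v : V} {e : Sym2 V} {c : C} {i : Idx V C} : i ∈ SY F L v c e ↔
    (∃ c' ∈ L e, Sum.inl (e, c') = i) ∨ ∃ u ∈ e, u ≠ v ∧ i ∈ HH F L e c u := by
  simp only [SY, mem_union, mem_image, mem_biUnion, mem_erase, mem_ends]
  refine or_congr Iff.rfl (exists_congr fun u => ?_)
  tauto

theorem extend (ω : Idx V C → Bool) (h : Col (F1 F L ω) (L1 F L ω)) : Col F L := by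
  obtain ⟨γ, h1, h2⟩ := h
  let δ : Sym2 V → C := fun e => if h : ∃ c, Cby F L ω e c then h.choose else γ e
  have d1 : ∀ e, (∃ c, Cby F L ω e c) → Cby F L ω e (δ e) := by
    intro e h
    simp only [δ, h, dif_pos]
    exact h.choose_spec
  have d2 : ∀ e, ¬ (∃ c, Cby F L ω e c) → δ e = γ e := by
    intro e h
    simp only [δ, h, dif_neg, not_false_eq_true]
  have m1 : ∀ e ∈ F, ¬ (∃ c, Cby F L ω e c) → e ∈ F1 F L ω :=
    fun e he h => Finset.mem_filter.2 ⟨he, h⟩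
  have mixed : ∀ e ∈ F, ∀ f ∈ F, e ≠ f → (∃ v, v ∈ e ∧ v ∈ f) → (∃ c, Cby F L ω e c) →
      ¬ (∃ c, Cby F L ω f c) → δ e ≠ δ f := by
    rintro e he f hf hne ⟨v, hve, hvf⟩ hce hcf heq
    have k1 := d1 e hce
    have k2 := h1 f (m1 f hf hcf)
    rw [← d2 f hcf, ← heq] at k2
    have k3 := (Finset.mem_filter.1 k2).2 (Sum.inl (e, δ e))
      (mem_SL.2 ⟨v, hvf, mem_HH.2 (Or.inl ⟨e, mem_NN.2 ⟨he, hve, k1.1⟩, hne, rfl⟩)⟩)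
    rw [k1.2.1] at k3
    exact Bool.noConfusion k3
  refine ⟨δ, ?_, ?_⟩
  · intro e he
    by_cases hc : ∃ c, Cby F L ω e c
    · exact (d1 e hc).1
    · rw [d2 e hc]
      exact Finset.mem_of_mem_filter _ (h1 e (m1 e he hc))
  · rintro e he f hf hne hv
    by_cases hce : ∃ c, Cby F L ω e c <;> by_cases hcf : ∃ c, Cby F L ω f c
    · intro heq
      obtain ⟨v, hve, hvf⟩ := hv
      have k1 := d1 e hce
      have k2 := d1 f hcf
      rw [← heq] at k2
      have k3 := k2.2.2 v hvf e (mem_NN.2 ⟨he, hve, k1.1⟩) hne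
      rw [k1.2.1] at k3
      exact Bool.noConfusion k3
    · exact mixed e he f hf hne hv hce hcf
    · exact (mixed f hf e he hne.symm (by obtain ⟨v, a, b⟩ := hv; exact ⟨v, b, a⟩) hcf hce).symm
    · rw [d2 e hce, d2 f hcf]
      exact h2 e (m1 e he hce) f (m1 f hf hcf) hne hv

/-- neighbours through colour `c` -/
noncomputable def nb (F : Finset (Sym2 V)) (L : Sym2 V → Finset C) (e : Sym2 V) (c : C) :
    Finset (Sym2 V) := ((ends e).biUnion fun u => NN F L u c).erase e

theorem mem_nb {e f : Sym2 V} {c : C} : f ∈ nb F L e c ↔ f ≠ e ∧ ∃ u ∈ e, f ∈ NN F L u c := by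
  simp [nb, mem_ends]

theorem card_nb_le (e : Sym2 V) (c : C) (n : ℕ) (hn : ∀ v c, (NN F L v c).card ≤ n) :
    (nb F L e c).card ≤ 2 * n :=
  (Finset.card_erase_le).trans ((Finset.card_biUnion_le_card_mul _ _ n fun u _ => hn u c).trans
    (Nat.mul_le_mul_right _ (card_ends_le e)))

/-- conflicting active edges -/
noncomputable def Y2 (F : Finset (Sym2 V)) (L : Sym2 V → Finset C) (v : V) (c : C)
    (ω : Idx V C → Bool) : Finset (Sym2 V) :=
  (NN F L v c).filter fun e => ∃ c' ∈ L e, ω (Sum.inl (e, c')) = true ∧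
    ∃ f ∈ nb F L e c', ω (Sum.inl (f, c')) = true

/-- inactive edges where `c` survives -/
noncomputable def Y1 (F : Finset (Sym2 V)) (L : Sym2 V → Finset C) (v : V) (c : C)
    (ω : Idx V C → Bool) : Finset (Sym2 V) :=
  (NN F L v c).filter fun e => ∀ i ∈ SY F L v c e, ω i = false

theorem NN_next (ω : Idx V C → Bool) (v : V) (c : C) :
    (NN (F1 F L ω) (L1 F L ω) v c).card ≤ (Y1 F L v c ω).card + (Y2 F L v c ω).card := by
  refine (Finset.card_le_card ?_).trans (Finset.card_union_le _ _)
  intro e he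
  obtain ⟨heF, hve, hc⟩ := mem_NN.1 he
  obtain ⟨heF, hnc⟩ := Finset.mem_filter.1 heF
  obtain ⟨hcL, hS⟩ := Finset.mem_filter.1 hc
  have heN : e ∈ NN F L v c := mem_NN.2 ⟨heF, hve, hcL⟩
  by_cases hact : ∃ c' ∈ L e, ω (Sum.inl (e, c')) = true
  · obtain ⟨c', hc', hω⟩ := hact
    refine Finset.mem_union_right _ (Finset.mem_filter.2 ⟨heN, c', hc', hω, ?_⟩)
    by_contra hno
    push Not at hno
    refine hnc ⟨c', hc', hω, fun u hu f hf hne => ?_⟩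
    have := hno f (mem_nb.2 ⟨hne, u, hu, hf⟩)
    simpa using this
  · push Not at hact
    refine Finset.mem_union_left _ (Finset.mem_filter.2 ⟨heN, fun i hi => ?_⟩)
    rcases mem_SY.1 hi with ⟨c', hc', rfl⟩ | ⟨u, hu, _, hi⟩
    · simpa using hact c' hc'
    · exact hS i (mem_SL.2 ⟨u, hu, hi⟩)

/-- bit probabilities -/
noncomputable def pr (F : Finset (Sym2 V)) (L : Sym2 V → Finset C) (p : ℝ) (d : ℕ) :
    Idx V C → ℝ
  | Sum.inl _ => p
  | Sum.inr x => 1 - (1 - p) ^ (d - (NN F L x.1 x.2).card)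

theorem pr_bd {p : ℝ} {d : ℕ} (h0 : 0 ≤ p) (h1 : p ≤ 1) (i : Idx V C) :
    0 ≤ pr F L p d i ∧ pr F L p d i ≤ 1 := by
  rcases i with i | i
  · exact ⟨h0, h1⟩
  · simp only [pr]
    have a : (1 - p) ^ (d - (NN F L i.1 i.2).card) ≤ 1 := pow_le_one₀ (by linarith) (by linarith)
    have b : 0 ≤ (1 - p) ^ (d - (NN F L i.1 i.2).card) := pow_nonneg (by linarith) _
    constructor <;> linarith

theorem HH_disj1 (e : Sym2 V) (c : C) (u : V) :
    Disjoint (((NN F L u c).erase e).image (fun f => (Sum.inl (f, c) : Idx V C)))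
      {Sum.inr (u, c)} := by
  simp

theorem inl_inj (c : C) : Function.Injective (fun f : Sym2 V => (Sum.inl (f, c) : Idx V C)) := by
  intro a b h
  simpa using h

theorem HH_prod {p : ℝ} {d : ℕ} {e : Sym2 V} {c : C} {u : V} (he : e ∈ NN F L u c)
    (hd : (NN F L u c).card ≤ d) : ∏ i ∈ HH F L e c u, (1 - pr F L p d i) = (1 - p) ^ (d - 1) := by
  unfold HH
  rw [Finset.prod_union (HH_disj1 e c u), Finset.prod_image (fun a _ b _ h => inl_inj c h)]
  simp only [pr, prod_const, prod_singleton, sub_sub_cancel]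
  rw [← pow_add, Finset.card_erase_of_mem he]
  have : 0 < (NN F L u c).card := Finset.card_pos.2 ⟨e, he⟩
  congr 1
  omega

theorem HH_sum {p : ℝ} {d : ℕ} (h0 : 0 ≤ p) (h1 : p ≤ 1) {e : Sym2 V} {c : C} {u : V}
    (hd : (NN F L u c).card ≤ d) : ∑ i ∈ HH F L e c u, pr F L p d i ≤ d * p + 1 := by
  unfold HH
  rw [Finset.sum_union (HH_disj1 e c u), Finset.sum_image (fun a _ b _ h => inl_inj c h)]
  refine add_le_add ?_ ?_
  · simp only [pr, sum_const, nsmul_eq_mul]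
    refine mul_le_mul_of_nonneg_right ?_ h0
    exact_mod_cast Finset.card_erase_le.trans hd
  · rw [sum_singleton]
    exact (pr_bd h0 h1 _).2

theorem eq_of_two {e f : Sym2 V} {u v : V} (hne : u ≠ v) (h1 : u ∈ e) (h2 : v ∈ e) (h3 : u ∈ f)
    (h4 : v ∈ f) : e = f :=
  ((Sym2.mem_and_mem_iff hne).1 ⟨h1, h2⟩).trans ((Sym2.mem_and_mem_iff hne).1 ⟨h3, h4⟩).symm

theorem HH_disj2 {e : Sym2 V} {c : C} {u v : V} (hu : u ∈ e) (hv : v ∈ e) (hne : u ≠ v) :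
    Disjoint (HH F L e c u) (HH F L e c v) := by
  rw [Finset.disjoint_left]
  intro i h1 h2
  rcases mem_HH.1 h1 with ⟨f, hf, hfe, rfl⟩ | rfl
  · rcases mem_HH.1 h2 with ⟨g, hg, hge, heq⟩ | heq
    · simp only [Sum.inl.injEq, Prod.mk.injEq, and_true] at heq
      subst heq
      exact hfe (eq_of_two hne (mem_NN.1 hf).2.1 (mem_NN.1 hg).2.1 hu hv)
    · simp at heq
  · rcases mem_HH.1 h2 with ⟨g, hg, hge, heq⟩ | heq
    · simp at heq
    · simp at heq
      exact hne heq

theorem SL_prod {p : ℝ} {d : ℕ} {e : Sym2 V} {c : C} (he : e ∈ F) (hdiag : ¬ e.IsDiag)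
    (hc : c ∈ L e) (hd : ∀ v c, (NN F L v c).card ≤ d) :
    ∏ i ∈ SL F L e c, (1 - pr F L p d i) = ((1 - p) ^ (d - 1)) ^ 2 := by
  unfold SL
  rw [Finset.prod_biUnion (fun u hu v hv hne => HH_disj2 (mem_ends.1 hu) (mem_ends.1 hv) hne)]
  rw [Finset.prod_congr rfl (fun u hu => HH_prod (mem_NN.2 ⟨he, mem_ends.1 hu, hc⟩) (hd u c))]
  rw [prod_const, card_ends e hdiag]

theorem SL_sum {p : ℝ} {d : ℕ} (h0 : 0 ≤ p) (h1 : p ≤ 1) {e : Sym2 V} {c : C}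
    (hd : ∀ v c, (NN F L v c).card ≤ d) :
    ∑ i ∈ SL F L e c, pr F L p d i ≤ 2 * (d * p + 1) := by
  unfold SL
  have hpos : (0:ℝ) ≤ d * p + 1 := by positivity
  calc _ ≤ ∑ u ∈ ends e, ∑ i ∈ HH F L e c u, pr F L p d i := by
        exact (Finset.sum_biUnion (fun u hu v hv hne => HH_disj2 (mem_ends.1 hu) (mem_ends.1 hv) hne)).le
    _ ≤ (ends e).card • (d * p + 1) := Finset.sum_le_card_nsmul _ _ _ fun u _ => HH_sum h0 h1 (hd u c)
    _ ≤ _ := by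
        rw [nsmul_eq_mul]
        refine mul_le_mul_of_nonneg_right ?_ hpos
        exact_mod_cast card_ends_le e

theorem SY_disj (v : V) (c : C) (e : Sym2 V) :
    Disjoint ((L e).image (fun c' => (Sum.inl (e, c') : Idx V C)))
      (((ends e).erase v).biUnion (HH F L e c)) := by
  rw [Finset.disjoint_left]
  intro i h1 h2
  obtain ⟨c', _, rfl⟩ := Finset.mem_image.1 h1
  obtain ⟨u, _, h3⟩ := Finset.mem_biUnion.1 h2
  rcases mem_HH.1 h3 with ⟨f, hf, hfe, heq⟩ | heq
  · simp only [Sum.inl.injEq, Prod.mk.injEq] at heq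
    exact hfe heq.1
  · simp at heq

theorem card_ends_erase {e : Sym2 V} {v : V} (hv : v ∈ e) (hdiag : ¬ e.IsDiag) :
    ((ends e).erase v).card = 1 := by
  rw [Finset.card_erase_of_mem (mem_ends.2 hv), card_ends e hdiag]

theorem inl_inj' (e : Sym2 V) : Function.Injective (fun c : C => (Sum.inl (e, c) : Idx V C)) := by
  intro a b h
  simpa using h

theorem SY_prod {p : ℝ} {d : ℕ} {e : Sym2 V} {c : C} {v : V} (he : e ∈ NN F L v c)
    (hdiag : ¬ e.IsDiag) (hd : ∀ v c, (NN F L v c).card ≤ d) :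
    ∏ i ∈ SY F L v c e, (1 - pr F L p d i) = (1 - p) ^ ((L e).card + (d - 1)) := by
  obtain ⟨heF, hv, hc⟩ := mem_NN.1 he
  unfold SY
  rw [Finset.prod_union (SY_disj v c e), Finset.prod_image (fun a _ b _ h => inl_inj' e h),
    Finset.prod_biUnion (fun u hu w hw hne => HH_disj2 (mem_ends.1 (Finset.mem_of_mem_erase hu))
      (mem_ends.1 (Finset.mem_of_mem_erase hw)) hne)]
  rw [Finset.prod_congr rfl (fun u hu => HH_prod
    (mem_NN.2 ⟨heF, mem_ends.1 (Finset.mem_of_mem_erase hu), hc⟩) (hd u c))]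
  simp only [pr, prod_const]
  rw [card_ends_erase hv hdiag, pow_one, pow_add]

theorem SY_sum {p : ℝ} {d : ℕ} (h0 : 0 ≤ p) (h1 : p ≤ 1) {e : Sym2 V} {c : C} {v : V}
    (hv : v ∈ e) (hdiag : ¬ e.IsDiag) (hd : ∀ v c, (NN F L v c).card ≤ d) :
    ∑ i ∈ SY F L v c e, pr F L p d i ≤ (L e).card * p + (d * p + 1) := by
  unfold SY
  rw [Finset.sum_union (SY_disj v c e), Finset.sum_image (fun a _ b _ h => inl_inj' e h)]
  refine add_le_add (by simp [pr]) ?_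
  calc _ ≤ ∑ u ∈ (ends e).erase v, ∑ i ∈ HH F L e c u, pr F L p d i := by
        exact (Finset.sum_biUnion (fun u hu w hw hne => HH_disj2
          (mem_ends.1 (Finset.mem_of_mem_erase hu)) (mem_ends.1 (Finset.mem_of_mem_erase hw)) hne)).le
    _ ≤ ((ends e).erase v).card • (d * p + 1) :=
        Finset.sum_le_card_nsmul _ _ _ fun u _ => HH_sum h0 h1 (hd u c)
    _ = _ := by rw [card_ends_erase hv hdiag, one_smul]

/-- colour of a bit -/
def colr : Idx V C → C
  | Sum.inl x => x.2
  | Sum.inr x => x.2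

theorem colr_SL {e : Sym2 V} {c : C} {i : Idx V C} (h : i ∈ SL F L e c) : colr i = c := by
  obtain ⟨u, _, h⟩ := mem_SL.1 h
  rcases mem_HH.1 h with ⟨f, hf, hfe, rfl⟩ | rfl <;> rfl

theorem SL_mult (e : Sym2 V) (i : Idx V C) :
    ((L e).filter fun c => i ∈ SL F L e c).card ≤ 2 := by
  refine (Finset.card_le_card (t := {colr i}) ?_).trans (by simp)
  intro c hc
  simp [colr_SL (Finset.mem_filter.1 hc).2]

theorem SY_mult (v : V) (c : C) (i : Idx V C) :
    ((NN F L v c).filter fun e => i ∈ SY F L v c e).card ≤ 2 := by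
  rcases i with ⟨f, c'⟩ | ⟨u, c'⟩
  · by_cases hv : v ∈ f
    · refine (Finset.card_le_card (t := {f}) ?_).trans (by simp)
      intro e he
      obtain ⟨heN, hi⟩ := Finset.mem_filter.1 he
      rcases mem_SY.1 hi with ⟨c', hc', heq⟩ | ⟨u, hu, huv, hi⟩
      · simp only [Sum.inl.injEq, Prod.mk.injEq] at heq
        simp [heq.1]
      · rcases mem_HH.1 hi with ⟨g, hg, hge, heq⟩ | heq
        · simp only [Sum.inl.injEq, Prod.mk.injEq] at heq
          obtain ⟨rfl, rfl⟩ := heq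
          exact absurd (eq_of_two huv (mem_NN.1 hg).2.1 hv hu (mem_NN.1 heN).2.1) hge
        · simp at heq
    · refine (Finset.card_le_card (t := (ends f).image fun u => s(u, v)) ?_).trans
        (Finset.card_image_le.trans (card_ends_le f))
      intro e he
      obtain ⟨heN, hi⟩ := Finset.mem_filter.1 he
      rcases mem_SY.1 hi with ⟨c', hc', heq⟩ | ⟨u, hu, huv, hi⟩
      · simp only [Sum.inl.injEq, Prod.mk.injEq] at heq
        exact absurd (heq.1 ▸ (mem_NN.1 heN).2.1) hv
      · rcases mem_HH.1 hi with ⟨g, hg, hge, heq⟩ | heq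
        · simp only [Sum.inl.injEq, Prod.mk.injEq] at heq
          obtain ⟨rfl, rfl⟩ := heq
          refine Finset.mem_image.2 ⟨u, mem_ends.2 (mem_NN.1 hg).2.1, ?_⟩
          exact ((Sym2.mem_and_mem_iff huv).1 ⟨hu, (mem_NN.1 heN).2.1⟩).symm
        · simp at heq
  · refine (Finset.card_le_card (t := {s(u, v)}) ?_).trans (by simp)
    intro e he
    obtain ⟨heN, hi⟩ := Finset.mem_filter.1 he
    rcases mem_SY.1 hi with ⟨c', hc', heq⟩ | ⟨u', hu, huv, hi⟩
    · simp at heq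
    · rcases mem_HH.1 hi with ⟨g, hg, hge, heq⟩ | heq
      · simp at heq
      · simp only [Sum.inr.injEq, Prod.mk.injEq] at heq
        obtain ⟨rfl, rfl⟩ := heq
        rw [Finset.mem_singleton]
        exact (Sym2.mem_and_mem_iff huv).1 ⟨hu, (mem_NN.1 heN).2.1⟩

end Nibble

section Tails
set_option linter.unusedSectionVars false
variable {ι : Type} [Fintype ι]

theorem tail_up {pr : ι → ℝ} (h : ∀ i, 0 ≤ pr i ∧ pr i ≤ 1) {X : Type} (s : Finset X)
    (S : X → Finset ι) (h2 : ∀ i, (s.filter fun x => i ∈ S x).card ≤ 2) (M t μ : ℝ) (hMp : 0 < M)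
    (hM : ∑ x ∈ s, ∑ i ∈ S x, pr i ≤ M) (ht : 0 ≤ t) (htM : t ≤ 2 * M)
    (hμ : ∑ x ∈ s, ∏ i ∈ S x, (1 - pr i) ≤ μ) :
    Pr (bw pr) (fun ω => μ + t ≤ ((s.filter fun x => ∀ i ∈ S x, ω i = false).card : ℝ)) ≤
      Real.exp (- (t ^ 2 / (8 * M))) := by
  set l := t / (4 * M) with hl
  have hl0 : 0 ≤ l := by positivity
  have hl2 : l ≤ 1 / 2 := by
    rw [hl, div_le_iff₀ (by positivity)]
    linarith
  have key := conc h s S h2 M hM l (by rw [abs_of_nonneg hl0]; exact hl2)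
  refine (Pr_markov (bw_isPr h) _ (fun ω => l * _) (l * (μ + t))
    (fun ω hω => mul_le_mul_of_nonneg_left hω hl0)).trans ?_
  refine (mul_le_mul_of_nonneg_left key (Real.exp_pos _).le).trans ?_
  rw [← Real.exp_add]
  refine Real.exp_le_exp.2 ?_
  have h1 := mul_le_mul_of_nonneg_left hμ hl0
  have h3 : 2 * l ^ 2 * M - l * t = - (t ^ 2 / (8 * M)) := by
    rw [hl]; field_simp; ring
  linarith

theorem tail_low {pr : ι → ℝ} (h : ∀ i, 0 ≤ pr i ∧ pr i ≤ 1) {X : Type} (s : Finset X)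
    (S : X → Finset ι) (h2 : ∀ i, (s.filter fun x => i ∈ S x).card ≤ 2) (M t μ : ℝ) (hMp : 0 < M)
    (hM : ∑ x ∈ s, ∑ i ∈ S x, pr i ≤ M) (ht : 0 ≤ t) (htM : t ≤ 2 * M)
    (hμ : μ ≤ ∑ x ∈ s, ∏ i ∈ S x, (1 - pr i)) :
    Pr (bw pr) (fun ω => ((s.filter fun x => ∀ i ∈ S x, ω i = false).card : ℝ) ≤ μ - t) ≤
      Real.exp (- (t ^ 2 / (8 * M))) := by
  set l := t / (4 * M) with hl
  have hl0 : 0 ≤ l := by positivity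
  have hl2 : l ≤ 1 / 2 := by
    rw [hl, div_le_iff₀ (by positivity)]
    linarith
  have key := conc h s S h2 M hM (-l) (by rw [abs_neg, abs_of_nonneg hl0]; exact hl2)
  refine (Pr_markov (bw_isPr h) _ (fun ω => (-l) * _) ((-l) * (μ - t))
    (fun ω hω => mul_le_mul_of_nonpos_left hω (by linarith))).trans ?_
  refine (mul_le_mul_of_nonneg_left key (Real.exp_pos _).le).trans ?_
  rw [← Real.exp_add]
  refine Real.exp_le_exp.2 ?_
  have h1 := mul_le_mul_of_nonneg_left hμ hl0
  have h3 : 2 * l ^ 2 * M - l * t = - (t ^ 2 / (8 * M)) := by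
    rw [hl]; field_simp; ring
  nlinarith

end Tails

section Conflict
set_option linter.unusedSectionVars false
variable {V C : Type} [Fintype V] [Fintype C] {F : Finset (Sym2 V)} {L : Sym2 V → Finset C}

theorem pair_mgf {p : ℝ} {d : ℕ} (h0 : 0 ≤ p) (h1 : p ≤ 1) (X : Finset (Sym2 V)) (c : C)
    (e f : Sym2 V) (hne : f ≠ e) (hX : 2 * p * X.card ≤ 1 / 2) :
    Ex (bw (pr F L p d)) (fun ω => if ω (Sum.inl (e, c)) = true ∧ ω (Sum.inl (f, c)) = true then
      Real.exp ((X.filter fun g => ω (Sum.inl (g, c)) = true).card : ℝ) else 0) ≤ 18 * p ^ 2 := by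
  have hw := bw_isPr (fun i => pr_bd (F := F) (L := L) (d := d) h0 h1 i)
  let W : Finset (Sym2 V) := {e, f} ∪ (X \ {e, f})
  let ie : Idx V C := Sum.inl (e, c)
  let jf : Idx V C := Sum.inl (f, c)
  let g : Idx V C → Bool → ℝ := fun i a =>
    if i = ie ∨ i = jf then (if a then 1 else 0) else if a then Real.exp 1 else 1
  have he3 : Real.exp 1 < 3 := Real.exp_one_lt_three
  have hbound : ∀ ω : Idx V C → Bool, (if ω ie = true ∧ ω jf = true then
      Real.exp ((X.filter fun g => ω (Sum.inl (g, c)) = true).card : ℝ) else 0) ≤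
      9 * ∏ i ∈ W.image (fun x => (Sum.inl (x, c) : Idx V C)), g i (ω i) := by
    intro ω
    rw [Finset.prod_image (fun a _ b _ h => inl_inj c h), Finset.prod_union disjoint_sdiff,
      Finset.prod_pair hne.symm]
    have g1 : g (Sum.inl (e, c)) (ω (Sum.inl (e, c))) = if ω ie then 1 else 0 := by simp [g, ie]
    have g2 : g (Sum.inl (f, c)) (ω (Sum.inl (f, c))) = if ω jf then 1 else 0 := by simp [g, jf]
    rw [g1, g2]
    by_cases hh : ω ie = true ∧ ω jf = true
    · rw [if_pos hh]
      simp only [hh.1, hh.2, if_true, one_mul]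
      have g3 : ∏ x ∈ X \ {e, f}, g (Sum.inl (x, c)) (ω (Sum.inl (x, c))) =
          Real.exp (((X \ {e, f}).filter fun g => ω (Sum.inl (g, c)) = true).card : ℝ) := by
        rw [Finset.card_filter, Nat.cast_sum, Real.exp_sum]
        refine Finset.prod_congr rfl fun x hx => ?_
        simp only [mem_sdiff, mem_insert, mem_singleton, not_or] at hx
        have a1 : ¬ ((Sum.inl (x, c) : Idx V C) = ie ∨ (Sum.inl (x, c) : Idx V C) = jf) := by
          simp [ie, jf, hx.2.1, hx.2.2]
        simp only [g, a1, if_false]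
        split_ifs <;> simp
      rw [g3]
      have g4 : (X.filter fun g => ω (Sum.inl (g, c)) = true).card ≤ 2 +
          ((X \ {e, f}).filter fun g => ω (Sum.inl (g, c)) = true).card := by
        refine (Finset.card_le_card (t := {e, f} ∪
          ((X \ {e, f}).filter fun g => ω (Sum.inl (g, c)) = true)) ?_).trans
          ((Finset.card_union_le _ _).trans (Nat.add_le_add_right Finset.card_le_two _))
        intro x hx
        obtain ⟨hxX, hxω⟩ := Finset.mem_filter.1 hx
        by_cases hxe : x ∈ ({e, f} : Finset (Sym2 V))
        · exact Finset.mem_union_left _ hxe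
        · exact Finset.mem_union_right _ (Finset.mem_filter.2 ⟨Finset.mem_sdiff.2 ⟨hxX, hxe⟩, hxω⟩)
      have g5 : Real.exp 2 ≤ 9 := by
        have : Real.exp 2 = Real.exp 1 * Real.exp 1 := by rw [← Real.exp_add]; norm_num
        rw [this]
        nlinarith [Real.exp_pos 1]
      calc _ ≤ Real.exp (2 + (((X \ {e, f}).filter fun g => ω (Sum.inl (g, c)) = true).card : ℝ)) := by
            refine Real.exp_le_exp.2 ?_
            exact_mod_cast g4
        _ ≤ _ := by
            rw [Real.exp_add]
            exact mul_le_mul_of_nonneg_right g5 (Real.exp_pos _).le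
    · rw [if_neg hh]
      refine mul_nonneg (by norm_num) (mul_nonneg ?_ (Finset.prod_nonneg fun x _ => ?_))
      · split_ifs <;> norm_num
      · simp only [g]
        split_ifs <;> first | positivity | norm_num
  refine (Ex_mono hw hbound).trans ?_
  rw [Ex_smul, Ex_prod_mem hw, Finset.prod_image (fun a _ b _ h => inl_inj c h),
    Finset.prod_union disjoint_sdiff, Finset.prod_pair hne.symm]
  have k1 : (∑ a, bw (pr F L p d) (Sum.inl (e, c)) a * g (Sum.inl (e, c)) a) = p := by
    simp [bw, pr, g, ie]
  have k2 : (∑ a, bw (pr F L p d) (Sum.inl (f, c)) a * g (Sum.inl (f, c)) a) = p := by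
    simp [bw, pr, g, jf]
  rw [k1, k2]
  have k3 : ∏ x ∈ X \ {e, f}, (∑ a, bw (pr F L p d) (Sum.inl (x, c)) a * g (Sum.inl (x, c)) a) ≤
      Real.exp (2 * p) ^ X.card := by
    calc _ ≤ ∏ x ∈ X \ {e, f}, Real.exp (2 * p) := by
          refine Finset.prod_le_prod (fun x _ => ?_) (fun x hx => ?_)
          · refine Finset.sum_nonneg fun a _ => mul_nonneg (hw.nonneg _ _) ?_
            simp only [g]
            split_ifs <;> first | positivity | norm_num
          · simp only [mem_sdiff, mem_insert, mem_singleton, not_or] at hx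
            have a1 : ¬ ((Sum.inl (x, c) : Idx V C) = ie ∨ (Sum.inl (x, c) : Idx V C) = jf) := by
              simp [ie, jf, hx.2.1, hx.2.2]
            simp only [g, a1, if_false, Fintype.sum_bool, bw, pr, if_true, Bool.false_eq_true]
            nlinarith [Real.add_one_le_exp (2 * p)]
      _ = Real.exp (2 * p) ^ (X \ {e, f}).card := by rw [prod_const]
      _ ≤ _ := pow_le_pow_right₀ (Real.one_le_exp (by linarith))
          (Finset.card_le_card Finset.sdiff_subset)
  have k4 : Real.exp (2 * p) ^ X.card ≤ 2 := by
    rw [← Real.exp_nat_mul]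
    have a1 : (X.card : ℝ) * (2 * p) ≤ 1 / 2 := by linarith
    have a2 : Real.exp (1 / 2) ≤ 2 := by
      have : Real.exp (1/2) * Real.exp (1/2) = Real.exp 1 := by rw [← Real.exp_add]; norm_num
      nlinarith [Real.exp_pos (1/2)]
    exact (Real.exp_le_exp.2 a1).trans a2
  have := mul_le_mul_of_nonneg_left (k3.trans k4) (by positivity : 0 ≤ 9 * (p * p))
  nlinarith

theorem Y2_mgf {p : ℝ} {d : ℕ} (h0 : 0 ≤ p) (h1 : p ≤ 1) (n l : ℕ)
    (hn : ∀ v c, (NN F L v c).card ≤ n) (hL : ∀ e ∈ F, (L e).card = l)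
    (hpn : 2 * p * n ≤ 1 / 2) (v : V) (c : C) :
    Ex (bw (pr F L p d)) (fun ω => Real.exp ((Y2 F L v c ω).card : ℝ)) ≤
      Real.exp (36 * p ^ 2 * (n * n * l)) := by
  have hw := bw_isPr (fun i => pr_bd (F := F) (L := L) (d := d) h0 h1 i)
  let X : C → Finset (Sym2 V) := fun c' => (NN F L v c).filter fun e => c' ∈ L e
  let T : C → (Idx V C → Bool) → Sym2 V → Sym2 V → ℝ := fun c' ω e f =>
    if ω (Sum.inl (e, c')) = true ∧ ω (Sum.inl (f, c')) = true then
      Real.exp (((X c').filter fun g => ω (Sum.inl (g, c')) = true).card : ℝ) else 0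
  let G : C → (Idx V C → Bool) → ℝ := fun c' ω => 1 + ∑ e ∈ X c', ∑ f ∈ nb F L e c', T c' ω e f
  have hTnn : ∀ c' ω e f, 0 ≤ T c' ω e f := by
    intro c' ω e f
    simp only [T]
    split_ifs <;> positivity
  have hXc : ∀ c', (X c').card ≤ n := fun c' =>
    (Finset.card_le_card (Finset.filter_subset _ _)).trans (hn v c)
  have hG : ∀ c', DependsOn (G c') {i : Idx V C | colr i = c'} := by
    intro c' x y hxy
    have hb : ∀ e, x (Sum.inl (e, c')) = y (Sum.inl (e, c')) := fun e => hxy _ rfl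
    simp only [G, T, hb]
  have hpt : ∀ ω, Real.exp ((Y2 F L v c ω).card : ℝ) ≤ ∏ c' : C, G c' ω := by
    intro ω
    let Z : C → Finset (Sym2 V) := fun c' => (X c').filter fun e => ω (Sum.inl (e, c')) = true ∧
      ∃ f ∈ nb F L e c', ω (Sum.inl (f, c')) = true
    have hZ : (Y2 F L v c ω).card ≤ ∑ c', (Z c').card := by
      refine (Finset.card_le_card (t := univ.biUnion Z) ?_).trans Finset.card_biUnion_le
      intro e he
      obtain ⟨heN, c', hc', hω⟩ := Finset.mem_filter.1 he
      exact Finset.mem_biUnion.2 ⟨c', mem_univ _, Finset.mem_filter.2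
        ⟨Finset.mem_filter.2 ⟨heN, hc'⟩, hω⟩⟩
    calc _ ≤ Real.exp (∑ c', ((Z c').card : ℝ)) := Real.exp_le_exp.2 (by exact_mod_cast hZ)
      _ = ∏ c', Real.exp ((Z c').card : ℝ) := Real.exp_sum _ _
      _ ≤ _ := by
        refine Finset.prod_le_prod (fun _ _ => (Real.exp_pos _).le) fun c' _ => ?_
        by_cases hz : Z c' = ∅
        · rw [hz]
          simp only [card_empty, Nat.cast_zero, Real.exp_zero, G]
          linarith [Finset.sum_nonneg fun e (_ : e ∈ X c') =>
            Finset.sum_nonneg fun f (_ : f ∈ nb F L e c') => hTnn c' ω e f]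
        · obtain ⟨e, he⟩ := Finset.nonempty_iff_ne_empty.2 hz
          obtain ⟨heX, h1, f, hf, h2⟩ := Finset.mem_filter.1 he
          have a1 : T c' ω e f ≤ ∑ f ∈ nb F L e c', T c' ω e f :=
            Finset.single_le_sum (f := fun f => T c' ω e f) (fun f _ => hTnn c' ω e f) hf
          have a2 : ∑ f ∈ nb F L e c', T c' ω e f ≤ ∑ e ∈ X c', ∑ f ∈ nb F L e c', T c' ω e f :=
            Finset.single_le_sum (f := fun e => ∑ f ∈ nb F L e c', T c' ω e f)
              (fun e _ => Finset.sum_nonneg fun f _ => hTnn c' ω e f) heX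
          have a3 : Real.exp ((Z c').card : ℝ) ≤ T c' ω e f := by
            simp only [T, h1, h2, and_self, if_true]
            refine Real.exp_le_exp.2 (Nat.cast_le.2 (Finset.card_le_card ?_))
            intro x hx
            obtain ⟨hxX, hx1, _⟩ := Finset.mem_filter.1 hx
            exact Finset.mem_filter.2 ⟨hxX, hx1⟩
          simp only [G]
          linarith
  refine (Ex_mono hw hpt).trans ?_
  rw [Ex_blocks hw colr G hG univ]
  have hEG : ∀ c', Ex (bw (pr F L p d)) (G c') ≤ Real.exp (36 * p ^ 2 * n * (X c').card) := by
    intro c'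
    simp only [G]
    rw [Ex_add, Ex_const hw, Ex_sum]
    have b1 : ∑ e ∈ X c', Ex (bw (pr F L p d)) (fun ω => ∑ f ∈ nb F L e c', T c' ω e f) ≤
        (X c').card • (36 * p ^ 2 * n) := by
      refine Finset.sum_le_card_nsmul _ _ _ fun e he => ?_
      rw [Ex_sum]
      have b2 : ∑ f ∈ nb F L e c', Ex (bw (pr F L p d)) (fun ω => T c' ω e f) ≤
          (nb F L e c').card • (18 * p ^ 2) := by
        refine Finset.sum_le_card_nsmul _ _ _ fun f hf => ?_
        refine pair_mgf h0 h1 (X c') c' e f (mem_nb.1 hf).1 ?_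
        refine le_trans ?_ hpn
        exact mul_le_mul_of_nonneg_left (by exact_mod_cast hXc c') (by positivity)
      refine b2.trans ?_
      rw [nsmul_eq_mul]
      have b3 : ((nb F L e c').card : ℝ) ≤ 2 * n := by exact_mod_cast card_nb_le e c' n hn
      nlinarith [mul_le_mul_of_nonneg_right b3 (by positivity : 0 ≤ 18 * p ^ 2)]
    rw [nsmul_eq_mul] at b1
    nlinarith [Real.add_one_le_exp (36 * p ^ 2 * n * (X c').card)]
  refine (Finset.prod_le_prod (fun c' _ => ?_) fun c' _ => hEG c').trans ?_
  · refine Ex_nonneg hw fun ω => ?_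
    simp only [G]
    linarith [Finset.sum_nonneg fun e (_ : e ∈ X c') =>
            Finset.sum_nonneg fun f (_ : f ∈ nb F L e c') => hTnn c' ω e f]
  · rw [← Real.exp_sum, ← Finset.mul_sum]
    refine Real.exp_le_exp.2 ?_
    have c1 : ∑ c', (X c').card = ∑ e ∈ NN F L v c, (L e).card := by
      simp only [X, Finset.card_filter]
      rw [Finset.sum_comm]
      refine Finset.sum_congr rfl fun e _ => ?_
      simp
    have c2 : ∑ e ∈ NN F L v c, (L e).card ≤ n * l := by
      refine (Finset.sum_le_card_nsmul _ _ l fun e he => (hL e (mem_NN.1 he).1).le).trans ?_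
      rw [smul_eq_mul]
      exact Nat.mul_le_mul_right _ (hn v c)
    have c3 : ∑ c', ((X c').card : ℝ) ≤ n * l := by
      rw [← c1] at c2
      exact_mod_cast c2
    calc _ ≤ 36 * p ^ 2 * n * (n * l) := mul_le_mul_of_nonneg_left c3 (by positivity)
      _ = _ := by ring

end Conflict

section Local
set_option linter.unusedSectionVars false
variable {V C : Type} [Fintype V] [Fintype C] {F : Finset (Sym2 V)} {L : Sym2 V → Finset C}

/-- closed neighbourhood -/
noncomputable def near (F : Finset (Sym2 V)) (v : V) : Finset V :=
  univ.filter fun u => u = v ∨ ∃ e ∈ F, u ∈ e ∧ v ∈ e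

theorem mem_near {u v : V} : u ∈ near F v ↔ u = v ∨ ∃ e ∈ F, u ∈ e ∧ v ∈ e := by simp [near]

theorem near_symm {u v : V} (h : u ∈ near F v) : v ∈ near F u := by
  rw [mem_near] at h ⊢
  rcases h with h | ⟨e, h1, h2, h3⟩
  · exact Or.inl h.symm
  · exact Or.inr ⟨e, h1, h3, h2⟩

theorem card_near_le {D : ℕ} (hD : ∀ v, (F.filter fun e => v ∈ e).card ≤ D) (v : V) :
    (near F v).card ≤ D + 1 := by
  have h : near F v ⊆ insert v ((F.filter fun e => v ∈ e).biUnion fun e => (ends e).erase v) := by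
    intro u hu
    rw [mem_near] at hu
    by_cases huv : u = v
    · simp [huv]
    · obtain ⟨e, h1, h2, h3⟩ := hu.resolve_left huv
      refine Finset.mem_insert_of_mem (Finset.mem_biUnion.2 ⟨e, Finset.mem_filter.2 ⟨h1, h3⟩, ?_⟩)
      exact Finset.mem_erase.2 ⟨huv, mem_ends.2 h2⟩
  refine (Finset.card_le_card h).trans ((Finset.card_insert_le _ _).trans ?_)
  have := Finset.card_biUnion_le_card_mul (F.filter fun e => v ∈ e) (fun e => (ends e).erase v) 1
    (by
      intro e he
      have hv : v ∈ ends e := mem_ends.2 (Finset.mem_filter.1 he).2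
      rw [Finset.card_erase_of_mem hv]
      have := card_ends_le e
      omega)
  have := hD v
  omega

/-- support of the bad event at `v` -/
def supp (F : Finset (Sym2 V)) (v : V) : Set (Idx V C) :=
  {i | ∃ u ∈ near F v, (∃ f ∈ F, u ∈ f ∧ ∃ c, i = Sum.inl (f, c)) ∨ ∃ c, i = Sum.inr (u, c)}

theorem supp_deg {D : ℕ} (hD : ∀ v, (F.filter fun e => v ∈ e).card ≤ D) (v : V) :
    (univ.filter fun w => ¬ Disjoint (supp (C := C) F w) (supp F v)).card ≤ (D + 1) ^ 3 := by
  have h : (univ.filter fun w => ¬ Disjoint (supp (C := C) F w) (supp F v)) ⊆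
      (near F v).biUnion fun u => (near F u).biUnion fun x => near F x := by
    intro w hw
    have hw := (Finset.mem_filter.1 hw).2
    rw [Set.not_disjoint_iff] at hw
    obtain ⟨i, ⟨x, hx, hxi⟩, ⟨u, hu, hui⟩⟩ := hw
    refine Finset.mem_biUnion.2 ⟨u, hu, Finset.mem_biUnion.2 ⟨x, ?_, near_symm hx⟩⟩
    rcases hxi with ⟨f, hf, hxf, c, rfl⟩ | ⟨c, rfl⟩
    · rcases hui with ⟨g, hg, hug, c', h⟩ | ⟨c', h⟩
      · simp only [Sum.inl.injEq, Prod.mk.injEq] at h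
        obtain ⟨rfl, rfl⟩ := h
        exact mem_near.2 (Or.inr ⟨f, hf, hxf, hug⟩)
      · cases h
    · rcases hui with ⟨g, hg, hug, c', h⟩ | ⟨c', h⟩
      · cases h
      · simp only [Sum.inr.injEq, Prod.mk.injEq] at h
        exact mem_near.2 (Or.inl h.1)
  refine (Finset.card_le_card h).trans ?_
  have k1 : ∀ u, ((near F u).biUnion fun x => near F x).card ≤ (D + 1) * (D + 1) := fun u =>
    (Finset.card_biUnion_le_card_mul _ _ (D + 1) fun x _ => card_near_le hD x).trans
      (Nat.mul_le_mul_right _ (card_near_le hD u))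
  calc _ ≤ (near F v).card * ((D + 1) * (D + 1)) :=
        Finset.card_biUnion_le_card_mul _ _ _ fun x _ => k1 x
    _ ≤ (D + 1) * ((D + 1) * (D + 1)) := Nat.mul_le_mul_right _ (card_near_le hD v)
    _ = (D + 1) ^ 3 := by ring

theorem near_of_mem {e : Sym2 V} {u v : V} (he : e ∈ F) (hv : v ∈ e) (hu : u ∈ e) :
    u ∈ near F v := mem_near.2 (Or.inr ⟨e, he, hu, hv⟩)

theorem HH_supp {e : Sym2 V} {u v : V} {c : C} {i : Idx V C} (he : e ∈ F) (hv : v ∈ e) (hu : u ∈ e)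
    (hi : i ∈ HH F L e c u) : i ∈ supp (C := C) F v := by
  refine ⟨u, near_of_mem he hv hu, ?_⟩
  rcases mem_HH.1 hi with ⟨f, hf, _, rfl⟩ | rfl
  · exact Or.inl ⟨f, (mem_NN.1 hf).1, (mem_NN.1 hf).2.1, c, rfl⟩
  · exact Or.inr ⟨c, rfl⟩

theorem inl_supp {e : Sym2 V} {v : V} (c : C) (he : e ∈ F) (hv : v ∈ e) :
    Sum.inl (e, c) ∈ supp (C := C) F v :=
  ⟨v, mem_near.2 (Or.inl rfl), Or.inl ⟨e, he, hv, c, rfl⟩⟩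

theorem L1_dep {e : Sym2 V} {v : V} (he : e ∈ F) (hv : v ∈ e) {x y : Idx V C → Bool}
    (h : ∀ i ∈ supp (C := C) F v, x i = y i) : L1 F L x e = L1 F L y e := by
  refine Finset.filter_congr fun c hc => forall₂_congr fun i hi => ?_
  obtain ⟨u, hu, hi⟩ := mem_SL.1 hi
  rw [h i (HH_supp he hv hu hi)]

theorem Y1_dep {v : V} {c : C} {x y : Idx V C → Bool}
    (h : ∀ i ∈ supp (C := C) F v, x i = y i) : Y1 F L v c x = Y1 F L v c y := by
  refine Finset.filter_congr fun e he => forall₂_congr fun i hi => ?_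
  obtain ⟨he, hv, hc⟩ := mem_NN.1 he
  rcases mem_SY.1 hi with ⟨c', _, rfl⟩ | ⟨u, hu, _, hi⟩
  · rw [h _ (inl_supp c' he hv)]
  · rw [h i (HH_supp he hv hu hi)]

theorem Y2_dep {v : V} {c : C} {x y : Idx V C → Bool}
    (h : ∀ i ∈ supp (C := C) F v, x i = y i) : Y2 F L v c x = Y2 F L v c y := by
  refine Finset.filter_congr fun e he => ?_
  obtain ⟨he, hv, hc⟩ := mem_NN.1 he
  refine exists_congr fun c' => and_congr_right fun _ => ?_
  rw [h _ (inl_supp c' he hv)]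
  refine and_congr_right fun _ => exists_congr fun f => and_congr_right fun hf => ?_
  obtain ⟨_, u, hu, hf⟩ := mem_nb.1 hf
  rw [h (Sum.inl (f, c')) ⟨u, near_of_mem he hv hu,
    Or.inl ⟨f, (mem_NN.1 hf).1, (mem_NN.1 hf).2.1, c', rfl⟩⟩]

theorem nibble {p : ℝ} {d : ℕ} (h0 : 0 ≤ p) (h1 : p ≤ 1) (l D : ℕ)
    (hL : ∀ e ∈ F, (L e).card = l) (hD : ∀ v, (F.filter fun e => v ∈ e).card ≤ D)
    (a b1 b2 q : ℝ) (hb1 : 0 < b1) (hb2 : 0 < b2) (hq0 : 0 ≤ q)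
    (hA : ∀ e ∈ F, Pr (bw (pr F L p d)) (fun ω => ((L1 F L ω e).card : ℝ) ≤ a) ≤ q)
    (hB1 : ∀ v c, Pr (bw (pr F L p d)) (fun ω => b1 ≤ ((Y1 F L v c ω).card : ℝ)) ≤ q)
    (hB2 : ∀ v c, Pr (bw (pr F L p d)) (fun ω => b2 ≤ ((Y2 F L v c ω).card : ℝ)) ≤ q)
    (hq : 4 * (((D : ℝ) + D * l * 2) * q) * ((D : ℝ) + 1) ^ 3 ≤ 1) :
    ∃ ω, (∀ e ∈ F, a < ((L1 F L ω e).card : ℝ)) ∧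
      ∀ v c, ((NN (F1 F L ω) (L1 F L ω) v c).card : ℝ) < b1 + b2 := by
  have hw : IsPr (bw (pr F L p d)) := bw_isPr (pr_bd h0 h1)
  let E : V → Finset (Sym2 V) := fun v => F.filter fun e => v ∈ e
  let K : V → Finset C := fun v => (E v).biUnion L
  have hK : ∀ v, (K v).card ≤ D * l := fun v =>
    (Finset.card_biUnion_le_card_mul _ _ l fun e he => (hL e (Finset.mem_filter.1 he).1).le).trans
      (Nat.mul_le_mul_right _ (hD v))
  let B : V → (Idx V C → Bool) → Prop := fun v ω =>
    (∃ e ∈ E v, ((L1 F L ω e).card : ℝ) ≤ a) ∨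
    (∃ c ∈ K v, b1 ≤ ((Y1 F L v c ω).card : ℝ) ∨ b2 ≤ ((Y2 F L v c ω).card : ℝ))
  have hdep : ∀ v, DependsOn (B v) (supp (C := C) F v) := by
    intro v x y hxy
    simp only [B, eq_iff_iff]
    refine or_congr (exists_congr fun e => and_congr_right fun he => ?_)
      (exists_congr fun c => and_congr_right fun _ => ?_)
    · rw [L1_dep (Finset.mem_filter.1 he).1 (Finset.mem_filter.1 he).2 hxy]
    · rw [Y1_dep hxy, Y2_dep hxy]
  have hP : ∀ v, Pr (bw (pr F L p d)) (B v) ≤ ((D : ℝ) + D * l * 2) * q := by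
    intro v
    refine (Pr_or_le hw _ _).trans ?_
    have e1 : Pr (bw (pr F L p d)) (fun ω => ∃ e ∈ E v, ((L1 F L ω e).card : ℝ) ≤ a) ≤ D * q := by
      refine (Pr_exists_le hw _ _).trans ?_
      refine (Finset.sum_le_sum fun e he => hA e (Finset.mem_filter.1 he).1).trans ?_
      rw [Finset.sum_const, nsmul_eq_mul]
      exact mul_le_mul_of_nonneg_right (by exact_mod_cast hD v) hq0
    have e2 : Pr (bw (pr F L p d)) (fun ω => ∃ c ∈ K v, b1 ≤ ((Y1 F L v c ω).card : ℝ) ∨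
        b2 ≤ ((Y2 F L v c ω).card : ℝ)) ≤ (D * l) * (q + q) := by
      refine (Pr_exists_le hw _ _).trans ?_
      refine (Finset.sum_le_sum fun c _ => (Pr_or_le hw _ _).trans
        (add_le_add (hB1 v c) (hB2 v c))).trans ?_
      rw [Finset.sum_const, nsmul_eq_mul]
      exact mul_le_mul_of_nonneg_right (by exact_mod_cast hK v) (by linarith)
    linarith
  have hQ : 0 ≤ ((D : ℝ) + D * l * 2) * q := by positivity
  obtain ⟨ω, -, hω⟩ := LLL hw B (supp (C := C) F) hdep (((D : ℝ) + D * l * 2) * q) ((D + 1) ^ 3) hP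
    (fun v => supp_deg hD v) (by push_cast; exact hq)
    (by
      have : (1 : ℝ) ≤ ((D : ℝ) + 1) ^ 3 := one_le_pow₀ (by linarith [Nat.cast_nonneg (α := ℝ) D])
      nlinarith) hQ
  refine ⟨ω, ?_, ?_⟩
  · intro e he
    by_contra hc
    push Not at hc
    obtain ⟨v, hv⟩ : ∃ v, v ∈ e := by
      induction e using Sym2.ind with
      | _ a b => exact ⟨a, by simp⟩
    exact hω v (Or.inl ⟨e, Finset.mem_filter.2 ⟨he, hv⟩, hc⟩)
  · intro v c
    have h1 : ((NN (F1 F L ω) (L1 F L ω) v c).card : ℝ) ≤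
        ((Y1 F L v c ω).card : ℝ) + ((Y2 F L v c ω).card : ℝ) := by
      exact_mod_cast NN_next ω v c
    by_cases hc : c ∈ K v
    · have h2 := hω v
      simp only [B, not_or, not_exists, not_and, not_le] at h2
      have := h2.2 c hc
      linarith [this.1, this.2]
    · have : NN F L v c = ∅ := by
        refine Finset.eq_empty_of_forall_notMem fun e he => hc ?_
        obtain ⟨h1, h2, h3⟩ := mem_NN.1 he
        exact Finset.mem_biUnion.2 ⟨e, Finset.mem_filter.2 ⟨h1, h2⟩, h3⟩
      have y1 : (Y1 F L v c ω).card = 0 := by simp [Y1, this]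
      have y2 : (Y2 F L v c ω).card = 0 := by simp [Y2, this]
      rw [y1, y2] at h1
      push_cast at h1
      linarith

end Local

section Param
set_option linter.unusedSectionVars false
variable {V C : Type} [Fintype V] [Fintype C] {F : Finset (Sym2 V)} {L : Sym2 V → Finset C}

/-- numerical facts about the parameters of one nibble step -/
structure Par (l d : ℕ) (θ r p : ℝ) : Prop where
  l1 : 1 ≤ l
  θ0 : 0 < θ
  θ1 : θ ≤ 1 / 4
  r0 : 0 < r
  r1 : r ≤ 1
  pl : p * l = θ
  pθ : p ≤ θ ^ 2
  p0 : 0 < p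
  p1 : p ≤ 1
  rd : r * l ≤ d
  dr : (d : ℝ) ≤ r * l + 1
  dl : d ≤ l
  d1 : 1 ≤ d

theorem tail_L1 {l d : ℕ} {θ r p : ℝ} (P : Par l d θ r p) (hdiag : ∀ e ∈ F, ¬ e.IsDiag)
    (hL : ∀ e ∈ F, (L e).card = l) (hN : ∀ v c, (NN F L v c).card ≤ d)
    {e : Sym2 V} (he : e ∈ F) :
    Pr (bw (pr F L p d)) (fun ω => ((L1 F L ω e).card : ℝ) ≤ l * (1 - 2 * θ * r - θ ^ 2)) ≤
      Real.exp (-(θ ^ 4 * l / 48)) := by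
  have hl : (1 : ℝ) ≤ l := by exact_mod_cast P.l1
  have hdl : (d : ℝ) ≤ l := by exact_mod_cast P.dl
  have hd1 : (1 : ℝ) ≤ d := by exact_mod_cast P.d1
  have hdp : d * p ≤ 1 := by
    have := mul_le_mul_of_nonneg_right hdl P.p0.le
    have := P.pl
    have := P.θ1
    nlinarith
  have key := tail_low (pr_bd (F := F) (L := L) (d := d) P.p0.le P.p1) (L e) (SL F L e)
    (fun i => by convert SL_mult (F := F) (L := L) e i) (6 * l) (θ ^ 2 * l) (l * (1 - 2 * θ * r)) (by linarith)
    (by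
      refine (Finset.sum_le_sum fun c _ => SL_sum (e := e) (c := c) P.p0.le P.p1 hN).trans ?_
      rw [Finset.sum_const, nsmul_eq_mul, hL e he]
      nlinarith)
    (by positivity)
    (by
      have : θ ^ 2 ≤ 1 := pow_le_one₀ P.θ0.le (by linarith [P.θ1])
      nlinarith)
    (by
      rw [Finset.sum_congr (s₁ := L e) rfl fun c hc => SL_prod (L := L) (p := p) (d := d) he (hdiag e he) hc hN, Finset.sum_const,
        nsmul_eq_mul, hL e he]
      refine mul_le_mul_of_nonneg_left ?_ (by linarith)
      have b := one_add_mul_le_pow (a := -p) (by linarith [P.p1]) (d - 1)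
      rw [Nat.cast_sub P.d1] at b
      have hθr : θ * r ≤ 1 := by nlinarith [P.θ0, P.θ1, P.r1, P.r0]
      have b2 : 1 - θ * r ≤ (1 - p) ^ (d - 1) := by
        rw [← sub_eq_add_neg, Nat.cast_one] at b
        refine le_trans ?_ b
        have h3 : ((d : ℝ) - 1) * p ≤ r * l * p :=
          mul_le_mul_of_nonneg_right (by linarith [P.dr]) P.p0.le
        have h4 : r * l * p = θ * r := by rw [← P.pl]; ring
        nlinarith
      have b3 := pow_le_pow_left₀ (by linarith) b2 2
      nlinarith [sq_nonneg (θ * r)])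
  have e1 : l * (1 - 2 * θ * r) - θ ^ 2 * l = l * (1 - 2 * θ * r - θ ^ 2) := by ring
  have e2 : (θ ^ 2 * l) ^ 2 / (8 * (6 * (l : ℝ))) = θ ^ 4 * l / 48 := by field_simp; ring
  rw [e1, e2] at key
  convert key
  simp only [L1]
  congr!

theorem tail_Y1 {l d : ℕ} {θ r p : ℝ} (P : Par l d θ r p) (hdiag : ∀ e ∈ F, ¬ e.IsDiag)
    (hL : ∀ e ∈ F, (L e).card = l) (hN : ∀ v c, (NN F L v c).card ≤ d)
    (hr : ∀ v c, ((NN F L v c).card : ℝ) ≤ r * l) (v : V) (c : C) :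
    Pr (bw (pr F L p d)) (fun ω => l * (r * (1 - θ - θ * r + 5 * θ ^ 2) + θ ^ 2) ≤
      ((Y1 F L v c ω).card : ℝ)) ≤ Real.exp (-(θ ^ 4 * l / 48)) := by
  have hl : (1 : ℝ) ≤ l := by exact_mod_cast P.l1
  have hdl : (d : ℝ) ≤ l := by exact_mod_cast P.dl
  have hd1 : (1 : ℝ) ≤ d := by exact_mod_cast P.d1
  have hθ0 := P.θ0
  have hθ1 := P.θ1
  have hdp : d * p ≤ θ := by
    have := mul_le_mul_of_nonneg_right hdl P.p0.le
    have := P.pl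
    nlinarith
  have hθr : θ * r ≤ θ := by nlinarith [P.r1, P.r0]
  have hθr0 : 0 < θ * r := mul_pos P.θ0 P.r0
  have hpow : (1 - p) ^ (l + (d - 1)) ≤ 1 - θ - θ * r + 5 * θ ^ 2 := by
    have a1 : (1 - p) ^ (l + (d - 1)) ≤ Real.exp (-(p * (l + (d - 1)))) := by
      have := pow_le_pow_left₀ (by linarith [P.p1]) (Real.one_sub_le_exp_neg p) (l + (d - 1))
      rw [← Real.exp_nat_mul] at this
      refine this.trans (Real.exp_le_exp.2 ?_)
      push_cast [Nat.cast_sub P.d1]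
      nlinarith
    have a2 : θ + θ * r - p ≤ p * (l + (d - 1)) := by
      have := mul_le_mul_of_nonneg_left P.rd P.p0.le
      have h4 : p * (r * l) = θ * r := by rw [← P.pl]; ring
      have := P.pl
      nlinarith
    have hpθ : p ≤ θ := by nlinarith [P.pθ]
    have a3 : Real.exp (-(p * (l + (d - 1)))) ≤ Real.exp (-(θ + θ * r - p)) :=
      Real.exp_le_exp.2 (by linarith)
    have a4 := Real.abs_exp_sub_one_sub_id_le (x := -(θ + θ * r - p))
      (by rw [abs_neg, abs_of_nonneg (by linarith)]; linarith [P.p0])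
    have a5 := (abs_le.1 a4).2
    have a6 : (-(θ + θ * r - p)) ^ 2 ≤ (2 * θ) ^ 2 := by
      rw [neg_sq]
      exact pow_le_pow_left₀ (by linarith) (by linarith [P.p0]) 2
    have := P.pθ
    nlinarith
  have hpos : 0 ≤ 1 - θ - θ * r + 5 * θ ^ 2 := (pow_nonneg (by linarith [P.p1]) _).trans hpow
  have hrl : r * l ≤ l := by nlinarith [P.r1]
  have key := tail_up (pr_bd (F := F) (L := L) (d := d) P.p0.le P.p1) (NN F L v c) (SY F L v c)
    (fun i => by convert SY_mult (F := F) (L := L) v c i) (6 * l) (θ ^ 2 * l) (r * l * (1 - θ - θ * r + 5 * θ ^ 2)) (by linarith)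
    (by
      refine (Finset.sum_le_sum fun e he => (SY_sum (c := c) P.p0.le P.p1 (mem_NN.1 he).2.1
        (hdiag e (mem_NN.1 he).1) hN).trans (c := 6) ?_).trans ?_
      · rw [hL e (mem_NN.1 he).1]
        linarith [P.pl, mul_comm (l : ℝ) p]
      · rw [Finset.sum_const, nsmul_eq_mul]
        linarith [hr v c])
    (by positivity)
    (by
      have : θ ^ 2 ≤ 1 := pow_le_one₀ P.θ0.le (by linarith [P.θ1])
      nlinarith)
    (by
      refine (Finset.sum_le_sum (g := fun _ => 1 - θ - θ * r + 5 * θ ^ 2) fun e he => ?_).trans ?_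
      · rw [SY_prod he (hdiag e (mem_NN.1 he).1) hN, hL e (mem_NN.1 he).1]
        exact hpow
      · rw [Finset.sum_const, nsmul_eq_mul]
        exact mul_le_mul_of_nonneg_right (hr v c) hpos)
  have e1 : r * l * (1 - θ - θ * r + 5 * θ ^ 2) + θ ^ 2 * l =
    l * (r * (1 - θ - θ * r + 5 * θ ^ 2) + θ ^ 2) := by ring
  have e2 : (θ ^ 2 * l) ^ 2 / (8 * (6 * (l : ℝ))) = θ ^ 4 * l / 48 := by field_simp; ring
  rw [e1, e2] at key
  convert key
  simp only [Y1]
  congr!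

theorem tail_Y2 {l d : ℕ} {θ r p : ℝ} (P : Par l d θ r p)
    (hL : ∀ e ∈ F, (L e).card = l) (hN : ∀ v c, (NN F L v c).card ≤ d) (v : V) (c : C) :
    Pr (bw (pr F L p d)) (fun ω => 72 * θ ^ 2 * l ≤ ((Y2 F L v c ω).card : ℝ)) ≤
      Real.exp (-(θ ^ 4 * l / 48)) := by
  have hl : (1 : ℝ) ≤ l := by exact_mod_cast P.l1
  have hdl : (d : ℝ) ≤ l := by exact_mod_cast P.dl
  have hdp : d * p ≤ θ := by
    have := mul_le_mul_of_nonneg_right hdl P.p0.le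
    have := P.pl
    nlinarith
  have hw := bw_isPr (fun i => pr_bd (F := F) (L := L) (d := d) P.p0.le P.p1 i)
  have key := Y2_mgf (F := F) (L := L) (d := d) P.p0.le P.p1 d l hN hL
    (by linarith [P.θ1]) v c
  refine (Pr_markov hw _ (fun ω => ((Y2 F L v c ω).card : ℝ)) (72 * θ ^ 2 * l)
    fun ω h => h).trans ?_
  refine (mul_le_mul_of_nonneg_left key (Real.exp_pos _).le).trans ?_
  rw [← Real.exp_add]
  refine Real.exp_le_exp.2 ?_
  have h1 : (d * p) ^ 2 ≤ θ ^ 2 := pow_le_pow_left₀ (by have := P.p0; positivity) hdp 2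
  have h2 := mul_le_mul_of_nonneg_right h1 (by linarith : (0 : ℝ) ≤ l)
  have h3 : θ ^ 4 ≤ θ ^ 2 := pow_le_pow_of_le_one P.θ0.le (by linarith [P.θ1]) (by norm_num)
  have h4 := mul_le_mul_of_nonneg_right h3 (by linarith : (0 : ℝ) ≤ l)
  have h5 : 36 * p ^ 2 * (d * d * l) = 36 * ((d * p) ^ 2 * l) := by ring
  have h6 : 0 ≤ θ ^ 2 * l := by positivity
  rw [h5]
  linarith

theorem nibble_step {l d D : ℕ} {θ r p : ℝ} (P : Par l d θ r p) (hdiag : ∀ e ∈ F, ¬ e.IsDiag)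
    (hL : ∀ e ∈ F, (L e).card = l) (hr : ∀ v c, ((NN F L v c).card : ℝ) ≤ r * l)
    (hD : ∀ v, (F.filter fun e => v ∈ e).card ≤ D)
    (hq : 4 * (((D : ℝ) + D * l * 2) * Real.exp (-(θ ^ 4 * l / 48))) * ((D : ℝ) + 1) ^ 3 ≤ 1) :
    ∃ ω, (∀ e ∈ F, l * (1 - 2 * θ * r - θ ^ 2) < ((L1 F L ω e).card : ℝ)) ∧
      ∀ v c, ((NN (F1 F L ω) (L1 F L ω) v c).card : ℝ) ≤
        l * (r * (1 - θ - θ * r) + 78 * θ ^ 2) := by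
  have hl : (1 : ℝ) ≤ l := by exact_mod_cast P.l1
  have hθ0 := P.θ0
  have hr0 := P.r0
  have hN : ∀ v c, (NN F L v c).card ≤ d := fun v c => by
    have := (hr v c).trans P.rd
    exact_mod_cast this
  have hb : 0 ≤ 1 - θ - θ * r := by nlinarith [P.θ1, P.r1]
  obtain ⟨ω, h1, h2⟩ := nibble (d := d) P.p0.le P.p1 l D hL hD (l * (1 - 2 * θ * r - θ ^ 2))
    (l * (r * (1 - θ - θ * r + 5 * θ ^ 2) + θ ^ 2)) (72 * θ ^ 2 * l) _
    (by positivity) (by positivity) (Real.exp_pos _).le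
    (fun e he => tail_L1 P hdiag hL hN he) (tail_Y1 P hdiag hL hN hr) (tail_Y2 P hL hN) hq
  refine ⟨ω, h1, fun v c => (h2 v c).le.trans ?_⟩
  have : r * θ ^ 2 ≤ θ ^ 2 := by nlinarith [P.r1, sq_nonneg θ]
  nlinarith

end Param

/-- Asymptotic list colourability at colour-degree to list-size ratio `r`. -/
def Good (r : ℝ) : Prop := ∀ A : ℕ, ∃ l0 : ℕ, ∀ l : ℕ, l0 ≤ l → ∀ (V C : Type) [Fintype V]
  [Fintype C] [Nonempty C] (F : Finset (Sym2 V)) (L : Sym2 V → Finset C),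
  (∀ e ∈ F, ¬ e.IsDiag) → (∀ e ∈ F, l ≤ (L e).card) →
  (∀ v, (F.filter fun e => v ∈ e).card ≤ A * l) →
  (∀ v c, ((NN F L v c).card : ℝ) ≤ r * l) → Col F L

theorem trim {V C : Type} [Fintype V] [Fintype C] (F : Finset (Sym2 V)) (L : Sym2 V → Finset C)
    (l : ℕ) (hL : ∀ e ∈ F, l ≤ (L e).card) :
    ∃ L' : Sym2 V → Finset C, (∀ e ∈ F, L' e ⊆ L e) ∧ (∀ e ∈ F, (L' e).card = l) ∧
      ∀ v c, (NN F L' v c).card ≤ (NN F L v c).card := by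
  have : ∀ e, ∃ s : Finset C, e ∈ F → s ⊆ L e ∧ s.card = l := by
    intro e
    by_cases he : e ∈ F
    · obtain ⟨s, h1, h2⟩ := Finset.exists_subset_card_eq (hL e he)
      exact ⟨s, fun _ => ⟨h1, h2⟩⟩
    · exact ⟨∅, fun h => absurd h he⟩
  choose L' hL' using this
  refine ⟨L', fun e he => (hL' e he).1, fun e he => (hL' e he).2, fun v c => ?_⟩
  refine Finset.card_le_card fun e he => ?_
  obtain ⟨h1, h2, h3⟩ := mem_NN.1 he
  exact mem_NN.2 ⟨h1, h2, (hL' e h1).1 h3⟩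

theorem good_base {r : ℝ} (hr : r ≤ 1 / 32) : Good r := by
  intro A
  refine ⟨2, fun l hl V C _ _ _ F L _ hL _ hN => ?_⟩
  obtain ⟨L', h1, h2, h3⟩ := trim F L l hL
  refine Col.mono h1 (finish F L' l (l / 32) hl (by omega) h2 fun v c => ?_)
  have : ((NN F L v c).card : ℝ) ≤ 1 / 32 * l :=
    (hN v c).trans (mul_le_mul_of_nonneg_right hr (Nat.cast_nonneg _))
  have h4 : 32 * (NN F L v c).card ≤ l := by
    have : (32 : ℝ) * ((NN F L v c).card : ℝ) ≤ l := by linarith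
    exact_mod_cast this
  have := h3 v c
  omega

theorem decay (A : ℕ) {κ : ℝ} (hκ : 0 < κ) : ∃ l0 : ℕ, ∀ l : ℕ, l0 ≤ l →
    4 * ((((A * l : ℕ) : ℝ) + ((A * l : ℕ) : ℝ) * l * 2) * Real.exp (-(κ * l))) *
      (((A * l : ℕ) : ℝ) + 1) ^ 3 ≤ 1 := by
  have h := (Real.tendsto_pow_mul_exp_neg_atTop_nhds_zero 5).comp
    ((tendsto_natCast_atTop_atTop (R := ℝ)).const_mul_atTop hκ)
  have hK : 0 < κ ^ 5 / (12 * (A + 1) * ((A : ℝ) + 1) ^ 3) := by positivity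
  have h2 := h.eventually_le_const hK
  obtain ⟨N, hN⟩ := Filter.eventually_atTop.1 h2
  refine ⟨max N 1, fun l hl => ?_⟩
  have hl1 : (1 : ℝ) ≤ l := by exact_mod_cast (le_max_right _ _).trans hl
  have h3 := hN l ((le_max_left _ _).trans hl)
  simp only [Function.comp] at h3
  rw [le_div_iff₀ (by positivity), mul_pow] at h3
  have h4 : (l : ℝ) ^ 5 * Real.exp (-(κ * l)) * (12 * (A + 1) * ((A : ℝ) + 1) ^ 3) ≤ 1 := by
    have : 0 < κ ^ 5 := by positivity
    refine le_of_mul_le_mul_left (a := κ ^ 5) ?_ this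
    linarith
  refine le_trans ?_ h4
  push_cast
  have hA : (0 : ℝ) ≤ A := Nat.cast_nonneg _
  have e1 : (A : ℝ) * l + 1 ≤ (A + 1) * l := by linarith
  have e2 : ((A : ℝ) * l + 1) ^ 3 ≤ ((A + 1) * l) ^ 3 := pow_le_pow_left₀ (by positivity) e1 3
  have e3 : (A : ℝ) * l + A * l * l * 2 ≤ 3 * (A + 1) * l ^ 2 := by
    have : (A : ℝ) * l ≤ A * l ^ 2 := mul_le_mul_of_nonneg_left (by nlinarith) hA
    nlinarith [sq_nonneg (l : ℝ)]
  calc 4 * (((A : ℝ) * l + A * l * l * 2) * Real.exp (-(κ * l))) * ((A : ℝ) * l + 1) ^ 3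
      ≤ 4 * ((3 * (A + 1) * l ^ 2) * Real.exp (-(κ * l))) * ((A + 1) * l) ^ 3 := by gcongr
    _ = _ := by ring

theorem good_step {r ε : ℝ} (hε : 0 < ε) (hε2 : ε ≤ 1 / 2) (hr0 : 1 / 32 ≤ r) (hr1 : r ≤ 1 - ε)
    (hg : Good (r - ε / 20000 * ε / 64)) : Good r := by
  intro A
  set θ : ℝ := ε / 20000 with hθ
  have hθ0 : 0 < θ := by positivity
  have hθ1 : θ ≤ 1 / 40000 := by rw [hθ]; linarith
  obtain ⟨l1, hl1⟩ := hg (2 * A)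
  obtain ⟨l2, hl2⟩ := decay A (κ := θ ^ 4 / 48) (by positivity)
  obtain ⟨l3, hl3⟩ := exists_nat_ge (4 / θ)
  refine ⟨max (max (2 * l1) l2) (max l3 1), fun l hl V C _ _ _ F L hdiag hL hD hN => ?_⟩
  simp only [max_le_iff] at hl
  obtain ⟨⟨a1, a2⟩, a3, a4⟩ := hl
  have hlr : (1 : ℝ) ≤ l := by exact_mod_cast a4
  have hθl : 4 ≤ θ * l := by
    have : (l3 : ℝ) ≤ l := by exact_mod_cast a3
    have h := hl3.trans this
    rw [div_le_iff₀ hθ0] at h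
    linarith
  obtain ⟨L', t1, t2, t3⟩ := trim F L l hL
  refine Col.mono t1 ?_
  have hN' : ∀ v c, ((NN F L' v c).card : ℝ) ≤ r * l := fun v c =>
    le_trans (by exact_mod_cast t3 v c) (hN v c)
  have hrl : 0 < r * l := by positivity
  have P : Par l ⌈r * l⌉₊ θ r (θ / l) :=
    { l1 := a4
      θ0 := hθ0
      θ1 := by linarith
      r0 := by linarith
      r1 := by linarith
      pl := by field_simp
      pθ := by
        rw [div_le_iff₀ (by linarith)]
        nlinarith
      p0 := by positivity
      p1 := by
        rw [div_le_iff₀ (by linarith)]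
        linarith
      rd := Nat.le_ceil _
      dr := (Nat.ceil_lt_add_one hrl.le).le
      dl := Nat.ceil_le.2 (by nlinarith)
      d1 := Nat.one_le_iff_ne_zero.2 (Nat.ceil_pos.2 hrl).ne' }
  obtain ⟨ω, w1, w2⟩ := nibble_step P hdiag t2 hN' hD (by
    have := hl2 l a2
    have e : θ ^ 4 / 48 * (l : ℝ) = θ ^ 4 * l / 48 := by ring
    rwa [e] at this)
  refine extend ω ?_
  set a : ℝ := 1 - 2 * θ * r - θ ^ 2 with ha
  have ha2 : 1 / 2 ≤ a := by
    have : θ * r ≤ θ := by nlinarith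
    have : θ ^ 2 ≤ θ := by nlinarith
    rw [ha]; linarith
  have hla : l * a ≤ (⌈l * a⌉₊ : ℝ) := Nat.le_ceil _
  have hhalf : l ≤ 2 * ⌈l * a⌉₊ := by
    have : (l : ℝ) ≤ 2 * (⌈l * a⌉₊ : ℝ) := by nlinarith
    exact_mod_cast this
  have hη : 0 ≤ r - θ * ε / 64 := by nlinarith
  refine hl1 ⌈l * a⌉₊ (by omega) V C _ _ (fun e he => hdiag e (Finset.mem_filter.1 he).1)
    (fun e he => Nat.ceil_le.2 (w1 e (Finset.mem_filter.1 he).1).le) (fun v => ?_) (fun v c => ?_)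
  · refine (Finset.card_le_card (Finset.filter_subset_filter _ (Finset.filter_subset _ F))).trans
      ((hD v).trans ?_)
    nlinarith
  · refine (w2 v c).trans (le_trans ?_ (mul_le_mul_of_nonneg_left hla hη))
    have : r * (1 - θ - θ * r) + 78 * θ ^ 2 ≤ (r - θ * ε / 64) * a := by
      have k1 : ε / 32 ≤ r * (1 - r) := by nlinarith
      have k2 := mul_le_mul_of_nonneg_left k1 hθ0.le
      have k3 : θ ^ 2 = θ * ε / 20000 := by rw [hθ]; ring
      have k4 : θ * ε / 64 * a ≤ θ * ε / 64 := by
        have : a ≤ 1 := by rw [ha]; nlinarith [sq_nonneg θ, mul_pos hθ0 (by linarith : 0 < r)]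
        have h5 : 0 ≤ θ * ε / 64 := by positivity
        nlinarith
      have k5 : r * θ ^ 2 ≤ θ ^ 2 := by nlinarith [sq_nonneg θ]
      have k6 : r * a = r - 2 * θ * r * r - r * θ ^ 2 := by rw [ha]; ring
      have k7 : 0 < θ * ε := by positivity
      rw [sub_mul, k6]
      nlinarith
    have := mul_le_mul_of_nonneg_left this (by linarith : (0 : ℝ) ≤ l)
    linarith

theorem good_all {r : ℝ} (hr : r < 1) : Good r := by
  obtain ⟨ε, hε, hε2, hεr⟩ : ∃ ε : ℝ, 0 < ε ∧ ε ≤ 1 / 2 ∧ r ≤ 1 - ε :=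
    ⟨min (1 - r) (1 / 2), lt_min (by linarith) (by norm_num), min_le_right _ _, by
      linarith [min_le_left (1 - r) (1 / 2)]⟩
  set η : ℝ := ε / 20000 * ε / 64 with hη
  have hη0 : 0 < η := by positivity
  have key : ∀ n : ℕ, ∀ s : ℝ, s ≤ 1 - ε → s ≤ 1 / 32 + n * η → Good s := by
    intro n
    induction n with
    | zero => intro s _ h; exact good_base (by simpa using h)
    | succ n ih =>
      intro s h1 h2
      by_cases hs : s ≤ 1 / 32
      · exact good_base hs
      · push Not at hs
        refine good_step hε hε2 hs.le h1 (ih _ (by rw [← hη]; linarith) ?_)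
        rw [← hη]
        push_cast at h2
        linarith
  obtain ⟨n, hn⟩ := exists_nat_ge (r / η)
  refine key n r hεr ?_
  rw [div_le_iff₀ hη0] at hn
  linarith

end KahnProof

theorem stmt_17 :
    ∀ ε : ℝ, 0 < ε →
    ∃ Δ₀ : ℕ, ∀ (V : Type) [Fintype V] [DecidableEq V]
      (G : SimpleGraph V) [DecidableRel G.Adj],
      Δ₀ ≤ G.maxDegree →
      (listChromIndex G : ℝ) ≤ (1 + ε) * (G.maxDegree : ℝ) := by
  intro ε hε
  obtain ⟨l0, hl0⟩ := KahnProof.good_all (r := 1 / (1 + ε / 2))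
    (by rw [div_lt_one (by linarith)]; linarith) 1
  obtain ⟨m, hm⟩ := exists_nat_ge (2 / ε)
  refine ⟨max l0 m, fun V _ _ G _ hΔ => ?_⟩
  set Δ := G.maxDegree with hΔdef
  have h1 : l0 ≤ Δ := (le_max_left _ _).trans hΔ
  have h2 : (2 : ℝ) ≤ ε * Δ := by
    have : (m : ℝ) ≤ Δ := by exact_mod_cast (le_max_right _ _).trans hΔ
    have h := hm.trans this
    rw [div_le_iff₀ hε] at h
    linarith
  have hΔ0 : (0 : ℝ) ≤ Δ := Nat.cast_nonneg _
  set k := ⌊(1 + ε) * (Δ : ℝ)⌋₊ with hk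
  have hk1 : (k : ℝ) ≤ (1 + ε) * Δ := Nat.floor_le (by positivity)
  have hk2 : (1 + ε / 2) * Δ ≤ k := by
    have := Nat.lt_floor_add_one ((1 + ε) * (Δ : ℝ))
    rw [← hk] at this
    linarith
  have hk3 : Δ ≤ k := by
    have : (Δ : ℝ) ≤ k := by nlinarith
    exact_mod_cast this
  refine le_trans ?_ hk1
  have : listChromIndex G ≤ k := by
    refine Nat.sInf_le ?_
    intro L hL
    classical
    let F : Finset (Sym2 V) := Finset.univ.filter fun e => e ∈ G.edgeSet
    have hF : ∀ e, e ∈ F ↔ e ∈ G.edgeSet := fun e => by simp [F]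
    let N : ℕ := (Finset.univ.biUnion L).sup id
    have hN : ∀ e, ∀ c ∈ L e, c < N + 1 := by
      intro e c hc
      have : id c ≤ N := Finset.le_sup (f := id) (Finset.mem_biUnion.2 ⟨e, Finset.mem_univ _, hc⟩)
      exact Nat.lt_succ_of_le this
    let L' : Sym2 V → Finset (Fin (N + 1)) := fun e => Finset.univ.filter fun c => (c : ℕ) ∈ L e
    have hdeg : ∀ v, (F.filter fun e => v ∈ e).card ≤ Δ := by
      intro v
      have : F.filter (fun e => v ∈ e) = G.incidenceFinset v := by
        ext e
        simp [F, SimpleGraph.mem_incidenceFinset, SimpleGraph.incidenceSet]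
      rw [this, SimpleGraph.card_incidenceFinset_eq_degree]
      exact G.degree_le_maxDegree v
    have hcol : KahnProof.Col F L' := by
      refine hl0 k (h1.trans hk3) V (Fin (N + 1)) F L' ?_ ?_ ?_ ?_
      · intro e he
        exact G.not_isDiag_of_mem_edgeSet ((hF e).1 he)
      · intro e he
        refine (hL e ((hF e).1 he)).trans ?_
        have : L e ⊆ (L' e).image Fin.val := by
          intro c hc
          exact Finset.mem_image.2 ⟨⟨c, hN e c hc⟩, by simpa [L'] using hc, rfl⟩
        exact (Finset.card_le_card this).trans Finset.card_image_le
      · intro v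
        rw [one_mul]
        refine le_trans (le_of_eq ?_) ((hdeg v).trans hk3)
        congr!
      · intro v c
        have a1 : (KahnProof.NN F L' v c).card ≤ Δ := by
          refine le_trans (Finset.card_le_card fun e he => ?_) (hdeg v)
          obtain ⟨b1, b2, b3⟩ := KahnProof.mem_NN.1 he
          exact Finset.mem_filter.2 ⟨b1, b2⟩
        have a2 : ((KahnProof.NN F L' v c).card : ℝ) ≤ Δ := by exact_mod_cast a1
        rw [one_div, inv_mul_eq_div, le_div_iff₀ (by linarith)]
        nlinarith
    obtain ⟨γ, g1, g2⟩ := hcol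
    refine ⟨fun e => (γ e : ℕ), fun e he => ?_, fun e he f hf hne hv heq => ?_⟩
    · have := g1 e ((hF e).2 he)
      simpa [L'] using this
    · exact g2 e ((hF e).2 he) f ((hF f).2 hf) hne hv (Fin.ext heq)
  exact_mod_cast this
end

section
/- If G is a finite bipartite simple graph and L is a list assignment of E(G) such that |L(e)| ≥ max{deg(u), deg(v)} for every edge e = uv, then there is an L-edge-colouring of G. -/
namespace BKW

open Classical in
/-- Row degree. -/
noncomputable def rdeg {α β : Type} (E : Finset (α × β)) (x : α) : ℕ :=
  (E.filter (fun f => f.1 = x)).card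

open Classical in
/-- Column degree. -/
noncomputable def cdeg {α β : Type} (E : Finset (α × β)) (y : β) : ℕ :=
  (E.filter (fun f => f.2 = y)).card

open Classical in
/-- Number of edges at `e.1` preferred to `e`. -/
noncomputable def rout {α β : Type} (E : Finset (α × β)) (p : α × β → ℕ) (e : α × β) : ℕ :=
  (E.filter (fun f => f.1 = e.1 ∧ p f < p e)).card

open Classical in
/-- Number of edges at `e.2` preferred to `e`. -/
noncomputable def cout {α β : Type} (E : Finset (α × β)) (q : α × β → ℕ) (e : α × β) : ℕ :=
  (E.filter (fun f => f.2 = e.2 ∧ q f < q e)).card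

/-- Strict preferences. -/
def Strict {α β : Type} (E : Finset (α × β)) (p q : α × β → ℕ) : Prop :=
  (∀ e ∈ E, ∀ f ∈ E, e.1 = f.1 → p e = p f → e = f) ∧
  (∀ e ∈ E, ∀ f ∈ E, e.2 = f.2 → q e = q f → e = f)

/-- Matchings. -/
def IsMat {α β : Type} (M : Finset (α × β)) : Prop :=
  (∀ e ∈ M, ∀ f ∈ M, e.1 = f.1 → e = f) ∧ (∀ e ∈ M, ∀ f ∈ M, e.2 = f.2 → e = f)

/-- Existence of good preferences. -/
def Good {α β : Type} (E : Finset (α × β)) : Prop :=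
  ∃ p q : α × β → ℕ, Strict E p q ∧
    ∀ e ∈ E, rout E p e + cout E q e < max (rdeg E e.1) (cdeg E e.2)

open Classical in
/-- Stable matchings exist. -/
theorem kernel {α β : Type} (p q : α × β → ℕ) (n : ℕ) : ∀ F : Finset (α × β), F.card = n →
    Strict F p q → ∃ K ⊆ F, IsMat K ∧ ∀ e ∈ F, e ∉ K →
      ∃ f ∈ K, (f.1 = e.1 ∧ p f < p e) ∨ (f.2 = e.2 ∧ q f < q e) := by
  induction n with
  | zero =>
    intro F hF _
    rw [Finset.card_eq_zero] at hF
    subst hF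
    exact ⟨∅, by simp, by simp [IsMat], by simp⟩
  | succ n ih =>
    intro F hF hs
    let K := F.filter (fun e => ∀ f ∈ F, f.1 = e.1 → p e ≤ p f)
    have hK1 : ∀ e ∈ K, ∀ f ∈ K, e.1 = f.1 → e = f := by
      intro e he f hf h
      simp only [K, Finset.mem_filter] at he hf
      exact hs.1 e he.1 f hf.1 h (le_antisymm (he.2 f hf.1 h.symm) (hf.2 e he.1 h))
    by_cases hc : ∀ e ∈ K, ∀ f ∈ K, e.2 = f.2 → e = f
    · refine ⟨K, Finset.filter_subset _ _, ⟨hK1, hc⟩, ?_⟩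
      intro e he heK
      obtain ⟨f, hf, hmin⟩ := Finset.exists_min_image (F.filter (fun f => f.1 = e.1)) p
        ⟨e, by simp [he]⟩
      simp only [Finset.mem_filter] at hf hmin
      have hfK : f ∈ K := by
        simp only [K, Finset.mem_filter]
        exact ⟨hf.1, fun g hg h => hmin g ⟨hg, h.trans hf.2⟩⟩
      refine ⟨f, hfK, Or.inl ⟨hf.2, lt_of_le_of_ne (hmin e ⟨he, rfl⟩) ?_⟩⟩
      intro h
      exact heK (hs.1 f hf.1 e he hf.2 h ▸ hfK)
    · have : ∃ e ∈ K, ∃ f ∈ K, e.2 = f.2 ∧ q e < q f := by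
        push Not at hc
        obtain ⟨e, he, f, hf, h, hne⟩ := hc
        have heF := (Finset.mem_filter.1 he).1
        have hfF := (Finset.mem_filter.1 hf).1
        rcases lt_trichotomy (q e) (q f) with h1 | h1 | h1
        · exact ⟨e, he, f, hf, h, h1⟩
        · exact absurd (hs.2 e heF f hfF h h1) hne
        · exact ⟨f, hf, e, he, h.symm, h1⟩
      obtain ⟨e₁, he₁, e₂, he₂, h12, hq⟩ := this
      have he₁F := (Finset.mem_filter.1 he₁).1
      have he₂F := (Finset.mem_filter.1 he₂).1
      have hsub := Finset.erase_subset e₂ F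
      obtain ⟨K', hK'F, hmat, hdom⟩ := ih (F.erase e₂)
        (by rw [Finset.card_erase_of_mem he₂F, hF]; rfl)
        ⟨fun e he f hf => hs.1 e (hsub he) f (hsub hf),
          fun e he f hf => hs.2 e (hsub he) f (hsub hf)⟩
      refine ⟨K', hK'F.trans hsub, hmat, ?_⟩
      intro e he heK
      by_cases hee : e = e₂
      · subst hee
        by_cases h1 : e₁ ∈ K'
        · exact ⟨e₁, h1, Or.inr ⟨h12, hq⟩⟩
        · have hne : e₁ ≠ e := by rintro rfl; exact lt_irrefl _ hq
          obtain ⟨f, hf, h | h⟩ := hdom e₁ (Finset.mem_erase.2 ⟨hne, he₁F⟩) h1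
          · have := (Finset.mem_filter.1 he₁).2 f (hsub (hK'F hf)) h.1
            omega
          · exact ⟨f, hf, Or.inr ⟨h.1.trans h12, h.2.trans hq⟩⟩
      · exact hdom e (Finset.mem_erase.2 ⟨hee, he⟩) heK

open Classical in
theorem galvin {α β : Type} (p q : α × β → ℕ) (n : ℕ) : ∀ (E : Finset (α × β))
    (L : α × β → Finset ℕ), E.card = n → Strict E p q →
    (∀ e ∈ E, rout E p e + cout E q e < (L e).card) →
    ∃ g : α × β → ℕ, (∀ e ∈ E, g e ∈ L e) ∧
      ∀ e ∈ E, ∀ f ∈ E, e ≠ f → (e.1 = f.1 ∨ e.2 = f.2) → g e ≠ g f := by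
  induction n using Nat.strong_induction_on with
  | _ n ih =>
    intro E L hE hs hL
    rcases E.eq_empty_or_nonempty with rfl | ⟨e₀, he₀⟩
    · exact ⟨fun _ => 0, by simp, by simp⟩
    obtain ⟨c, hc⟩ : (L e₀).Nonempty := Finset.card_pos.1 (by have := hL e₀ he₀; omega)
    let F := E.filter (fun e => c ∈ L e)
    have hFE : F ⊆ E := Finset.filter_subset _ _
    obtain ⟨K, hKF, hmat, hdom⟩ := kernel p q F.card F rfl
      ⟨fun e he f hf => hs.1 e (hFE he) f (hFE hf), fun e he f hf => hs.2 e (hFE he) f (hFE hf)⟩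
    have hKE := hKF.trans hFE
    have he₀F : e₀ ∈ F := Finset.mem_filter.2 ⟨he₀, hc⟩
    have hKne : K.Nonempty := by
      by_cases h : e₀ ∈ K
      · exact ⟨_, h⟩
      · obtain ⟨f, hf, _⟩ := hdom e₀ he₀F h
        exact ⟨f, hf⟩
    have hsub : E \ K ⊆ E := Finset.sdiff_subset
    have hrm : ∀ e, rout (E \ K) p e ≤ rout E p e := fun e =>
      Finset.card_le_card (Finset.filter_subset_filter _ hsub)
    have hcm : ∀ e, cout (E \ K) q e ≤ cout E q e := fun e =>
      Finset.card_le_card (Finset.filter_subset_filter _ hsub)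
    obtain ⟨g, hg1, hg2⟩ := ih (E \ K).card
      (by
        rw [← hE]
        exact Finset.card_lt_card (Finset.sdiff_ssubset hKE hKne))
      (E \ K) (fun e => (L e).erase c) rfl
      ⟨fun e he f hf => hs.1 e (hsub he) f (hsub hf), fun e he f hf => hs.2 e (hsub he) f (hsub hf)⟩
      (by
        intro e he
        have heE := hsub he
        have heK := (Finset.mem_sdiff.1 he).2
        have h0 := hL e heE
        have h1 := hrm e
        have h2 := hcm e
        by_cases hce : c ∈ L e
        · rw [Finset.card_erase_of_mem hce]
          obtain ⟨f, hf, h | h⟩ := hdom e (Finset.mem_filter.2 ⟨heE, hce⟩) heK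
          · have : rout (E \ K) p e < rout E p e := by
              apply Finset.card_lt_card
              rw [Finset.ssubset_iff_of_subset (Finset.filter_subset_filter _ hsub)]
              exact ⟨f, Finset.mem_filter.2 ⟨hKE hf, h⟩, by simp [hf]⟩
            omega
          · have : cout (E \ K) q e < cout E q e := by
              apply Finset.card_lt_card
              rw [Finset.ssubset_iff_of_subset (Finset.filter_subset_filter _ hsub)]
              exact ⟨f, Finset.mem_filter.2 ⟨hKE hf, h⟩, by simp [hf]⟩
            omega
        · rw [Finset.erase_eq_of_notMem hce]
          omega)
    refine ⟨fun e => if e ∈ K then c else g e, ?_, ?_⟩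
    · intro e he
      by_cases h : e ∈ K
      · simpa [h] using (Finset.mem_filter.1 (hKF h)).2
      · simpa [h] using Finset.mem_of_mem_erase (hg1 e (Finset.mem_sdiff.2 ⟨he, h⟩))
    · intro e he f hf hne hadj
      have key : ∀ e ∈ E, e ∉ K → g e ≠ c := fun e he h =>
        Finset.ne_of_mem_erase (hg1 e (Finset.mem_sdiff.2 ⟨he, h⟩))
      by_cases h : e ∈ K <;> by_cases h' : f ∈ K
      · rcases hadj with h3 | h3
        · exact absurd (hmat.1 e h f h' h3) hne
        · exact absurd (hmat.2 e h f h' h3) hne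
      · simpa [h, h'] using (key f hf h').symm
      · simpa [h, h'] using key e he h
      · simpa [h, h'] using hg2 e (Finset.mem_sdiff.2 ⟨he, h⟩) f (Finset.mem_sdiff.2 ⟨hf, h'⟩)
          hne hadj

open Classical in
theorem extend {α β : Type} (E M : Finset (α × β)) (hME : M ⊆ E) (hmat : IsMat M)
    (hcov : ∀ e ∈ E, (∃ m ∈ M, m.2 = e.2) → cdeg E e.2 ≤ rdeg E e.1 → ∃ m ∈ M, m.1 = e.1)
    (hg : Good (E \ M)) : Good E := by
  obtain ⟨p, q, hs, ho⟩ := hg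
  let B := E.sup p + 1
  have hB : ∀ e ∈ E, p e < B := fun e he => Nat.lt_succ_of_le (Finset.le_sup he)
  have hr1 : ∀ x, (∃ m ∈ M, m.1 = x) → rdeg (E \ M) x + 1 ≤ rdeg E x := by
    rintro x ⟨m, hm, rfl⟩
    apply Finset.card_lt_card
    rw [Finset.ssubset_iff_of_subset (Finset.filter_subset_filter _ Finset.sdiff_subset)]
    exact ⟨m, by simp [hME hm], by simp [hm]⟩
  have hc1 : ∀ x, (∃ m ∈ M, m.2 = x) → cdeg (E \ M) x + 1 ≤ cdeg E x := by
    rintro x ⟨m, hm, rfl⟩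
    apply Finset.card_lt_card
    rw [Finset.ssubset_iff_of_subset (Finset.filter_subset_filter _ Finset.sdiff_subset)]
    exact ⟨m, by simp [hME hm], by simp [hm]⟩
  have hr0 : ∀ x, rdeg (E \ M) x ≤ rdeg E x := fun x =>
    Finset.card_le_card (Finset.filter_subset_filter _ Finset.sdiff_subset)
  have hr2 : ∀ x, (¬ ∃ m ∈ M, m.1 = x) → rdeg E x ≤ rdeg (E \ M) x := by
    intro x h
    apply Finset.card_le_card
    intro f hf
    simp only [Finset.mem_filter, Finset.mem_sdiff] at hf ⊢
    exact ⟨⟨hf.1, fun h' => h ⟨f, h', hf.2⟩⟩, hf.2⟩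
  have hc0 : ∀ x, cdeg (E \ M) x ≤ cdeg E x := fun x =>
    Finset.card_le_card (Finset.filter_subset_filter _ Finset.sdiff_subset)
  refine ⟨fun e => if e ∈ M then B else p e, fun e => if e ∈ M then 0 else q e + 1,
    ⟨?_, ?_⟩, ?_⟩
  · intro e he f hf h h'
    by_cases h1 : e ∈ M <;> by_cases h2 : f ∈ M <;> simp only [h1, h2, if_true, if_false] at h'
    · exact hmat.1 e h1 f h2 h
    · have := hB f hf; omega
    · have := hB e he; omega
    · exact hs.1 e (Finset.mem_sdiff.2 ⟨he, h1⟩) f (Finset.mem_sdiff.2 ⟨hf, h2⟩) h h'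
  · intro e he f hf h h'
    by_cases h1 : e ∈ M <;> by_cases h2 : f ∈ M <;> simp only [h1, h2, if_true, if_false] at h'
    · exact hmat.2 e h1 f h2 h
    · omega
    · omega
    · exact hs.2 e (Finset.mem_sdiff.2 ⟨he, h1⟩) f (Finset.mem_sdiff.2 ⟨hf, h2⟩) h (by omega)
  · intro e he
    by_cases h1 : e ∈ M
    · have hc : cout E (fun e => if e ∈ M then 0 else q e + 1) e = 0 := by
        unfold cout
        rw [Finset.card_eq_zero, Finset.filter_eq_empty_iff]
        simp [h1]
      have hr : rout E (fun e => if e ∈ M then B else p e) e < rdeg E e.1 := by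
        apply Finset.card_lt_card
        rw [Finset.ssubset_iff_of_subset]
        · exact ⟨e, by simp [he], by simp⟩
        · intro f hf
          simp only [Finset.mem_filter] at hf ⊢
          exact ⟨hf.1, hf.2.1⟩
      rw [hc]
      exact lt_of_lt_of_le hr (le_max_left _ _)
    · have heM := Finset.mem_sdiff.2 ⟨he, h1⟩
      have hr : rout E (fun e => if e ∈ M then B else p e) e ≤ rout (E \ M) p e := by
        apply Finset.card_le_card
        intro f hf
        simp only [Finset.mem_filter, Finset.mem_sdiff, h1, if_false] at hf ⊢
        have := hB e he
        by_cases h2 : f ∈ M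
        · simp only [h2, if_true] at hf
          omega
        · simp only [h2, if_false] at hf
          exact ⟨⟨hf.1, h2⟩, hf.2⟩
      have h0 := ho e heM
      by_cases hy : ∃ m ∈ M, m.2 = e.2
      · have hc : cout E (fun e => if e ∈ M then 0 else q e + 1) e ≤ cout (E \ M) q e + 1 := by
          obtain ⟨m, hm, hme⟩ := hy
          unfold cout
          refine le_trans (Finset.card_le_card ?_) (Finset.card_insert_le m _)
          intro f hf
          simp only [Finset.mem_filter, Finset.mem_sdiff, h1, if_false, Finset.mem_insert] at hf ⊢
          by_cases h2 : f ∈ M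
          · left
            exact hmat.2 f h2 m hm (hf.2.1.trans hme.symm)
          · right
            simp only [h2, if_false] at hf
            exact ⟨⟨hf.1, h2⟩, hf.2.1, by omega⟩
        have hcc := hc1 _ hy
        by_cases hx : ∃ m ∈ M, m.1 = e.1
        · have := hr1 _ hx
          omega
        · have h5 : ¬ cdeg E e.2 ≤ rdeg E e.1 := fun h => hx (hcov e he hy h)
          have := hr2 _ hx
          have := hr0 e.1
          omega
      · have hc : cout E (fun e => if e ∈ M then 0 else q e + 1) e ≤ cout (E \ M) q e := by
          apply Finset.card_le_card
          intro f hf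
          simp only [Finset.mem_filter, Finset.mem_sdiff, h1, if_false] at hf ⊢
          have h2 : f ∉ M := fun h2 => hy ⟨f, h2, hf.2.1⟩
          simp only [h2, if_false] at hf
          exact ⟨⟨hf.1, h2⟩, hf.2.1, by omega⟩
        have := hr0 e.1
        have := hc0 e.2
        omega

open Classical in
theorem exists_mat {α β : Type} (E : Finset (α × β)) (hE : E.Nonempty)
    (hXY : (E.image Prod.fst).card ≤ (E.image Prod.snd).card) :
    ∃ M ⊆ E, M.Nonempty ∧ IsMat M ∧
    (∀ e ∈ E, (∃ m ∈ M, m.2 = e.2) → cdeg E e.2 ≤ rdeg E e.1 → ∃ m ∈ M, m.1 = e.1) := by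
  let N : β → Finset α := fun y =>
    (E.filter (fun f => f.2 = y ∧ cdeg E y ≤ rdeg E f.1)).image Prod.fst
  have hN : ∀ x y, x ∈ N y ↔ (x, y) ∈ E ∧ cdeg E y ≤ rdeg E x := by
    intro x y
    simp only [N, Finset.mem_image, Finset.mem_filter]
    constructor
    · rintro ⟨⟨a, b⟩, ⟨h, rfl, h'⟩, rfl⟩
      exact ⟨h, h'⟩
    · rintro ⟨h, h'⟩
      exact ⟨(x, y), ⟨h, rfl, h'⟩, rfl⟩
  by_cases hemp : ∃ y ∈ E.image Prod.snd, N y = ∅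
  · obtain ⟨y, hy, hNy⟩ := hemp
    obtain ⟨m, hm, rfl⟩ := Finset.mem_image.1 hy
    refine ⟨{m}, by simpa using hm, by simp, by simp [IsMat], ?_⟩
    rintro ⟨a, b⟩ he ⟨m', hm', h⟩ hd
    rw [Finset.mem_singleton] at hm'
    subst hm'
    simp only at h hd
    subst h
    have : a ∈ N m'.2 := (hN _ _).2 ⟨he, hd⟩
    rw [hNy] at this
    simp at this
  push Not at hemp
  obtain ⟨T, hT, hmin⟩ := Finset.exists_min_image
    ((E.image Prod.snd).powerset.filter (fun T => T.Nonempty ∧ (T.biUnion N).card ≤ T.card))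
    Finset.card ⟨E.image Prod.snd, by
      simp only [Finset.mem_filter, Finset.mem_powerset, Finset.Subset.refl, true_and]
      refine ⟨hE.image _, le_trans (Finset.card_le_card ?_) hXY⟩
      intro x hx
      obtain ⟨y, _, hy⟩ := Finset.mem_biUnion.1 hx
      exact Finset.mem_image.2 ⟨(x, y), ((hN _ _).1 hy).1, rfl⟩⟩
  simp only [Finset.mem_filter, Finset.mem_powerset] at hT hmin
  obtain ⟨hTs, hTne, hTc⟩ := hT
  have hlt : ∀ S ⊆ T, S.Nonempty → S.card < T.card → S.card < (S.biUnion N).card := by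
    intro S hS hSne hSc
    by_contra h
    have := hmin S ⟨hS.trans hTs, hSne, not_lt.1 h⟩
    omega
  have hTge : T.card ≤ (T.biUnion N).card := by
    by_contra h
    obtain ⟨y, hy⟩ := hTne
    have hce := Finset.card_erase_add_one hy
    rcases (T.erase y).eq_empty_or_nonempty with h0 | h0
    · rw [h0] at hce
      have h1 : (T.biUnion N).card = 0 := by simp at hce; omega
      have h2 : N y ⊆ T.biUnion N := Finset.subset_biUnion_of_mem N hy
      rw [Finset.card_eq_zero.1 h1] at h2
      exact (hemp y (hTs hy)).ne_empty (Finset.subset_empty.1 h2)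
    · have h1 := hlt (T.erase y) (Finset.erase_subset _ _) h0 (by omega)
      have h2 := Finset.card_le_card
        (Finset.biUnion_subset_biUnion_of_subset_left N (Finset.erase_subset y T))
      omega
  obtain ⟨φ, hφi, hφ⟩ := (Finset.all_card_le_biUnion_card_iff_exists_injective
    (fun y : T => N y.1)).1 (by
      intro s
      have h1 : (s.map (Function.Embedding.subtype _)).card = s.card := Finset.card_map _
      have h2 : (s.map (Function.Embedding.subtype _)).biUnion N = s.biUnion (fun y : T => N y.1) := by
        ext x; simp
      have h3 : s.map (Function.Embedding.subtype _) ⊆ T := by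
        intro x hx
        obtain ⟨y, _, rfl⟩ := Finset.mem_map.1 hx
        exact y.2
      rw [← h1, ← h2]
      generalize s.map (Function.Embedding.subtype _) = S at *
      rcases S.eq_empty_or_nonempty with rfl | hS
      · simp
      rcases (Finset.card_le_card h3).lt_or_eq with h | h
      · exact (hlt S h3 hS h).le
      · rw [Finset.eq_of_subset_of_card_le h3 h.ge]
        exact hTge)
  have himg : (Finset.univ.image φ) = T.biUnion N := by
    apply Finset.eq_of_subset_of_card_le
    · intro x hx
      obtain ⟨y, _, rfl⟩ := Finset.mem_image.1 hx
      exact Finset.mem_biUnion.2 ⟨y.1, y.2, hφ y⟩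
    · rw [Finset.card_image_of_injective _ hφi]
      simpa using hTc
  refine ⟨Finset.univ.image (fun y : T => (φ y, y.1)), ?_, ?_, ⟨?_, ?_⟩, ?_⟩
  · intro e he
    obtain ⟨y, _, rfl⟩ := Finset.mem_image.1 he
    exact ((hN _ _).1 (hφ y)).1
  · obtain ⟨y, hy⟩ := hTne
    exact ⟨_, Finset.mem_image.2 ⟨⟨y, hy⟩, Finset.mem_univ _, rfl⟩⟩
  · intro e he f hf h
    obtain ⟨y, _, rfl⟩ := Finset.mem_image.1 he
    obtain ⟨z, _, rfl⟩ := Finset.mem_image.1 hf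
    rw [hφi h]
  · intro e he f hf h
    obtain ⟨y, _, rfl⟩ := Finset.mem_image.1 he
    obtain ⟨z, _, rfl⟩ := Finset.mem_image.1 hf
    rw [Subtype.ext h]
  · rintro ⟨a, b⟩ he ⟨m, hm, h⟩ hd
    obtain ⟨y, _, rfl⟩ := Finset.mem_image.1 hm
    simp only at h hd
    subst h
    have ha : a ∈ Finset.univ.image φ := by
      rw [himg]
      exact Finset.mem_biUnion.2 ⟨y.1, y.2, (hN _ _).2 ⟨he, hd⟩⟩
    obtain ⟨z, _, rfl⟩ := Finset.mem_image.1 ha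
    exact ⟨_, Finset.mem_image.2 ⟨z, Finset.mem_univ _, rfl⟩, rfl⟩

/-- Swap sides. -/
def sw {α β : Type} (E : Finset (α × β)) : Finset (β × α) :=
  E.map (Equiv.prodComm α β).toEmbedding

theorem mem_sw {α β : Type} (E : Finset (α × β)) (e : β × α) : e ∈ sw E ↔ e.swap ∈ E := by
  simp [sw]

theorem card_sw {α β : Type} (E : Finset (α × β)) (P : β × α → Prop) (Q : α × β → Prop)
    [DecidablePred P] [DecidablePred Q]
    (h : ∀ e, Q e ↔ P e.swap) : ((sw E).filter P).card = (E.filter Q).card := by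
  unfold sw
  rw [Finset.filter_map, Finset.card_map]
  congr 1
  ext e
  rw [Finset.mem_filter, Finset.mem_filter, h]
  rfl

open Classical in
theorem good_sw {α β : Type} (E : Finset (α × β)) (h : Good (sw E)) : Good E := by
  obtain ⟨p, q, hs, ho⟩ := h
  refine ⟨fun e => q e.swap, fun e => p e.swap, ⟨?_, ?_⟩, ?_⟩
  · intro e he f hf h h'
    exact Prod.swap_injective (hs.2 e.swap (by simpa [mem_sw]) f.swap (by simpa [mem_sw]) h h')
  · intro e he f hf h h'
    exact Prod.swap_injective (hs.1 e.swap (by simpa [mem_sw]) f.swap (by simpa [mem_sw]) h h')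
  · intro e he
    have := ho e.swap (by simpa [mem_sw])
    unfold rout cout rdeg cdeg at this ⊢
    rw [card_sw E (fun f => f.1 = e.swap.1 ∧ p f < p e.swap)
        (fun f => f.2 = e.2 ∧ p f.swap < p e.swap) (fun _ => Iff.rfl),
      card_sw E (fun f => f.2 = e.swap.2 ∧ q f < q e.swap)
        (fun f => f.1 = e.1 ∧ q f.swap < q e.swap) (fun _ => Iff.rfl),
      card_sw E (fun f => f.1 = e.swap.1) (fun f => f.2 = e.2) (fun _ => Iff.rfl),
      card_sw E (fun f => f.2 = e.swap.2) (fun f => f.1 = e.1) (fun _ => Iff.rfl)] at this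
    rw [add_comm, max_comm]
    exact this

open Classical in
theorem good_all (n : ℕ) : ∀ (α β : Type) (E : Finset (α × β)), E.card = n → Good E := by
  induction n using Nat.strong_induction_on with
  | _ n ih =>
    have main : ∀ (α β : Type) (E : Finset (α × β)), E.card = n →
        (E.image Prod.fst).card ≤ (E.image Prod.snd).card → Good E := by
      intro α β E hE hXY
      rcases E.eq_empty_or_nonempty with rfl | hne
      · exact ⟨fun _ => 0, fun _ => 0, by simp [Strict], by simp⟩
      obtain ⟨M, hM, hMne, hmat, hcov⟩ := exists_mat E hne hXY
      refine extend E M hM hmat hcov (ih _ ?_ α β (E \ M) rfl)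
      rw [← hE]
      exact Finset.card_lt_card (Finset.sdiff_ssubset hM hMne)
    intro α β E hE
    rcases le_total (E.image Prod.fst).card (E.image Prod.snd).card with h | h
    · exact main α β E hE h
    · apply good_sw
      apply main _ _ _ (by simpa [sw] using hE)
      have h1 : (sw E).image Prod.fst = E.image Prod.snd := by
        ext x; simp [mem_sw]
      have h2 : (sw E).image Prod.snd = E.image Prod.fst := by
        ext x; simp [mem_sw]
      rw [h1, h2]
      exact h

end BKW

theorem stmt_18 :
    ∀ (V : Type) [Fintype V] [DecidableEq V]
      (G : SimpleGraph V) [DecidableRel G.Adj] (L : Sym2 V → Finset ℕ),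
      -- G is bipartite
      G.Colorable 2 →
      (∀ u v : V, G.Adj u v →
        max (G.degree u) (G.degree v) ≤ (L s(u, v)).card) →
      ∃ γ : Sym2 V → ℕ, IsLEdgeColouring G L γ := by
  classical
  intro V _ _ G _ L hcol hL
  obtain ⟨c⟩ := hcol
  let E : Finset (V × V) := Finset.univ.filter (fun e => G.Adj e.1 e.2 ∧ c e.1 = 0 ∧ c e.2 = 1)
  have hE : ∀ e, e ∈ E ↔ G.Adj e.1 e.2 ∧ c e.1 = 0 ∧ c e.2 = 1 := by
    intro e; simp [E]
  obtain ⟨p, q, hs, ho⟩ := BKW.good_all E.card V V E rfl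
  have hrd : ∀ x, BKW.rdeg E x ≤ G.degree x := by
    intro x
    rw [← SimpleGraph.card_neighborFinset_eq_degree]
    apply Finset.card_le_card_of_injOn Prod.snd
    · intro e he
      simp only [Finset.coe_filter, hE, Set.mem_ofPred_eq] at he
      simp [← he.2, he.1.1]
    · intro e he f hf h
      simp only [Finset.coe_filter, Set.mem_ofPred_eq] at he hf
      exact Prod.ext (he.2.trans hf.2.symm) h
  have hcd : ∀ x, BKW.cdeg E x ≤ G.degree x := by
    intro x
    rw [← SimpleGraph.card_neighborFinset_eq_degree]
    apply Finset.card_le_card_of_injOn Prod.fst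
    · intro e he
      simp only [Finset.coe_filter, hE, Set.mem_ofPred_eq] at he
      simp [← he.2, he.1.1.symm]
    · intro e he f hf h
      simp only [Finset.coe_filter, Set.mem_ofPred_eq] at he hf
      exact Prod.ext h (he.2.trans hf.2.symm)
  obtain ⟨g, hg1, hg2⟩ := BKW.galvin p q E.card E (fun e => L s(e.1, e.2)) rfl hs (by
    intro e he
    have h1 := ho e he
    have h2 := hL e.1 e.2 ((hE e).1 he).1
    have h3 := hrd e.1
    have h4 := hcd e.2
    omega)
  have hrep : ∀ e ∈ G.edgeSet, ∃ f ∈ E, s(f.1, f.2) = e := by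
    intro e
    induction e with
    | _ u v =>
      intro h
      rw [SimpleGraph.mem_edgeSet] at h
      have hne := c.valid h
      by_cases hu : c u = 0
      · exact ⟨(u, v), (hE _).2 ⟨h, hu, by simp only; omega⟩, rfl⟩
      · exact ⟨(v, u), (hE _).2 ⟨h.symm, by simp only; omega, by simp only; omega⟩, Sym2.eq_swap⟩
  have hrep' : ∃ γ : Sym2 V → ℕ, ∀ e ∈ G.edgeSet, ∃ f ∈ E, s(f.1, f.2) = e ∧ γ e = g f := by
    choose r hrE hr using hrep
    refine ⟨fun e => if h : e ∈ G.edgeSet then g (r e h) else 0, fun e he => ?_⟩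
    exact ⟨r e he, hrE e he, hr e he, by simp [he]⟩
  obtain ⟨γ, hγ⟩ := hrep'
  refine ⟨γ, ?_, ?_⟩
  · intro e he
    obtain ⟨e', he', rfl, h⟩ := hγ e he
    rw [h]
    exact hg1 _ he'
  · rintro e he f hf hne ⟨v, hve, hvf⟩
    obtain ⟨e', he', rfl, h⟩ := hγ e he
    obtain ⟨f', hf', rfl, h'⟩ := hγ f hf
    rw [h, h']
    apply hg2 _ he' _ hf'
    · rintro rfl
      exact hne rfl
    · have h1 := (hE _).1 he'
      have h2 := (hE _).1 hf'
      rw [Sym2.mem_iff] at hve hvf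
      rcases hve with h3 | h3 <;> rcases hvf with h4 | h4
      · exact Or.inl (h3.symm.trans h4)
      · have h5 := h1.2.1
        rw [← h3, h4, h2.2.2] at h5
        exact absurd h5 (by decide)
      · have h5 := h1.2.2
        rw [← h3, h4, h2.2.1] at h5
        exact absurd h5 (by decide)
      · exact Or.inr (h3.symm.trans h4)
end

section
/- If G is a finite simple graph and L is a list assignment of E(G) such that |L(e)| ≥ max{deg(u), deg(v)} + ⌊min{deg(u), deg(v)}/2⌋ for every edge e = uv, then G is L-edge-colourable. -/
open Classical in
/-- Edges of `E` dominating `e`. -/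
noncomputable def DomSet {α β : Type} (c : α × β → ℤ) (E : Finset (α × β)) (e : α × β) :
    Finset (α × β) :=
  E.filter (fun f => (f.1 = e.1 ∧ c e < c f) ∨ (f.2 = e.2 ∧ c f < c e))

/-- Properness of a ranking. -/
def PropC {α β γ : Type} (c : α × β → γ) (E : Finset (α × β)) : Prop :=
  ∀ e ∈ E, ∀ f ∈ E, e ≠ f → (e.1 = f.1 ∨ e.2 = f.2) → c e ≠ c f

open Classical in
/-- left degree -/
noncomputable def dl {α β : Type} (E : Finset (α × β)) (u : α) : ℕ := (E.filter (fun f => f.1 = u)).card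

open Classical in
/-- right degree -/
noncomputable def dr {α β : Type} (E : Finset (α × β)) (u : β) : ℕ := (E.filter (fun f => f.2 = u)).card

/-- matching -/
def IsMat {α β : Type} (K : Finset (α × β)) : Prop :=
  ∀ e ∈ K, ∀ f ∈ K, (e.1 = f.1 ∨ e.2 = f.2) → e = f

open Classical in
theorem kernel_exists {α β : Type} (c : α × β → ℤ) : ∀ (n : ℕ) (E : Finset (α × β)), E.card = n →
    PropC c E → ∃ K ⊆ E, IsMat K ∧ ∀ e ∈ E, e ∉ K → ∃ f ∈ K, f ∈ DomSet c E e := by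
  intro n
  induction n with
  | zero =>
    intro E hE _
    rw [Finset.card_eq_zero] at hE
    subst hE
    exact ⟨∅, by simp, by simp [IsMat], by simp⟩
  | succ n ih =>
    intro E hE hc
    let Fv : Finset (α × β) := E.filter (fun e => ∀ f ∈ E, f.1 = e.1 → c f ≤ c e)
    by_cases hm : IsMat Fv
    · refine ⟨Fv, Finset.filter_subset _ _, hm, ?_⟩
      intro e he heF
      have hne : (E.filter (fun f => f.1 = e.1)).Nonempty := ⟨e, by simp [he]⟩
      obtain ⟨f, hf, hmax⟩ := Finset.exists_max_image _ c hne
      simp only [Finset.mem_filter] at hf hmax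
      refine ⟨f, ?_, ?_⟩
      · simp only [Fv, Finset.mem_filter]
        exact ⟨hf.1, fun g hg hgf => hmax g ⟨hg, hgf.trans hf.2⟩⟩
      · simp only [DomSet, Finset.mem_filter]
        refine ⟨hf.1, Or.inl ⟨hf.2, ?_⟩⟩
        by_contra hlt
        apply heF
        simp only [Fv, Finset.mem_filter]
        exact ⟨he, fun g hg hgf => (hmax g ⟨hg, hgf⟩).trans (not_lt.mp hlt)⟩
    · have : ∃ e₁ ∈ Fv, ∃ e₂ ∈ Fv, e₁.2 = e₂.2 ∧ c e₁ < c e₂ := by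
        simp only [IsMat] at hm
        push Not at hm
        obtain ⟨e, he, f, hf, h1, hne⟩ := hm
        have he' := he
        have hf' := hf
        simp only [Fv, Finset.mem_filter] at he' hf'
        have hcc := hc e he'.1 f hf'.1 hne h1
        have h2 : e.2 = f.2 := by
          rcases h1 with h1 | h1
          · exact absurd (le_antisymm (hf'.2 e he'.1 h1) (he'.2 f hf'.1 h1.symm)) hcc
          · exact h1
        rcases lt_or_gt_of_ne hcc with h | h
        · exact ⟨e, he, f, hf, h2, h⟩
        · exact ⟨f, hf, e, he, h2.symm, h⟩
      obtain ⟨e₁, h1, e₂, h2, h12, hlt⟩ := this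
      simp only [Fv, Finset.mem_filter] at h1 h2
      obtain ⟨K, hK, hKm, hKd⟩ := ih (E.erase e₂) (by rw [Finset.card_erase_of_mem h2.1, hE]; rfl)
        (fun e he f hf => hc e (Finset.mem_of_mem_erase he) f (Finset.mem_of_mem_erase hf))
      refine ⟨K, hK.trans (Finset.erase_subset _ _), hKm, ?_⟩
      intro e he heK
      by_cases hee : e = e₂
      · subst hee
        by_cases h1K : e₁ ∈ K
        · refine ⟨e₁, h1K, ?_⟩
          simp only [DomSet, Finset.mem_filter]
          exact ⟨h1.1, Or.inr ⟨h12, hlt⟩⟩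
        · obtain ⟨f, hfK, hf⟩ := hKd e₁ (Finset.mem_erase.mpr ⟨by rintro rfl; exact lt_irrefl _ hlt, h1.1⟩) h1K
          refine ⟨f, hfK, ?_⟩
          simp only [DomSet, Finset.mem_filter, Finset.mem_erase] at hf ⊢
          refine ⟨hf.1.2, Or.inr ?_⟩
          rcases hf.2 with h | h
          · exact absurd (h1.2 f hf.1.2 h.1) (not_le.mpr h.2)
          · exact ⟨h.1.trans h12, h.2.trans hlt⟩
      · obtain ⟨f, hfK, hf⟩ := hKd e (Finset.mem_erase.mpr ⟨hee, he⟩) heK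
        refine ⟨f, hfK, ?_⟩
        simp only [DomSet, Finset.mem_filter, Finset.mem_erase] at hf ⊢
        exact ⟨hf.1.2, hf.2⟩

open Classical in
theorem galvin {α β : Type} (c : α × β → ℤ) : ∀ (n : ℕ) (E : Finset (α × β)) (L : α × β → Finset ℕ),
    E.card = n → PropC c E → (∀ e ∈ E, (DomSet c E e).card < (L e).card) →
    ∃ γ : α × β → ℕ, (∀ e ∈ E, γ e ∈ L e) ∧ PropC γ E := by
  intro n
  induction n using Nat.strong_induction_on with
  | _ n ih =>
  intro E L hE hc hL
  by_cases hne : E = ∅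
  · subst hne
    exact ⟨fun _ => 0, by simp, by simp [PropC]⟩
  obtain ⟨e₀, he₀⟩ := Finset.nonempty_iff_ne_empty.mpr hne
  obtain ⟨k, hk⟩ := Finset.card_pos.mp ((Nat.zero_le _).trans_lt (hL e₀ he₀))
  let Ek := E.filter (fun e => k ∈ L e)
  have hEk : Ek ⊆ E := Finset.filter_subset _ _
  obtain ⟨K, hK, hKm, hKd⟩ := kernel_exists c _ Ek rfl (fun e he f hf => hc e (hEk he) f (hEk hf))
  have hKne : K.Nonempty := by
    by_cases h : e₀ ∈ K
    · exact ⟨_, h⟩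
    · obtain ⟨f, hf, _⟩ := hKd e₀ (by simp [Ek, he₀, hk]) h
      exact ⟨f, hf⟩
  have hKE := hK.trans hEk
  obtain ⟨γ, hγ, hγp⟩ := ih (E \ K).card (by
      rw [← hE]; exact Finset.card_lt_card (Finset.sdiff_ssubset hKE hKne)) (E \ K)
      (fun e => (L e).erase k) rfl
      (fun e he f hf => hc e (Finset.mem_sdiff.mp he).1 f (Finset.mem_sdiff.mp hf).1) (by
    intro e he
    rw [Finset.mem_sdiff] at he
    have h0 := hL e he.1
    have hsub : DomSet c (E \ K) e ⊆ DomSet c E e := by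
      intro f hf
      simp only [DomSet, Finset.mem_filter, Finset.mem_sdiff] at hf ⊢
      exact ⟨hf.1.1, hf.2⟩
    by_cases hke : k ∈ L e
    · obtain ⟨f, hf, hfd⟩ := hKd e (by simp [Ek, he.1, hke]) he.2
      have : DomSet c (E \ K) e ⊂ DomSet c E e := by
        refine Finset.ssubset_iff_of_subset hsub |>.mpr ⟨f, ?_, ?_⟩
        · simp only [DomSet, Finset.mem_filter] at hfd ⊢
          exact ⟨hEk hfd.1, hfd.2⟩
        · simp [DomSet, hf]
      have := Finset.card_lt_card this
      rw [Finset.card_erase_of_mem hke]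
      omega
    · rw [Finset.erase_eq_of_notMem hke]
      exact (Finset.card_le_card hsub).trans_lt h0)
  refine ⟨fun e => if e ∈ K then k else γ e, ?_, ?_⟩
  · intro e he
    by_cases h : e ∈ K
    · simp only [h, if_true]
      exact (Finset.mem_filter.mp (hK h)).2
    · simp only [h, if_false]
      exact Finset.mem_of_mem_erase (hγ e (Finset.mem_sdiff.mpr ⟨he, h⟩))
  · intro e he f hf hef hinc
    have hk' : ∀ g ∈ E, g ∉ K → γ g ≠ k := fun g hg hgK =>
      Finset.ne_of_mem_erase (hγ g (Finset.mem_sdiff.mpr ⟨hg, hgK⟩))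
    by_cases h : e ∈ K <;> by_cases h' : f ∈ K
    · exact absurd (hKm e h f h' hinc) hef
    · simp only [h, h', if_true, if_false]
      exact (hk' f hf h').symm
    · simp only [h, h', if_true, if_false]
      exact (hk' e he h)
    · simp only [h, h', if_false]
      exact hγp e (Finset.mem_sdiff.mpr ⟨he, h⟩) f (Finset.mem_sdiff.mpr ⟨hf, h'⟩) hef hinc

open Classical in
theorem hall_fin {α β : Type} [Nonempty β] (A : Finset α) (t : α → Finset β)
    (h : ∀ S ⊆ A, S.card ≤ (S.biUnion t).card) :
    ∃ f : α → β, (∀ a ∈ A, ∀ b ∈ A, f a = f b → a = b) ∧ ∀ a ∈ A, f a ∈ t a := by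
  have := (Finset.all_card_le_biUnion_card_iff_exists_injective (fun a : A => t a)).mp (by
    intro S
    have h1 := h (S.map ⟨Subtype.val, Subtype.val_injective⟩) (by
      intro x hx
      simp only [Finset.mem_map, Function.Embedding.coeFn_mk] at hx
      obtain ⟨y, _, rfl⟩ := hx
      exact y.2)
    rw [Finset.card_map] at h1
    refine h1.trans (Finset.card_le_card ?_)
    intro w hw
    simp only [Finset.mem_biUnion, Finset.mem_map, Function.Embedding.coeFn_mk] at hw ⊢
    obtain ⟨x, ⟨y, hy, rfl⟩, hw⟩ := hw
    exact ⟨y, hy, hw⟩)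
  obtain ⟨f, hf, hft⟩ := this
  refine ⟨fun a => if h : a ∈ A then f ⟨a, h⟩ else Classical.arbitrary β, ?_, ?_⟩
  · intro a ha b hb hab
    simp only [ha, hb, dif_pos] at hab
    exact congrArg Subtype.val (hf hab)
  · intro a ha
    simp only [ha, dif_pos]
    exact hft ⟨a, ha⟩

/-- `u` is covered on the left -/
def CovL {α β : Type} (M : Finset (α × β)) (u : α) : Prop := ∃ m ∈ M, m.1 = u
/-- `u` is covered on the right -/
def CovR {α β : Type} (M : Finset (α × β)) (u : β) : Prop := ∃ m ∈ M, m.2 = u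

/-- good matching, type I -/
def GoodI {α β : Type} (E M : Finset (α × β)) : Prop :=
  M ⊆ E ∧ M.Nonempty ∧ IsMat M ∧ ∀ e ∈ E, CovR M e.2 → ¬ CovL M e.1 → dl E e.1 < dr E e.2

/-- good matching, type II -/
def GoodII {α β : Type} (E M : Finset (α × β)) : Prop :=
  M ⊆ E ∧ M.Nonempty ∧ IsMat M ∧ ∀ e ∈ E, CovL M e.1 → ¬ CovR M e.2 → dr E e.2 < dl E e.1

open Classical in
theorem good_aux {α β : Type} (E : Finset (α × β)) (D : ℕ) (hD : 0 < D)
    (hl : ∀ u, dl E u ≤ D) (hr : ∀ w, dr E w ≤ D) (u₀ : α) (hu₀ : dl E u₀ = D) :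
    ∃ M, GoodI E M ∨ GoodII E M := by
  have hedge : ∀ u, dl E u = D → ∃ w, (u, w) ∈ E := by
    intro u hu
    obtain ⟨e, he⟩ := Finset.card_pos.mp (show 0 < (E.filter (fun f => f.1 = u)).card by
      change 0 < dl E u; omega)
    rw [Finset.mem_filter] at he
    exact ⟨e.2, by rw [← he.2]; exact he.1⟩
  obtain ⟨w₀, hw₀⟩ := hedge u₀ hu₀
  have : Nonempty β := ⟨w₀⟩
  let X : Finset α := (E.image Prod.fst).filter (fun u => dl E u = D)
  have hX : ∀ u, u ∈ X ↔ dl E u = D := by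
    intro u
    simp only [X, Finset.mem_filter, Finset.mem_image]
    refine ⟨fun h => h.2, fun h => ⟨?_, h⟩⟩
    obtain ⟨w, hw⟩ := hedge u h
    exact ⟨_, hw, rfl⟩
  let t : α → Finset β := fun u => ((E.filter (fun f => f.1 = u)).image Prod.snd).filter (fun w => dr E w = D)
  have ht : ∀ u w, w ∈ t u ↔ (u, w) ∈ E ∧ dr E w = D := by
    intro u w
    simp only [t, Finset.mem_filter, Finset.mem_image, Prod.exists]
    constructor
    · rintro ⟨⟨a, b, ⟨h1, rfl⟩, rfl⟩, h3⟩
      exact ⟨h1, h3⟩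
    · rintro ⟨h1, h2⟩
      exact ⟨⟨u, w, ⟨h1, rfl⟩, rfl⟩, h2⟩
  have hmat : ∀ (A : Finset α) (f : α → β), (∀ a ∈ A, ∀ b ∈ A, f a = f b → a = b) →
      IsMat (A.image (fun a => (a, f a))) := by
    intro A f hf e he g hg h
    rw [Finset.mem_image] at he hg
    obtain ⟨a, ha, rfl⟩ := he
    obtain ⟨b, hb, rfl⟩ := hg
    rcases h with h | h
    · simp only at h; rw [h]
    · rw [hf a ha b hb h]
  by_cases hall : ∀ S ⊆ X, S.card ≤ (S.biUnion t).card
  · obtain ⟨f, hf, hft⟩ := hall_fin X t hall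
    refine ⟨X.image (fun a => (a, f a)), Or.inl ⟨?_, ?_, hmat X f hf, ?_⟩⟩
    · intro e he
      rw [Finset.mem_image] at he
      obtain ⟨a, ha, rfl⟩ := he
      exact ((ht _ _).mp (hft a ha)).1
    · exact ⟨_, Finset.mem_image_of_mem _ ((hX u₀).mpr hu₀)⟩
    · rintro e he ⟨m, hm, hme⟩ hcov
      rw [Finset.mem_image] at hm
      obtain ⟨a, ha, rfl⟩ := hm
      have h1 := ((ht _ _).mp (hft a ha)).2
      simp only at hme
      rw [hme] at h1
      rw [h1]
      refine lt_of_le_of_ne (hl _) (fun h => hcov ?_)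
      exact ⟨_, Finset.mem_image_of_mem _ ((hX _).mpr h), rfl⟩
  · push Not at hall
    have hex : ((X.powerset).filter (fun S => (S.biUnion t).card < S.card)).Nonempty := by
      obtain ⟨S, hS, h⟩ := hall
      exact ⟨S, by simp [hS, h]⟩
    obtain ⟨A, hA, hmin⟩ := Finset.exists_min_image _ Finset.card hex
    simp only [Finset.mem_filter, Finset.mem_powerset] at hA hmin
    obtain ⟨a, ha⟩ := Finset.card_pos.mp ((Nat.zero_le _).trans_lt hA.2)
    have hcA : (A.erase a).card + 1 = A.card := Finset.card_erase_add_one ha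
    obtain ⟨f, hf, hft⟩ := hall_fin (A.erase a) t (by
      intro S hS
      by_contra hlt
      have := hmin S ⟨hS.trans ((Finset.erase_subset _ _).trans hA.1), not_le.mp hlt⟩
      have := Finset.card_le_card hS
      omega)
    have himg : (A.erase a).image f = A.biUnion t := by
      apply Finset.eq_of_subset_of_card_le
      · intro w hw
        rw [Finset.mem_image] at hw
        obtain ⟨b, hb, rfl⟩ := hw
        exact Finset.mem_biUnion.mpr ⟨b, Finset.mem_of_mem_erase hb, hft b hb⟩
      · rw [Finset.card_image_of_injOn (fun x hx y hy h => hf x hx y hy h)]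
        omega
    by_cases hemp : (A.erase a).Nonempty
    · refine ⟨(A.erase a).image (fun a => (a, f a)), Or.inr ⟨?_, hemp.image _, hmat _ f hf, ?_⟩⟩
      · intro e he
        rw [Finset.mem_image] at he
        obtain ⟨a, ha, rfl⟩ := he
        exact ((ht _ _).mp (hft a ha)).1
      · rintro e he ⟨m, hm, hme⟩ hcov
        rw [Finset.mem_image] at hm
        obtain ⟨b, hb, rfl⟩ := hm
        simp only at hme
        have hbA := Finset.mem_of_mem_erase hb
        have h1 := (hX b).mp (hA.1 hbA)
        rw [← hme, h1]
        refine lt_of_le_of_ne (hr _) (fun h => hcov ?_)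
        have : e.2 ∈ A.biUnion t := Finset.mem_biUnion.mpr ⟨b, hbA, (ht _ _).mpr ⟨by rw [hme]; exact he, h⟩⟩
        rw [← himg, Finset.mem_image] at this
        obtain ⟨x, hx, hxe⟩ := this
        exact ⟨_, Finset.mem_image_of_mem _ hx, hxe⟩
    · rw [Finset.not_nonempty_iff_eq_empty] at hemp
      rw [hemp, Finset.image_empty] at himg
      have h1 := (hX a).mp (hA.1 ha)
      obtain ⟨w, hw⟩ := hedge a h1
      refine ⟨{(a, w)}, Or.inr ⟨by simpa using hw, by simp, by simp [IsMat], ?_⟩⟩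
      rintro e he ⟨m, hm, hme⟩ -
      rw [Finset.mem_singleton] at hm
      subst hm
      simp only at hme
      rw [← hme, h1]
      refine lt_of_le_of_ne (hr _) (fun h => ?_)
      have : e.2 ∈ A.biUnion t := Finset.mem_biUnion.mpr ⟨a, ha, (ht _ _).mpr ⟨by rw [hme]; exact he, h⟩⟩
      rw [← himg] at this
      simp at this

/-- swap -/
def swapF {α β : Type} (E : Finset (α × β)) : Finset (β × α) :=
  E.map (Equiv.prodComm α β).toEmbedding

theorem mem_swapF {α β : Type} (E : Finset (α × β)) (e : β × α) : e ∈ swapF E ↔ e.swap ∈ E := by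
  simp only [swapF, Finset.mem_map_equiv]
  rfl

theorem swapF_swapF {α β : Type} (E : Finset (α × β)) : swapF (swapF E) = E := by
  ext e; simp [mem_swapF]

theorem dl_swapF {α β : Type} (E : Finset (α × β)) (u : β) : dl (swapF E) u = dr E u := by
  classical
  unfold dl dr swapF
  rw [Finset.filter_map, Finset.card_map]
  congr

theorem dr_swapF {α β : Type} (E : Finset (α × β)) (u : α) : dr (swapF E) u = dl E u := by
  rw [← dl_swapF, swapF_swapF]

theorem covL_swapF {α β : Type} (E : Finset (α × β)) (u : β) : CovL (swapF E) u ↔ CovR E u := by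
  simp only [CovL, CovR, mem_swapF, Prod.exists, Prod.swap_prod_mk]
  constructor
  · rintro ⟨a, b, h, h'⟩; exact ⟨b, a, h, h'⟩
  · rintro ⟨a, b, h, h'⟩; exact ⟨b, a, h, h'⟩

theorem covR_swapF {α β : Type} (E : Finset (α × β)) (u : α) : CovR (swapF E) u ↔ CovL E u := by
  rw [← covL_swapF, swapF_swapF]

theorem isMat_swapF {α β : Type} (E : Finset (α × β)) (h : IsMat E) : IsMat (swapF E) := by
  intro e he f hf hef
  rw [mem_swapF] at he hf
  exact Prod.swap_injective (h _ he _ hf hef.symm)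

theorem goodII_swapF {α β : Type} (E M : Finset (α × β)) (h : GoodII E M) :
    GoodI (swapF E) (swapF M) := by
  obtain ⟨h1, h2, h3, h4⟩ := h
  refine ⟨Finset.map_subset_map.mpr h1, h2.map, isMat_swapF _ h3, ?_⟩
  intro e he hR hL
  rw [covR_swapF] at hR
  rw [covL_swapF] at hL
  rw [dl_swapF, dr_swapF]
  rw [mem_swapF] at he
  exact h4 _ he hR hL

theorem goodI_swapF {α β : Type} (E M : Finset (α × β)) (h : GoodI E M) :
    GoodII (swapF E) (swapF M) := by
  obtain ⟨h1, h2, h3, h4⟩ := h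
  refine ⟨Finset.map_subset_map.mpr h1, h2.map, isMat_swapF _ h3, ?_⟩
  intro e he hR hL
  rw [covL_swapF] at hR
  rw [covR_swapF] at hL
  rw [dl_swapF, dr_swapF]
  rw [mem_swapF] at he
  exact h4 _ he hR hL

open Classical in
theorem good_exists {α β : Type} (E : Finset (α × β)) (hE : E.Nonempty) :
    ∃ M, GoodI E M ∨ GoodII E M := by
  obtain ⟨e₁, h1, hm1⟩ := Finset.exists_max_image E (fun e => dl E e.1) hE
  obtain ⟨e₂, h2, hm2⟩ := Finset.exists_max_image E (fun e => dr E e.2) hE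
  have hl : ∀ u, dl E u ≤ dl E e₁.1 := by
    intro u
    by_cases h : ∃ e ∈ E, e.1 = u
    · obtain ⟨e, he, rfl⟩ := h
      exact hm1 e he
    · have : dl E u = 0 := by
        rw [dl, Finset.card_eq_zero, Finset.filter_eq_empty_iff]
        exact fun e he heu => h ⟨e, he, heu⟩
      omega
  have hr : ∀ u, dr E u ≤ dr E e₂.2 := by
    intro u
    by_cases h : ∃ e ∈ E, e.2 = u
    · obtain ⟨e, he, rfl⟩ := h
      exact hm2 e he
    · have : dr E u = 0 := by
        rw [dr, Finset.card_eq_zero, Finset.filter_eq_empty_iff]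
        exact fun e he heu => h ⟨e, he, heu⟩
      omega
  have p1 : 0 < dl E e₁.1 := Finset.card_pos.mpr ⟨e₁, by simp [h1]⟩
  have p2 : 0 < dr E e₂.2 := Finset.card_pos.mpr ⟨e₂, by simp [h2]⟩
  rcases le_total (dr E e₂.2) (dl E e₁.1) with h | h
  · exact good_aux E _ p1 hl (fun w => (hr w).trans h) e₁.1 rfl
  · obtain ⟨M, hM⟩ := good_aux (swapF E) (dr E e₂.2) p2 (fun u => by rw [dl_swapF]; exact hr u)
      (fun u => by rw [dr_swapF]; exact (hl u).trans h) e₂.2 (dl_swapF _ _)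
    refine ⟨swapF M, ?_⟩
    rcases hM with hM | hM
    · right; simpa [swapF_swapF] using goodI_swapF _ _ hM
    · left; simpa [swapF_swapF] using goodII_swapF _ _ hM

/-- ranking with the local Galvin bound -/
def GoodC {α β : Type} (c : α × β → ℤ) (E : Finset (α × β)) : Prop :=
  PropC c E ∧ ∀ e ∈ E, (DomSet c E e).card < max (dl E e.1) (dr E e.2)

theorem goodC_swapF {α β : Type} (c : α × β → ℤ) (E : Finset (α × β)) (h : GoodC c E) :
    GoodC (fun e => - c e.swap) (swapF E) := by
  constructor
  · intro e he f hf hef hinc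
    rw [mem_swapF] at he hf
    have := h.1 _ he _ hf (fun h => hef (Prod.swap_injective h)) hinc.symm
    simpa using this
  · intro e he
    rw [mem_swapF] at he
    have := h.2 _ he
    rw [dl_swapF, dr_swapF, max_comm]
    refine lt_of_le_of_lt ?_ this
    apply Finset.card_le_card_of_injOn Prod.swap
    · intro f hf
      simp only [DomSet, Finset.coe_filter, Set.mem_ofPred_eq, mem_swapF, Prod.fst_swap, Prod.snd_swap, neg_lt_neg_iff] at hf ⊢
      exact ⟨hf.1, hf.2.symm⟩
    · exact Prod.swap_injective.injOn

open Classical in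
theorem stepI {α β : Type} (c : α × β → ℤ) (E M : Finset (α × β)) (hM : GoodI E M)
    (hc : GoodC c (E \ M)) : ∃ c', GoodC c' E := by
  obtain ⟨hME, hMne, hMm, hMg⟩ := hM
  obtain ⟨B, hB⟩ : ∃ B : ℤ, ∀ e ∈ E, B < c e := by
    obtain ⟨e, he, hmin⟩ := Finset.exists_min_image E c (hMne.mono hME)
    exact ⟨c e - 1, fun f hf => by have := hmin f hf; omega⟩
  let c' : α × β → ℤ := fun e => if e ∈ M then B else c e
  have cM : ∀ e ∈ M, c' e = B := fun e he => by simp [c', he]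
  have cN : ∀ e ∉ M, c' e = c e := fun e he => by simp [c', he]
  have hBle : ∀ e ∈ E, B ≤ c' e := by
    intro e he
    by_cases h : e ∈ M
    · rw [cM e h]
    · rw [cN e h]; exact (hB e he).le
  refine ⟨c', ?_, ?_⟩
  · intro e he f hf hef hinc
    by_cases h : e ∈ M <;> by_cases h' : f ∈ M
    · exact absurd (hMm e h f h' hinc) hef
    · rw [cM e h, cN f h']; exact (hB f hf).ne
    · rw [cN e h, cM f h']; exact (hB e he).ne'
    · rw [cN e h, cN f h']
      exact hc.1 e (Finset.mem_sdiff.mpr ⟨he, h⟩) f (Finset.mem_sdiff.mpr ⟨hf, h'⟩) hef hinc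
  · intro e he
    by_cases h : e ∈ M
    · refine lt_of_lt_of_le ?_ (le_max_left _ _)
      refine Finset.card_lt_card ((Finset.ssubset_iff_of_subset ?_).mpr ⟨e, ?_, ?_⟩)
      · intro f hf
        simp only [DomSet, Finset.mem_filter] at hf ⊢
        refine ⟨hf.1, ?_⟩
        rcases hf.2 with h1 | h1
        · exact h1.1
        · have := hBle f hf.1
          rw [cM e h] at h1
          omega
      · simp [he]
      · simp [DomSet]
    · have he' : e ∈ E \ M := Finset.mem_sdiff.mpr ⟨he, h⟩
      have h1 := hc.2 e he'
      have hdl : dl (E \ M) e.1 ≤ dl E e.1 :=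
        Finset.card_le_card (Finset.filter_subset_filter _ Finset.sdiff_subset)
      have hdr : dr (E \ M) e.2 ≤ dr E e.2 :=
        Finset.card_le_card (Finset.filter_subset_filter _ Finset.sdiff_subset)
      have hsub : DomSet c' E e ⊆ DomSet c (E \ M) e ∪ M.filter (fun f => f.2 = e.2) := by
        intro f hf
        simp only [DomSet, Finset.mem_filter, Finset.mem_union, Finset.mem_sdiff] at hf ⊢
        rw [cN e h] at hf
        by_cases hfM : f ∈ M
        · right
          refine ⟨hfM, ?_⟩
          rcases hf.2 with h2 | h2
          · have := hB e he
            rw [cM f hfM] at h2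
            omega
          · exact h2.1
        · left
          rw [cN f hfM] at hf
          exact ⟨⟨hf.1, hfM⟩, hf.2⟩
      have hcard := (Finset.card_le_card hsub).trans (Finset.card_union_le _ _)
      by_cases hR : CovR M e.2
      · have hle1 : (M.filter (fun f => f.2 = e.2)).card ≤ 1 := by
          rw [Finset.card_le_one]
          intro a ha b hb
          rw [Finset.mem_filter] at ha hb
          exact hMm a ha.1 b hb.1 (Or.inr (ha.2.trans hb.2.symm))
        have hdr' : dr (E \ M) e.2 < dr E e.2 := by
          obtain ⟨m, hm, hme⟩ := hR
          refine Finset.card_lt_card ((Finset.ssubset_iff_of_subset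
            (Finset.filter_subset_filter _ Finset.sdiff_subset)).mpr ⟨m, ?_, ?_⟩)
          · simp [hME hm, hme]
          · simp [hm]
        by_cases hL : CovL M e.1
        · have hdl' : dl (E \ M) e.1 < dl E e.1 := by
            obtain ⟨m, hm, hme⟩ := hL
            refine Finset.card_lt_card ((Finset.ssubset_iff_of_subset
              (Finset.filter_subset_filter _ Finset.sdiff_subset)).mpr ⟨m, ?_, ?_⟩)
            · simp [hME hm, hme]
            · simp [hm]
          omega
        · have := hMg e he hR hL
          omega
      · have : M.filter (fun f => f.2 = e.2) = ∅ := by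
          rw [Finset.filter_eq_empty_iff]
          exact fun m hm hme => hR ⟨m, hm, hme⟩
        rw [this, Finset.card_empty] at hcard
        omega

open Classical in
theorem goodC_exists {α β : Type} : ∀ (n : ℕ) (E : Finset (α × β)), E.card = n →
    ∃ c, GoodC c E := by
  intro n
  induction n using Nat.strong_induction_on with
  | _ n ih =>
  intro E hE
  by_cases hne : E.Nonempty
  · obtain ⟨M, hM⟩ := good_exists E hne
    have hM' : M ⊆ E ∧ M.Nonempty := by
      rcases hM with hM | hM <;> exact ⟨hM.1, hM.2.1⟩
    obtain ⟨c, hc⟩ := ih (E \ M).card (by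
      rw [← hE]; exact Finset.card_lt_card (Finset.sdiff_ssubset hM'.1 hM'.2)) _ rfl
    rcases hM with hM | hM
    · exact stepI c E M hM hc
    · have := goodC_swapF _ _ hc
      have heq : swapF (E \ M) = swapF E \ swapF M := by
        ext e; simp [mem_swapF]
      rw [heq] at this
      obtain ⟨c', hc'⟩ := stepI _ _ _ (goodII_swapF _ _ hM) this
      have := goodC_swapF _ _ hc'
      rw [swapF_swapF] at this
      exact ⟨_, this⟩
  · rw [Finset.not_nonempty_iff_eq_empty] at hne
    subst hne
    exact ⟨fun _ => 0, by simp [PropC], by simp⟩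

theorem bip_colour {α β : Type} (E : Finset (α × β)) (L : α × β → Finset ℕ)
    (hL : ∀ e ∈ E, max (dl E e.1) (dr E e.2) ≤ (L e).card) :
    ∃ γ : α × β → ℕ, (∀ e ∈ E, γ e ∈ L e) ∧ PropC γ E := by
  obtain ⟨c, hc⟩ := goodC_exists _ E rfl
  exact galvin c _ E L rfl hc.1 (fun e he => (hc.2 e he).trans_le (hL e he))

open Classical in
theorem greedy {V : Type} (F : Finset (Sym2 V)) (L : Sym2 V → Finset ℕ)
    (hL : ∀ e ∈ F, (F.filter (fun f => ∃ v, v ∈ e ∧ v ∈ f)).card ≤ (L e).card) :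
    ∃ γ : Sym2 V → ℕ, (∀ e ∈ F, γ e ∈ L e) ∧
      ∀ e ∈ F, ∀ f ∈ F, e ≠ f → (∃ v, v ∈ e ∧ v ∈ f) → γ e ≠ γ f := by
  induction F using Finset.induction_on with
  | empty => exact ⟨fun _ => 0, by simp, by simp⟩
  | insert a F ha ih =>
    obtain ⟨γ, h1, h2⟩ := ih (fun e he => (Finset.card_le_card
      (Finset.filter_subset_filter _ (Finset.subset_insert _ _))).trans
        (hL e (Finset.mem_insert_of_mem he)))
    have hcard : ((F.filter (fun f => ∃ v, v ∈ a ∧ v ∈ f)).image γ).card < (L a).card := by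
      refine lt_of_le_of_lt Finset.card_image_le (lt_of_lt_of_le ?_ (hL a (Finset.mem_insert_self _ _)))
      refine Finset.card_lt_card ((Finset.ssubset_iff_of_subset
        (Finset.filter_subset_filter _ (Finset.subset_insert _ _))).mpr ⟨a, ?_, ?_⟩)
      · simp only [Finset.mem_filter, Finset.mem_insert_self, true_and]
        induction a with | _ x y => exact ⟨x, by simp⟩
      · simp [ha]
    obtain ⟨k, hk, hk'⟩ := Finset.exists_mem_notMem_of_card_lt_card hcard
    have key : ∀ f ∈ F, (∃ v, v ∈ a ∧ v ∈ f) → k ≠ γ f := by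
      rintro f hf hv rfl
      exact hk' (Finset.mem_image_of_mem _ (Finset.mem_filter.mpr ⟨hf, hv⟩))
    have hneq : ∀ f ∈ F, f ≠ a := fun f hf h => ha (h ▸ hf)
    refine ⟨Function.update γ a k, ?_, ?_⟩
    · intro e he
      rcases Finset.mem_insert.mp he with rfl | he
      · simpa using hk
      · rw [Function.update_of_ne (hneq e he)]; exact h1 e he
    · intro e he f hf hef hv
      rcases Finset.mem_insert.mp he with h | he1 <;> rcases Finset.mem_insert.mp hf with h' | hf1
      · exact absurd (h.trans h'.symm) hef
      · subst h
        rw [Function.update_self, Function.update_of_ne (hneq f hf1)]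
        exact key f hf1 hv
      · subst h'
        rw [Function.update_self, Function.update_of_ne (hneq e he1)]
        exact (key e he1 (by obtain ⟨v, p, q⟩ := hv; exact ⟨v, q, p⟩)).symm
      · rw [Function.update_of_ne (hneq e he1), Function.update_of_ne (hneq f hf1)]
        exact h2 e he1 f hf1 hef hv

/-- monochromatic subgraph -/
def Mono {V : Type} (G : SimpleGraph V) (s : V → Bool) : SimpleGraph V where
  Adj u v := G.Adj u v ∧ s u = s v
  symm := ⟨fun _ _ h => ⟨h.1.symm, h.2.symm⟩⟩
  loopless := ⟨fun _ h => G.loopless.irrefl _ h.1⟩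

theorem mono_adj {V : Type} (G : SimpleGraph V) (s : V → Bool) (u v : V) :
    (Mono G s).Adj u v ↔ G.Adj u v ∧ s u = s v := Iff.rfl

open Classical in
theorem maxcut {V : Type} [Fintype V] (G : SimpleGraph V) :
    ∃ s : V → Bool, ∀ v, 2 * (Mono G s).degree v ≤ G.degree v := by
  obtain ⟨s, -, hs⟩ := Finset.exists_min_image (Finset.univ : Finset (V → Bool))
    (fun s => (Mono G s).edgeFinset.card) ⟨fun _ => true, Finset.mem_univ _⟩
  refine ⟨s, fun v => ?_⟩
  let s' := Function.update s v (!s v)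
  have h := hs s' (Finset.mem_univ _)
  have dec : ∀ s : V → Bool, (Mono G s).edgeFinset.card =
      (Mono G s).degree v + ((Mono G s).edgeFinset.filter (fun e => v ∉ e)).card := by
    intro s
    rw [← SimpleGraph.card_incidenceFinset_eq_degree, SimpleGraph.incidenceFinset_eq_filter,
      Finset.card_filter_add_card_filter_not]
  have heq : (Mono G s).edgeFinset.filter (fun e => v ∉ e) =
      (Mono G s').edgeFinset.filter (fun e => v ∉ e) := by
    ext e
    induction e with | _ x y =>
    simp only [Finset.mem_filter, SimpleGraph.mem_edgeFinset, SimpleGraph.mem_edgeSet, Sym2.mem_iff, not_or]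
    refine and_congr_left ?_
    rintro ⟨h1, h2⟩
    simp [mono_adj, s', Function.update_of_ne (Ne.symm h1), Function.update_of_ne (Ne.symm h2)]
  have hdeg : (Mono G s).degree v + (Mono G s').degree v = G.degree v := by
    simp only [← SimpleGraph.card_neighborFinset_eq_degree]
    rw [← Finset.card_union_of_disjoint]
    · congr 1
      ext w
      simp only [Finset.mem_union, SimpleGraph.mem_neighborFinset, mono_adj, s', Function.update_self]
      constructor
      · rintro (h | h) <;> exact h.1
      · intro h
        rw [Function.update_of_ne h.ne']
        cases s v <;> cases s w <;> simp [h]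
    · rw [Finset.disjoint_left]
      intro w
      simp only [SimpleGraph.mem_neighborFinset, mono_adj, s', Function.update_self]
      rintro ⟨h, h1⟩ ⟨-, h2⟩
      rw [Function.update_of_ne h.ne'] at h2
      simp [h1] at h2
  have d1 := dec s
  have d2 := dec s'
  rw [heq] at d1
  omega

open Classical in
theorem main_aux {V : Type} [Fintype V] (G : SimpleGraph V) (L : Sym2 V → Finset ℕ)
    (hL : ∀ u v : V, G.Adj u v →
        max (G.degree u) (G.degree v) + (min (G.degree u) (G.degree v)) / 2 ≤
          (L s(u, v)).card) : ∃ γ : Sym2 V → ℕ, IsLEdgeColouring G L γ := by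
  obtain ⟨s, hs⟩ := maxcut G
  set R := Mono G s with hR
  have hadjR : ∀ u v, R.Adj u v ↔ G.Adj u v ∧ s u = s v := fun u v => Iff.rfl
  have hpos : ∀ u v, G.Adj u v → 0 < G.degree u := fun u v h =>
    (G.degree_pos_iff_exists_adj u).mpr ⟨v, h⟩
  obtain ⟨γR, hR1, hR2⟩ := greedy R.edgeFinset L (by
    intro e he
    induction e with | _ u v =>
    rw [SimpleGraph.mem_edgeFinset, SimpleGraph.mem_edgeSet, hadjR] at he
    have h1 := hL u v he.1
    have h2 := hpos u v he.1
    have h3 := hs u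
    have h4 := hs v
    have h5 := Finset.card_union_le (R.incidenceFinset u) (R.incidenceFinset v)
    rw [SimpleGraph.card_incidenceFinset_eq_degree, SimpleGraph.card_incidenceFinset_eq_degree] at h5
    refine le_trans (Finset.card_le_card (t := R.incidenceFinset u ∪ R.incidenceFinset v) ?_) ?_
    · intro f hf
      simp only [Finset.mem_filter, Sym2.mem_iff] at hf
      simp only [Finset.mem_union, SimpleGraph.incidenceFinset_eq_filter, Finset.mem_filter]
      obtain ⟨hf, x, rfl | rfl, hx⟩ := hf
      · exact Or.inl ⟨hf, hx⟩
      · exact Or.inr ⟨hf, hx⟩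
    · omega)
  let E : Finset (V × V) := Finset.univ.filter (fun e => G.Adj e.1 e.2 ∧ s e.1 = true ∧ s e.2 = false)
  have hE : ∀ u v, (u, v) ∈ E ↔ G.Adj u v ∧ s u = true ∧ s v = false := by
    intro u v; simp [E]
  have hdeg : ∀ v, ((G.neighborFinset v).filter (fun w => s w ≠ s v)).card + R.degree v = G.degree v := by
    intro v
    rw [← SimpleGraph.card_neighborFinset_eq_degree, ← SimpleGraph.card_neighborFinset_eq_degree,
      ← Finset.card_filter_add_card_filter_not (s := G.neighborFinset v) (fun w => s w ≠ s v)]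
    congr 2
    ext w
    simp [hadjR, eq_comm]
  have hdl : ∀ u, s u = true → dl E u + R.degree u ≤ G.degree u := by
    intro u hu
    rw [← hdeg u]
    gcongr
    apply Finset.card_le_card_of_injOn Prod.snd
    · rintro ⟨a, b⟩ h
      simp only [Finset.coe_filter, Set.mem_ofPred_eq, hE] at h
      obtain ⟨⟨h1, h2, h3⟩, rfl⟩ := h
      simp [h1, h2, h3]
    · rintro ⟨a, b⟩ h ⟨a', b'⟩ h' hh
      simp only [Finset.coe_filter, Set.mem_ofPred_eq] at h h' hh
      rw [h.2, h'.2, hh]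
  have hdr : ∀ u, s u = false → dr E u + R.degree u ≤ G.degree u := by
    intro u hu
    rw [← hdeg u]
    gcongr
    apply Finset.card_le_card_of_injOn Prod.fst
    · rintro ⟨a, b⟩ h
      simp only [Finset.coe_filter, Set.mem_ofPred_eq, hE] at h
      obtain ⟨⟨h1, h2, h3⟩, rfl⟩ := h
      simp [h1.symm, h2, h3]
    · rintro ⟨a, b⟩ h ⟨a', b'⟩ h' hh
      simp only [Finset.coe_filter, Set.mem_ofPred_eq] at h h' hh
      rw [h.2, h'.2, hh]
  obtain ⟨γB, hB1, hB2⟩ := bip_colour E (fun e => L s(e.1, e.2) \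
      ((R.incidenceFinset e.1 ∪ R.incidenceFinset e.2).image γR)) (by
    rintro ⟨u, v⟩ he
    rw [hE] at he
    have h1 := hL u v he.1
    have h2 := hdl u he.2.1
    have h3 := hdr v he.2.2
    have h4 := hs u
    have h5 := hs v
    have h6 := (Finset.card_image_le (f := γR) (s := R.incidenceFinset u ∪ R.incidenceFinset v)).trans
      (Finset.card_union_le _ _)
    rw [SimpleGraph.card_incidenceFinset_eq_degree, SimpleGraph.card_incidenceFinset_eq_degree] at h6
    have h7 := Finset.le_card_sdiff ((R.incidenceFinset u ∪ R.incidenceFinset v).image γR) (L s(u, v))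
    simp only
    omega)
  let γ : Sym2 V → ℕ := Sym2.lift ⟨fun u v => if s u = s v then γR s(u, v) else
    if s u = true then γB (u, v) else γB (v, u), by
      intro u v
      have hsw : s(u, v) = s(v, u) := Sym2.eq_swap
      simp only [hsw]
      cases s u <;> cases s v <;> simp⟩
  have gR : ∀ e ∈ R.edgeFinset, γ e = γR e := by
    intro e he
    induction e with | _ u v =>
    rw [SimpleGraph.mem_edgeFinset, SimpleGraph.mem_edgeSet, hadjR] at he
    simp [γ, he.2]
  have gB : ∀ u v, (u, v) ∈ E → γ s(u, v) = γB (u, v) := by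
    intro u v he
    rw [hE] at he
    simp [γ, he.2.1, he.2.2]
  have hcase : ∀ e ∈ G.edgeSet, e ∈ R.edgeFinset ∨ ∃ u v, e = s(u, v) ∧ (u, v) ∈ E := by
    intro e he
    induction e with | _ u v =>
    rw [SimpleGraph.mem_edgeSet] at he
    rw [SimpleGraph.mem_edgeFinset, SimpleGraph.mem_edgeSet, hadjR]
    cases hu : s u <;> cases hv : s v
    · exact Or.inl ⟨he, rfl⟩
    · exact Or.inr ⟨v, u, Sym2.eq_swap, (hE _ _).mpr ⟨he.symm, hv, hu⟩⟩
    · exact Or.inr ⟨u, v, rfl, (hE _ _).mpr ⟨he, hu, hv⟩⟩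
    · exact Or.inl ⟨he, rfl⟩
  have hRB : ∀ e ∈ R.edgeFinset, ∀ u v, (u, v) ∈ E → (∃ x, x ∈ e ∧ x ∈ s(u, v)) → γB (u, v) ≠ γR e := by
    rintro e he u v huv ⟨x, hx, hx'⟩ heq
    have := (Finset.mem_sdiff.mp (hB1 _ huv)).2
    apply this
    rw [heq]
    apply Finset.mem_image_of_mem
    simp only [Finset.mem_union, SimpleGraph.incidenceFinset_eq_filter, Finset.mem_filter]
    rcases Sym2.mem_iff.mp hx' with rfl | rfl
    · exact Or.inl ⟨he, hx⟩
    · exact Or.inr ⟨he, hx⟩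
  refine ⟨γ, ?_, ?_⟩
  · intro e he
    rcases hcase e he with h | ⟨u, v, rfl, h⟩
    · rw [gR e h]; exact hR1 e h
    · rw [gB u v h]; exact (Finset.mem_sdiff.mp (hB1 _ h)).1
  · intro e he f hf hef hx
    rcases hcase e he with h | ⟨u, v, rfl, h⟩ <;> rcases hcase f hf with h' | ⟨u', v', rfl, h'⟩
    · rw [gR e h, gR f h']; exact hR2 e h f h' hef hx
    · rw [gR e h, gB u' v' h']
      exact (hRB e h u' v' h' hx).symm
    · rw [gR f h', gB u v h]
      exact hRB f h' u v h (by obtain ⟨x, p, q⟩ := hx; exact ⟨x, q, p⟩)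
    · rw [gB u v h, gB u' v' h']
      apply hB2 _ h _ h'
      · intro hh
        apply hef
        rw [Prod.mk.injEq] at hh
        rw [hh.1, hh.2]
      · obtain ⟨x, p, q⟩ := hx
        rw [hE] at h h'
        rw [Sym2.mem_iff] at p q
        rcases p with rfl | rfl <;> rcases q with q | q
        · exact Or.inl q
        · rw [q] at h; simp [h'.2.2] at h
        · rw [q] at h; simp [h'.2.1] at h
        · exact Or.inr q

theorem stmt_19 :
    ∀ (V : Type) [Fintype V] [DecidableEq V]
      (G : SimpleGraph V) [DecidableRel G.Adj] (L : Sym2 V → Finset ℕ),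
      (∀ u v : V, G.Adj u v →
        max (G.degree u) (G.degree v) + (min (G.degree u) (G.degree v)) / 2 ≤
          (L s(u, v)).card) →
      ∃ γ : Sym2 V → ℕ, IsLEdgeColouring G L γ := by
  intro V _ _ G _ L hL
  apply main_aux G L
  intro u v h
  convert hL u v h
end
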